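/- arXiv:1302.5394 — 3 statements merged into one kernel-verified Lean document; each statement's English description precedes it below -/
import Mathlib

section
/- Let k, n, r be positive integers with r ≥ 2 and n ≥ rk. If n is not congruent to k modulo r − 1, or r is even, then χ(KG^r(n,k)_{2-stab}) = ⌈(n − r(k−1)) / (r − 1)⌉. -/
open Finset

/-- A proper `t`-coloring of the Kneser hypergraph `KG^r(F)`: vertices are the members of `F`,
colors are taken in `{1,...,t}`, and no set of `r` pairwise disjoint members of `F`
(an edge) is monochromatic. -/
def IsKneserColoring (n r t : ℕ) (F : Finset (Finset (Fin n)))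
    (c : Finset (Fin n) → ℕ) : Prop :=
  (∀ A ∈ F, c A ∈ Finset.Icc 1 t) ∧
    ∀ E : Finset (Finset (Fin n)), E ⊆ F → E.card = r →
      ((E : Set (Finset (Fin n))).Pairwise fun A B => Disjoint A B) →
      ¬ ∃ i, ∀ A ∈ E, c A = i

/-- The chromatic number of the Kneser hypergraph `KG^r(F)`. -/
noncomputable def kneserChrom (n r : ℕ) (F : Finset (Finset (Fin n))) : ℕ :=
  sInf {t | ∃ c, IsKneserColoring n r t F c}

/-- A subset `A` of `[n]` (identified with `Fin n`) is `s`-stable: any two distinct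
elements `i, j ∈ A` satisfy `s ≤ |i - j| ≤ n - s`. -/
def Stable (n s : ℕ) (A : Finset (Fin n)) : Prop :=
  ∀ i ∈ A, ∀ j ∈ A, i ≠ j →
    s ≤ max i.val j.val - min i.val j.val ∧ max i.val j.val - min i.val j.val ≤ n - s

open Classical in
/-- The vertex set of the `s`-stable Kneser hypergraph `KG^r(n,k)_{s-stab}`:
all `s`-stable `k`-element subsets of `[n]`. -/
noncomputable def stableSets (n s k : ℕ) : Finset (Finset (Fin n)) :=
  Finset.univ.filter fun A => A.card = k ∧ Stable n s A


set_option linter.unusedSectionVars false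

namespace KG

variable {p : ℕ} [Fact p.Prime]

/-- partial functions: simplices of the join -/
abbrev PF (p m : ℕ) := Fin m → Option (ZMod p)
abbrev Ch (p m : ℕ) := PF p m → ZMod p

/-- the empty simplex -/
def emp (p m : ℕ) : PF p m := fun _ => none

def sl {m : ℕ} (o : Option (ZMod p)) : Ch p (m+1) →ₗ[ZMod p] Ch p m where
  toFun u := fun τ => u (Fin.cons o τ)
  map_add' _ _ := rfl
  map_smul' _ _ := rfl

lemma sl_apply {m : ℕ} (o : Option (ZMod p)) (u : Ch p (m+1)) (τ : PF p m) :
    sl o u τ = u (Fin.cons o τ) := rfl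

lemma ext_sl {m : ℕ} {u v : Ch p (m+1)} (h : ∀ o, sl o u = sl o v) : u = v := by
  funext τ
  have := congrFun (h (τ 0)) (Fin.tail τ)
  simpa [sl_apply] using this

/-- assemble from slices -/
def asm {m : ℕ} {V : Type*} [AddCommGroup V] [Module (ZMod p) V]
    (F : Option (ZMod p) → V →ₗ[ZMod p] Ch p m) :
    V →ₗ[ZMod p] Ch p (m+1) where
  toFun v := fun τ => F (τ 0) v (Fin.tail τ)
  map_add' _ _ := by funext τ; simp
  map_smul' _ _ := by funext τ; simp

@[simp] lemma sl_asm {m : ℕ} {V : Type*} [AddCommGroup V] [Module (ZMod p) V]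
    (F : Option (ZMod p) → V →ₗ[ZMod p] Ch p m) (o : Option (ZMod p)) (v : V) :
    sl o (asm F v) = F o v := by
  funext τ
  simp [sl_apply, asm]

def bd : (m : ℕ) → Ch p m →ₗ[ZMod p] Ch p m
  | 0 => 0
  | m+1 => asm fun o => match o with
    | none => bd m ∘ₗ sl none + ∑ a : ZMod p, sl (some a)
    | some a => - (bd m ∘ₗ sl (some a))

def lm : (m : ℕ) → Fin m → ZMod p → Ch p m →ₗ[ZMod p] Ch p m
  | 0, _, _ => 0
  | m+1, i, a => Fin.cases
      (asm fun o => if o = some a then sl none else 0)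
      (fun j => asm fun o => match o with
        | none => lm m j a ∘ₗ sl none
        | some b => - (lm m j a ∘ₗ sl (some b))) i

lemma sl_none_bd {m : ℕ} (u : Ch p (m+1)) :
    sl none (bd (m+1) u) = bd m (sl none u) + ∑ a : ZMod p, sl (some a) u := by
  simp [bd]

lemma sl_some_bd {m : ℕ} (a : ZMod p) (u : Ch p (m+1)) :
    sl (some a) (bd (m+1) u) = - bd m (sl (some a) u) := by
  simp [bd]

lemma sl_lm_zero {m : ℕ} (a : ZMod p) (o : Option (ZMod p)) (u : Ch p (m+1)) :
    sl o (lm (m+1) 0 a u) = if o = some a then sl none u else 0 := by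
  simp only [lm, Fin.cases_zero, sl_asm]
  split_ifs <;> rfl

lemma sl_none_lm {m : ℕ} (j : Fin m) (a : ZMod p) (u : Ch p (m+1)) :
    sl none (lm (m+1) j.succ a u) = lm m j a (sl none u) := by
  simp [lm]

lemma sl_some_lm {m : ℕ} (j : Fin m) (a b : ZMod p) (u : Ch p (m+1)) :
    sl (some b) (lm (m+1) j.succ a u) = - lm m j a (sl (some b) u) := by
  simp [lm]

lemma bd_bd : ∀ {m : ℕ} (u : Ch p m), bd m (bd m u) = 0
  | 0, u => rfl
  | m+1, u => by
    apply ext_sl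
    rintro (_ | a)
    · rw [sl_none_bd, sl_none_bd]
      simp [sl_some_bd, bd_bd (sl none u)]
    · rw [sl_some_bd, sl_some_bd]
      simp [bd_bd]

lemma compat : ∀ {m : ℕ} (i : Fin m) (a : ZMod p) (u : Ch p m),
    (∀ τ, u τ ≠ 0 → ∀ b, τ i = some b → b = a) →
    bd m (lm m i a u) + lm m i a (bd m u) = u
  | 0, i, _, _, _ => i.elim0
  | m+1, i, a, u, hu => by
    induction i using Fin.cases with
    | zero =>
      have h0 : ∀ b, b ≠ a → sl (some b) u = 0 := by
        intro b hb
        funext τ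
        by_contra h
        exact hb (hu _ h b (by simp))
      apply ext_sl
      rintro (_ | b)
      · simp [sl_none_bd, sl_lm_zero]
      · have hs : ∑ c : ZMod p, sl (some c) u = sl (some a) u := by
          rw [Finset.sum_eq_single a]
          · intro c _ hc; exact h0 c hc
          · simp
        rw [map_add, sl_some_bd, sl_lm_zero, sl_lm_zero, sl_none_bd, hs]
        by_cases hb : b = a
        · subst hb; simp
        · simp [hb, h0 b hb]
    | succ j =>
      have ih : ∀ o, bd m (lm m j a (sl o u)) + lm m j a (bd m (sl o u)) = sl o u := by
        intro o
        apply compat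
        intro τ hτ b hb
        exact hu (Fin.cons o τ) hτ b (by simpa using hb)
      apply ext_sl
      rintro (_ | b)
      · rw [map_add, sl_none_bd, sl_none_lm, sl_none_lm, sl_none_bd]
        simp only [sl_some_lm, map_add, map_sum, Finset.sum_neg_distrib]
        rw [← ih none]
        abel_nf
        simp [ih none]
      · rw [map_add, sl_some_bd, sl_some_lm, sl_some_lm, sl_some_bd]
        simpa using ih (some b)

/-- group action -/
def act {m : ℕ} (g : ZMod p) (τ : PF p m) : PF p m := fun i => (τ i).map (g + ·)

lemma act_cons {m : ℕ} (g : ZMod p) (o : Option (ZMod p)) (τ : PF p m) :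
    act g (Fin.cons o τ : PF p (m+1)) = Fin.cons (o.map (g + ·)) (act g τ) := by
  funext i
  induction i using Fin.cases <;> simp [act]

def tr {m : ℕ} (g : ZMod p) : Ch p m →ₗ[ZMod p] Ch p m where
  toFun u := fun τ => u (act g τ)
  map_add' _ _ := rfl
  map_smul' _ _ := rfl

lemma sl_tr {m : ℕ} (g : ZMod p) (o : Option (ZMod p)) (u : Ch p (m+1)) :
    sl o (tr g u) = tr g (sl (o.map (g + ·)) u) := by
  funext τ
  simp [sl_apply, tr, act_cons]

lemma bd_tr : ∀ {m : ℕ} (g : ZMod p) (u : Ch p m), bd m (tr g u) = tr g (bd m u)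
  | 0, g, u => by simp [bd]
  | m+1, g, u => by
    apply ext_sl
    rintro (_ | a)
    · rw [sl_none_bd, sl_tr, sl_tr]
      simp only [Option.map_none, sl_none_bd, map_add, bd_tr, map_sum, sl_tr, Option.map_some]
      congr 1
      exact Fintype.sum_equiv (Equiv.addLeft g) _ _ (fun x => by simp)
    · rw [sl_some_bd, sl_tr, sl_tr]
      simp [sl_some_bd, bd_tr]

lemma lm_tr : ∀ {m : ℕ} (g : ZMod p) (i : Fin m) (a : ZMod p) (u : Ch p m),
    lm m i a (tr g u) = tr g (lm m i (g + a) u)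
  | 0, g, i, a, u => i.elim0
  | m+1, g, i, a, u => by
    apply ext_sl
    induction i using Fin.cases with
    | zero =>
      rintro (_ | b)
      · simp [sl_lm_zero, sl_tr]
      · simp only [sl_lm_zero, sl_tr, Option.map_some, Option.some.injEq, add_right_inj]
        by_cases hb : b = a <;> simp [hb]
    | succ j =>
      rintro (_ | b)
      · simp only [sl_none_lm, sl_tr, Option.map_none]
        rw [lm_tr (m := m)]
      · simp only [sl_some_lm, sl_tr, Option.map_some]
        rw [lm_tr (m := m), map_neg]

def sz {m : ℕ} (τ : PF p m) : ℕ := ∑ i, if τ i = none then 0 else 1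

lemma sz_cons {m : ℕ} (o : Option (ZMod p)) (τ : PF p m) :
    sz (Fin.cons o τ : PF p (m+1)) = (if o = none then 0 else 1) + sz τ := by
  simp [sz, Fin.sum_univ_succ]

def Le {m : ℕ} (σ τ : PF p m) : Prop := ∀ i a, σ i = some a → τ i = some a

lemma bd_supp : ∀ {m : ℕ} (u : Ch p m) (τ : PF p m), bd m u τ ≠ 0 →
    ∃ σ, u σ ≠ 0 ∧ Le τ σ ∧ sz σ = sz τ + 1
  | 0, u, τ, h => by simp [bd] at h
  | m+1, u, τ, h => by
    obtain ⟨o, τ, rfl⟩ : ∃ o τ', τ = Fin.cons o τ' := ⟨τ 0, Fin.tail τ, by simp⟩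
    rw [← sl_apply o (bd _ u) τ] at h
    rcases o with _ | a
    · rw [sl_none_bd] at h
      by_cases h1 : bd m (sl none u) τ = 0
      · have h2 : (∑ a : ZMod p, sl (some a) u) τ ≠ 0 := by
          intro h2; apply h; rw [Pi.add_apply, h1, h2, add_zero]
        rw [Finset.sum_apply] at h2
        obtain ⟨a, _, ha⟩ := Finset.exists_ne_zero_of_sum_ne_zero h2
        refine ⟨Fin.cons (some a) τ, ha, ?_, ?_⟩
        · intro i b
          induction i using Fin.cases <;> simp
        · simp [sz_cons, add_comm]
      · obtain ⟨σ, h2, h3, h4⟩ := bd_supp _ _ h1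
        refine ⟨Fin.cons none σ, h2, ?_, ?_⟩
        · intro i b
          induction i using Fin.cases with
          | zero => simp
          | succ j => simpa using h3 j b
        · simp [sz_cons, h4]
    · rw [sl_some_bd] at h
      have h1 : bd m (sl (some a) u) τ ≠ 0 := by
        intro h1; apply h; simp [h1]
      obtain ⟨σ, h2, h3, h4⟩ := bd_supp _ _ h1
      refine ⟨Fin.cons (some a) σ, h2, ?_, ?_⟩
      · intro i b
        induction i using Fin.cases with
        | zero => simp
        | succ j => simpa using h3 j b
      · simp [sz_cons, h4]; ring

lemma lm_supp : ∀ {m : ℕ} (i : Fin m) (a : ZMod p) (u : Ch p m) (τ : PF p m), lm m i a u τ ≠ 0 →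
    ∃ σ, u σ ≠ 0 ∧ ∀ j b, τ j = some b → σ j = some b ∨ (j = i ∧ b = a)
  | 0, i, _, u, τ, h => i.elim0
  | m+1, i, a, u, τ, h => by
    obtain ⟨o, τ, rfl⟩ : ∃ o τ', τ = Fin.cons o τ' := ⟨τ 0, Fin.tail τ, by simp⟩
    rw [← sl_apply o (lm _ i a u) τ] at h
    induction i using Fin.cases with
    | zero =>
      rw [sl_lm_zero] at h
      split_ifs at h with ho
      · subst ho
        refine ⟨Fin.cons none τ, h, ?_⟩
        intro j b
        induction j using Fin.cases with
        | zero => simp; tauto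
        | succ j => simp
      · simp at h
    | succ i =>
      have h1 : lm m i a (sl o u) τ ≠ 0 := by
        rcases o with _ | b
        · rwa [sl_none_lm] at h
        · rw [sl_some_lm] at h
          intro h1; apply h; simp [h1]
      obtain ⟨σ, h2, h3⟩ := lm_supp _ _ _ _ h1
      refine ⟨Fin.cons o σ, h2, ?_⟩
      intro j b
      induction j using Fin.cases with
      | zero => simp; tauto
      | succ j => simpa using h3 j b

lemma sum_inv : ∀ {m : ℕ} (d : PF p m → ZMod p), (∀ g τ, d (act g τ) = d τ) →
    ∑ τ, d τ = d (emp p m)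
  | 0, d, _ => by
    rw [Fintype.sum_eq_single (emp p 0)]
    intro x hx
    exact absurd (Subsingleton.elim _ _) hx
  | m+1, d, hd => by
    have h1 : ∑ τ, d τ = ∑ x : Option (ZMod p) × PF p m, d (Fin.cons x.1 x.2) :=
      (Fintype.sum_equiv (Fin.consEquiv (fun _ => Option (ZMod p))) _ _ (fun x => rfl)).symm
    rw [h1, Fintype.sum_prod_type, Fintype.sum_option]
    have h2 : ∀ a : ZMod p, ∑ y : PF p m, d (Fin.cons (some a) y)
        = ∑ y : PF p m, d (Fin.cons (some 0) y) := by
      intro a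
      refine Fintype.sum_equiv (Equiv.mk (act (-a)) (act a) ?_ ?_) _ _ ?_
      · intro x; funext i; simp only [act]; cases x i <;> simp
      · intro x; funext i; simp only [act]; cases x i <;> simp
      · intro x
        rw [← hd (-a), act_cons]; simp
    simp only [h2]
    rw [Finset.sum_const, Finset.card_univ, ZMod.card, nsmul_eq_mul]
    rw [sum_inv (fun y => d (Fin.cons none y))]
    · simp only [CharP.cast_eq_zero, zero_mul, add_zero]
      congr 1
      funext i
      induction i using Fin.cases <;> simp [emp]
    · intro g τ
      rw [← hd g (Fin.cons none τ), act_cons]; simp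


noncomputable def sg {m : ℕ} : Ch p m →ₗ[ZMod p] Ch p m where
  toFun u := fun τ => (-1) ^ (sz τ) * u τ
  map_add' _ _ := by funext τ; simp [mul_add]
  map_smul' _ _ := by funext τ; simp; ring

lemma sg_bd : ∀ {m : ℕ} (u : Ch p m), sg (bd m u) = - bd m (sg u) := by
  have hsl : ∀ {m : ℕ} (u : Ch p (m+1)), sl none (sg u) = sg (sl none u) := by
    intro m u; funext τ; simp [sg, sl_apply, sz_cons]
  have hsl' : ∀ {m : ℕ} (a : ZMod p) (u : Ch p (m+1)),
      sl (some a) (sg u) = - sg (sl (some a) u) := by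
    intro m a u; funext τ; simp [sg, sl_apply, sz_cons, pow_add]
  intro m
  induction m with
  | zero => intro u; simp [bd]
  | succ m ih =>
    intro u
    apply ext_sl
    rintro (_ | a)
    · rw [hsl, map_neg, sl_none_bd, sl_none_bd, hsl, map_add, ih]
      simp only [hsl', map_sum, neg_add, Finset.sum_neg_distrib, neg_neg]
    · rw [hsl', map_neg, sl_some_bd, sl_some_bd, hsl', map_neg, ih]
      simp

/-- basis element -/
noncomputable def bs {m : ℕ} (σ : PF p m) : Ch p m := Pi.single σ 1

lemma bs_ne {m : ℕ} {σ τ : PF p m} (h : bs σ τ ≠ 0) : τ = σ := by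
  by_contra hne
  exact h (by simp [bs, hne])

lemma act_act {m : ℕ} (g h : ZMod p) (τ : PF p m) : act g (act h τ) = act (g + h) τ := by
  funext i; simp only [act]; cases τ i <;> simp [add_assoc]

lemma act_zero {m : ℕ} (τ : PF p m) : act 0 τ = τ := by
  funext i; simp only [act]; cases τ i <;> simp

lemma tr_bs {m : ℕ} (g : ZMod p) (σ : PF p m) : tr g (bs (act g σ)) = bs σ := by
  funext τ
  have : act g τ = act g σ ↔ τ = σ := by
    constructor
    · intro h
      have := congrArg (act (-g)) h
      simpa [act_act, act_zero] using this
    · rintro rfl; rfl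
  simp [tr, bs, Pi.single_apply, this]

lemma act_emp {m : ℕ} (g : ZMod p) : act g (emp p m) = emp p m := by
  funext i; simp [act, emp]

lemma act_eq_emp {m : ℕ} (g : ZMod p) (σ : PF p m) : act g σ = emp p m ↔ σ = emp p m := by
  constructor
  · intro h
    have := congrArg (act (-g)) h
    simpa [act_act, act_zero, act_emp] using this
  · rintro rfl; exact act_emp g

lemma sz_act {m : ℕ} (g : ZMod p) (σ : PF p m) : sz (act g σ) = sz σ := by
  simp [sz, act]

lemma sz_emp {m : ℕ} : sz (emp p m) = 0 := by simp [sz, emp]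

lemma sz_eq_zero {m : ℕ} {σ : PF p m} (h : sz σ = 0) : σ = emp p m := by
  funext i
  unfold sz at h
  rw [Finset.sum_eq_zero_iff] at h
  have := h i (mem_univ _)
  simpa [emp] using this

lemma sum_bs {m : ℕ} (u : Ch p m) : ∑ σ, u σ • bs σ = u := by
  funext τ
  simp [bs, Finset.sum_apply, Pi.single_apply]

lemma bd_bs_emp {m : ℕ} : bd m (bs (emp p m)) = 0 := by
  funext τ
  by_contra h
  obtain ⟨σ, h1, -, h2⟩ := bd_supp _ _ h
  rw [bs_ne h1, sz_emp] at h2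
  omega

section dold

variable {n m : ℕ} (lam : PF p n → Fin m × ZMod p)

noncomputable def phi : ℕ → PF p n → Ch p m
  | 0, _ => bs (emp p m)
  | j+1, σ => lm m (lam σ).1 (lam σ).2 (∑ τ, bd n (bs σ) τ • phi j τ)

noncomputable def ff : Ch p n →ₗ[ZMod p] Ch p m :=
  Fintype.linearCombination (ZMod p) (fun σ => phi lam (sz σ) σ)

lemma ff_apply (u : Ch p n) : ff lam u = ∑ σ, u σ • phi lam (sz σ) σ := rfl

lemma ff_bs (σ : PF p n) : ff lam (bs σ) = phi lam (sz σ) σ := by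
  rw [ff_apply, Finset.sum_eq_single σ]
  · simp [bs]
  · intro b _ hb; simp [bs, hb]
  · simp

lemma ff_emp : ff lam (bs (emp p n)) = bs (emp p m) := by
  rw [ff_bs, sz_emp]; rfl

lemma ff_eq (u : Ch p n) : ff lam u = ∑ σ, u σ • ff lam (bs σ) := by
  simp only [ff_bs]; rfl

lemma ff_rec (σ : PF p n) (h : σ ≠ emp p n) :
    ff lam (bs σ) = lm m (lam σ).1 (lam σ).2 (ff lam (bd n (bs σ))) := by
  obtain ⟨j, hj⟩ : ∃ j, sz σ = j + 1 :=
    Nat.exists_eq_succ_of_ne_zero (fun h0 => h (sz_eq_zero h0))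
  rw [ff_bs, hj]
  simp only [phi]
  rw [ff_apply]
  congr 1
  apply Finset.sum_congr rfl
  intro τ _
  by_cases hτ : bd n (bs σ) τ = 0
  · simp [hτ]
  · obtain ⟨σ', h1, -, h2⟩ := bd_supp _ _ hτ
    rw [bs_ne h1] at h2
    have : sz τ = j := by omega
    rw [this]

lemma ff_supp : ∀ (N : ℕ) (σ : PF p n), sz σ = N → ∀ τ, ff lam (bs σ) τ ≠ 0 →
    ∀ i b, τ i = some b → ∃ X, X ≠ emp p n ∧ Le X σ ∧ lam X = (i, b) := by
  intro N
  induction N with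
  | zero =>
    intro σ hσ τ hτ i b hb
    rw [sz_eq_zero hσ, ff_emp] at hτ
    rw [bs_ne hτ] at hb
    simp [emp] at hb
  | succ N ih =>
    intro σ hσ τ hτ i b hb
    have hne : σ ≠ emp p n := by rintro rfl; rw [sz_emp] at hσ; omega
    rw [ff_rec lam σ hne] at hτ
    obtain ⟨τ', h1, h2⟩ := lm_supp _ _ _ _ hτ
    rcases h2 i b hb with h3 | ⟨h3, h4⟩
    · rw [ff_eq, Finset.sum_apply] at h1
      obtain ⟨ρ, -, hρ⟩ := Finset.exists_ne_zero_of_sum_ne_zero h1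
      rw [Pi.smul_apply, smul_eq_mul] at hρ
      obtain ⟨σ', h5, h6, h7⟩ := bd_supp _ _ (left_ne_zero_of_mul hρ)
      rw [bs_ne h5] at h6 h7
      obtain ⟨X, hX1, hX2, hX3⟩ := ih ρ (by omega) τ' (right_ne_zero_of_mul hρ) i b h3
      exact ⟨X, hX1, fun i a h => h6 i a (hX2 i a h), hX3⟩
    · exact ⟨σ, hne, fun _ _ h => h, by rw [h3, h4]⟩


lemma ff_bd_bs
    (hc : ∀ X Y, X ≠ emp p n → Le X Y → (lam X).1 = (lam Y).1 → (lam X).2 = (lam Y).2) :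
    ∀ (N : ℕ) (σ : PF p n), sz σ = N →
    bd m (ff lam (bs σ)) = ff lam (bd n (bs σ)) := by
  intro N
  induction N with
  | zero =>
    intro σ hσ
    rw [sz_eq_zero hσ, ff_emp, bd_bs_emp, bd_bs_emp, map_zero]
  | succ N ih =>
    intro σ hσ
    have hne : σ ≠ emp p n := by rintro rfl; rw [sz_emp] at hσ; omega
    rw [ff_rec lam σ hne]
    have h1 := compat (lam σ).1 (lam σ).2 (ff lam (bd n (bs σ))) (by
      intro τ hτ b hb
      rw [ff_eq, Finset.sum_apply] at hτ
      obtain ⟨ρ, -, hρ⟩ := Finset.exists_ne_zero_of_sum_ne_zero hτ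
      rw [Pi.smul_apply, smul_eq_mul] at hρ
      obtain ⟨σ', h5, h6, h7⟩ := bd_supp _ _ (left_ne_zero_of_mul hρ)
      rw [bs_ne h5] at h6 h7
      obtain ⟨X, hX1, hX2, hX3⟩ := ff_supp lam _ ρ rfl τ (right_ne_zero_of_mul hρ) _ b hb
      have := hc X σ hX1 (fun i a h => h6 i a (hX2 i a h)) (by rw [hX3])
      rw [hX3] at this
      exact this)
    have h2 : bd m (ff lam (bd n (bs σ))) = 0 := by
      rw [ff_eq, map_sum]
      have : ∀ τ, bd m (bd n (bs σ) τ • ff lam (bs τ)) = bd n (bs σ) τ • ff lam (bd n (bs τ)) := by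
        intro τ
        by_cases hτ : bd n (bs σ) τ = 0
        · simp [hτ]
        · obtain ⟨σ', h5, h6, h7⟩ := bd_supp _ _ hτ
          rw [bs_ne h5] at h7
          rw [map_smul, ih τ (by omega)]
      simp only [this]
      simp only [← map_smul, ← map_sum]
      rw [sum_bs, bd_bd, map_zero]
    rw [h2, map_zero, add_zero] at h1
    exact h1

lemma ff_bd
    (hc : ∀ X Y, X ≠ emp p n → Le X Y → (lam X).1 = (lam Y).1 → (lam X).2 = (lam Y).2)
    (u : Ch p n) : bd m (ff lam u) = ff lam (bd n u) := by
  conv_lhs => rw [← sum_bs u]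
  conv_rhs => rw [← sum_bs u]
  simp only [map_sum, map_smul]
  apply Finset.sum_congr rfl
  intro σ _
  rw [ff_bd_bs lam hc _ σ rfl]

lemma ff_act
    (he : ∀ g X, X ≠ emp p n → lam (act g X) = ((lam X).1, g + (lam X).2)) :
    ∀ (N : ℕ) (g : ZMod p) (σ : PF p n), sz σ = N →
    tr g (ff lam (bs (act g σ))) = ff lam (bs σ) := by
  intro N
  induction N with
  | zero =>
    intro g σ hσ
    rw [sz_eq_zero hσ, act_emp, ff_emp]
    conv_lhs => rw [← act_emp (m := m) g]
    rw [tr_bs]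
  | succ N ih =>
    intro g σ hσ
    have hne : σ ≠ emp p n := by rintro rfl; rw [sz_emp] at hσ; omega
    rw [ff_rec lam σ hne, ff_rec lam (act g σ) (fun h => hne ((act_eq_emp g σ).1 h)),
      he g σ hne, ← lm_tr]
    congr 1
    rw [ff_eq, ff_eq lam (bd n (bs σ)), map_sum]
    symm
    refine Fintype.sum_equiv (Equiv.mk (act g) (act (-g)) ?_ ?_) _ _ ?_
    · intro x; simp [act_act, act_zero]
    · intro x; simp [act_act, act_zero]
    · intro τ
      simp only [Equiv.coe_fn_mk]
      have h1 : bd n (bs (act g σ)) (act g τ) = bd n (bs σ) τ := by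
        conv_rhs => rw [← tr_bs g σ, bd_tr]
        rfl
      rw [h1]
      by_cases hτ : bd n (bs σ) τ = 0
      · simp [hτ]
      · obtain ⟨σ', h5, h6, h7⟩ := bd_supp _ _ hτ
        rw [bs_ne h5] at h7
        rw [map_smul, ih g τ (by omega)]

end dold

noncomputable def inc {m : ℕ} : Ch p m →ₗ[ZMod p] Ch p (m+1) :=
  asm fun o => if o = none then LinearMap.id else 0

noncomputable def cone {m : ℕ} : Ch p m →ₗ[ZMod p] Ch p (m+1) :=
  asm fun o => if o = some 0 then LinearMap.id else 0

lemma bd_cone {m : ℕ} (u : Ch p m) : bd (m+1) (cone u) = inc u - cone (bd m u) := by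
  apply ext_sl
  rintro (_ | a)
  · rw [sl_none_bd, map_sub]
    simp only [inc, cone, sl_asm]
    rw [Finset.sum_eq_single 0]
    · simp
    · intro b _ hb; simp [hb]
    · simp
  · rw [sl_some_bd, map_sub]
    simp only [inc, cone, sl_asm]
    by_cases ha : a = 0 <;> simp [ha]

lemma inc_bs {m : ℕ} (σ : PF p m) : inc (bs σ) = bs (Fin.cons none σ : PF p (m+1)) := by
  funext τ
  obtain ⟨o, τ, rfl⟩ : ∃ o τ', τ = Fin.cons o τ' := ⟨τ 0, Fin.tail τ, by simp⟩
  rw [← sl_apply o (inc _) τ]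
  simp only [inc, sl_asm]
  rcases o with _ | a
  · simp [bs, Pi.single_apply, Fin.cons_inj]
  · simp [bs, Fin.cons_inj]

/-- Dold's theorem for joins of `ℤ/p`. -/
theorem dold {m : ℕ} (lam : PF p (m+1) → Fin m × ZMod p)
    (hc : ∀ X Y, X ≠ emp p (m+1) → Le X Y → (lam X).1 = (lam Y).1 → (lam X).2 = (lam Y).2)
    (he : ∀ g X, X ≠ emp p (m+1) → lam (act g X) = ((lam X).1, g + (lam X).2)) : False := by
  set F : Ch p m →ₗ[ZMod p] Ch p m := ff lam ∘ₗ inc with hF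
  set H : Ch p m →ₗ[ZMod p] Ch p m := ff lam ∘ₗ cone with hH
  have hFH : F = bd m * H + H * bd m := by
    apply LinearMap.ext
    intro u
    simp only [hF, hH, LinearMap.comp_apply, LinearMap.add_apply, Module.End.mul_apply]
    rw [ff_bd lam hc, bd_cone, map_sub]; simp
  have h0 : LinearMap.trace (ZMod p) (Ch p m) (sg * F) = 0 := by
    have e1 : LinearMap.trace (ZMod p) (Ch p m) (sg * (H * bd m))
        = LinearMap.trace (ZMod p) (Ch p m) (bd m * sg * H) := by
      rw [← mul_assoc, LinearMap.trace_mul_comm, ← mul_assoc]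
    have e2 : sg * (bd m * H) = - (bd m * sg * H) := by
      apply LinearMap.ext
      intro u
      simp [sg_bd]
    rw [hFH, mul_add, map_add, e1, e2, map_neg, neg_add_cancel]
  have h1 : LinearMap.trace (ZMod p) (Ch p m) (sg * F) = ∑ τ, (-1) ^ (sz τ) * F (bs τ) τ := by
    rw [LinearMap.trace_eq_matrix_trace (ZMod p) (Pi.basisFun (ZMod p) (PF p m)), Matrix.trace]
    apply Finset.sum_congr rfl
    intro τ _
    simp [sg, bs]
  rw [h1, sum_inv] at h0
  · have : emp p (m+1) = Fin.cons none (emp p m) := by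
      funext i
      induction i using Fin.cases <;> simp [emp]
    rw [hF, LinearMap.comp_apply, inc_bs, ← this, ff_emp, sz_emp] at h0
    simp [bs] at h0
  · intro g τ
    rw [sz_act]
    congr 1
    rw [hF, LinearMap.comp_apply, LinearMap.comp_apply, inc_bs, inc_bs]
    have h2 : (Fin.cons none (act g τ) : PF p (m+1)) = act g (Fin.cons none τ) := by
      rw [act_cons]; simp
    rw [h2, ← ff_act lam he _ g (Fin.cons none τ) rfl]
    rfl

open Classical in
/-- the fibre over a sign -/
noncomputable def fib {n : ℕ} (X : PF p n) (g : ZMod p) : Finset (Fin n) :=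
  univ.filter fun i => X i = some g

lemma mem_fib {n : ℕ} (X : PF p n) (g : ZMod p) (i : Fin n) : i ∈ fib X g ↔ X i = some g := by
  simp [fib]

/-- alternating sets -/
def AltSet {n : ℕ} (X : PF p n) (T : Finset (Fin n)) : Prop :=
  (∀ i ∈ T, X i ≠ none) ∧
    ∀ i ∈ T, ∀ j ∈ T, i < j → (∀ l ∈ T, ¬ (i < l ∧ l < j)) → X i ≠ X j

open Classical in
noncomputable def alt {n : ℕ} (X : PF p n) : ℕ :=
  (univ.filter fun T => AltSet X T).sup Finset.card

lemma card_le_alt {n : ℕ} {X : PF p n} {T : Finset (Fin n)} (h : AltSet X T) :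
    T.card ≤ alt X := by
  classical
  unfold alt
  exact Finset.le_sup (f := Finset.card) (by simp [h])

lemma exists_alt {n : ℕ} (X : PF p n) : ∃ T, AltSet X T ∧ T.card = alt X := by
  classical
  have hne : (univ.filter fun T => AltSet X T).Nonempty := ⟨∅, by simp [AltSet]⟩
  obtain ⟨T, h1, h2⟩ := Finset.exists_mem_eq_sup _ hne Finset.card
  exact ⟨T, by simpa using h1, by unfold alt; convert h2.symm⟩

lemma Le.eq {n : ℕ} {X Y : PF p n} (h : Le X Y) {i : Fin n} (hi : X i ≠ none) : Y i = X i := by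
  cases hx : X i with
  | none => exact absurd hx hi
  | some a => exact h i a hx

lemma AltSet.mono {n : ℕ} {X Y : PF p n} (h : Le X Y) {T : Finset (Fin n)} (hT : AltSet X T) :
    AltSet Y T := by
  refine ⟨fun i hi => ?_, fun i hi j hj hij hl => ?_⟩
  · rw [h.eq (hT.1 i hi)]; exact hT.1 i hi
  · rw [h.eq (hT.1 i hi), h.eq (hT.1 j hj)]
    exact hT.2 i hi j hj hij hl

lemma alt_mono {n : ℕ} {X Y : PF p n} (h : Le X Y) : alt X ≤ alt Y := by
  obtain ⟨T, hT, hc⟩ := exists_alt X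
  rw [← hc]
  exact card_le_alt (hT.mono h)

lemma altSet_act {n : ℕ} (g : ZMod p) {X : PF p n} {T : Finset (Fin n)} :
    AltSet (act g X) T ↔ AltSet X T := by
  have h1 : ∀ i, act g X i ≠ none ↔ X i ≠ none := by intro i; simp [act]
  have h2 : ∀ i j, act g X i ≠ act g X j ↔ X i ≠ X j := by
    intro i j
    simp only [act, ne_eq]
    rw [(Option.map_injective (add_right_injective g)).eq_iff]
  simp only [AltSet, h1, h2]

lemma alt_act {n : ℕ} (g : ZMod p) (X : PF p n) : alt (act g X) = alt X := by
  unfold alt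
  congr 1
  ext T
  simp [altSet_act]

lemma exists_first {n : ℕ} {X : PF p n} (h : X ≠ emp p n) :
    ∃ g, ∃ i, X i = some g ∧ ∀ j < i, X j = none := by
  classical
  have hne : (univ.filter fun i => X i ≠ none).Nonempty := by
    by_contra hc
    rw [Finset.not_nonempty_iff_eq_empty, Finset.filter_eq_empty_iff] at hc
    apply h
    funext i
    simpa [emp] using hc (mem_univ i)
  set i := (univ.filter fun i => X i ≠ none).min' hne with hi
  have h1 : X i ≠ none := by simpa using Finset.min'_mem _ hne
  obtain ⟨g, hg⟩ := Option.ne_none_iff_exists'.1 h1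
  refine ⟨g, i, hg, fun j hj => ?_⟩
  by_contra hjn
  exact absurd (Finset.min'_le _ j (by simpa using hjn)) (not_le.2 hj)

open Classical in
noncomputable def first {n : ℕ} (X : PF p n) : ZMod p :=
  if h : X ≠ emp p n then (exists_first h).choose else 0

lemma first_spec {n : ℕ} {X : PF p n} (h : X ≠ emp p n) :
    ∃ i, X i = some (first X) ∧ ∀ j < i, X j = none := by
  unfold first
  rw [dif_pos h]
  exact (exists_first h).choose_spec

lemma first_uniq {n : ℕ} {X : PF p n} {g : ZMod p} {i : Fin n} (h1 : X i = some g)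
    (h2 : ∀ j < i, X j = none) : first X = g := by
  have hX : X ≠ emp p n := by rintro rfl; simp [emp] at h1
  obtain ⟨i', h3, h4⟩ := first_spec hX
  rcases lt_trichotomy i i' with h | h | h
  · rw [h4 i h] at h1; simp at h1
  · subst h; rw [h1] at h3; simpa using h3.symm
  · rw [h2 i' h] at h3; simp at h3

lemma first_act {n : ℕ} (g : ZMod p) {X : PF p n} (h : X ≠ emp p n) :
    first (act g X) = g + first X := by
  obtain ⟨i, h1, h2⟩ := first_spec h
  exact first_uniq (i := i) (by simp [act, h1]) (fun j hj => by simp [act, h2 j hj])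

lemma AltSet.insert {n : ℕ} {X : PF p n} {T : Finset (Fin n)} (hT : AltSet X T) {i : Fin n}
    (hi : X i ≠ none) (hlt : ∀ j ∈ T, i < j)
    (hne : ∀ j ∈ T, (∀ l ∈ T, j ≤ l) → X i ≠ X j) :
    AltSet X (Insert.insert i T) := by
  refine ⟨?_, ?_⟩
  · intro j hj
    rcases Finset.mem_insert.1 hj with rfl | hj
    · exact hi
    · exact hT.1 j hj
  · intro a ha b hb hab hl
    rcases Finset.mem_insert.1 hb with rfl | hb'
    · rcases Finset.mem_insert.1 ha with rfl | ha
      · exact absurd hab (lt_irrefl _)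
      · exact absurd (hlt a ha) (not_lt.2 hab.le)
    · rcases Finset.mem_insert.1 ha with rfl | ha
      · refine hne b hb' fun l hlT => ?_
        by_contra hcon
        exact hl l (Finset.mem_insert_of_mem hlT) ⟨hlt l hlT, not_le.1 hcon⟩
      · exact hT.2 a ha b hb' hab fun l hlT => hl l (Finset.mem_insert_of_mem hlT)

lemma alt_pos {n : ℕ} {X : PF p n} (h : X ≠ emp p n) : 1 ≤ alt X := by
  obtain ⟨i, h1, -⟩ := first_spec h
  have : AltSet X {i} := by
    refine ⟨by simp [h1], ?_⟩
    intro a ha b hb hab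
    rw [Finset.mem_singleton] at ha hb
    subst ha; subst hb
    exact absurd hab (lt_irrefl _)
  simpa using card_le_alt this

lemma alt_first {n : ℕ} {X Y : PF p n} (hX : X ≠ emp p n) (h : Le X Y) (ha : alt X = alt Y) :
    first X = first Y := by
  by_contra hne
  obtain ⟨i0, hi1, hi2⟩ := first_spec hX
  have hY : Y ≠ emp p n := by
    rintro rfl
    have := h i0 _ hi1
    simp [emp] at this
  obtain ⟨j0, hj1, hj2⟩ := first_spec hY
  obtain ⟨T, hT, hc⟩ := exists_alt X
  have hTne : T.Nonempty := by
    rw [← Finset.card_pos, hc]; exact alt_pos hX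
  have hmin : ∀ j ∈ T, (∀ l ∈ T, j ≤ l) → j = T.min' hTne := fun j hj hl =>
    le_antisymm (hl _ (Finset.min'_mem _ _)) (Finset.min'_le _ _ hj)
  set i1 := T.min' hTne with hi1def
  have hi1T : i1 ∈ T := Finset.min'_mem _ _
  have hle1 : i0 ≤ i1 := by
    by_contra hcon
    exact hT.1 i1 hi1T (hi2 i1 (not_le.1 hcon))
  have hle0 : j0 ≤ i0 := by
    by_contra hcon
    have := h i0 _ hi1
    rw [hj2 i0 (not_le.1 hcon)] at this
    simp at this
  by_cases hcase : X i1 = some (first Y)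
  · have hlt : i0 < i1 := by
      refine lt_of_le_of_ne hle1 ?_
      intro heq
      rw [← heq, hi1] at hcase
      exact hne (by simpa using hcase)
    have hA : AltSet X (Insert.insert i0 T) := by
      refine hT.insert (by simp [hi1]) (fun j hj => lt_of_lt_of_le hlt (Finset.min'_le _ _ hj)) ?_
      intro j hj hl
      rw [hmin j hj hl, hcase, hi1]
      simpa using hne
    have := card_le_alt hA
    rw [Finset.card_insert_of_notMem] at this
    · omega
    · intro hm; exact absurd (Finset.min'_le _ _ hm) (not_le.2 hlt)
  · have hYi1 : Y i1 = X i1 := h.eq (hT.1 _ hi1T)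
    have hlt : j0 < i1 := by
      refine lt_of_le_of_ne (hle0.trans hle1) ?_
      intro heq
      apply hcase
      rw [← hYi1, ← heq, hj1]
    have hA : AltSet Y (Insert.insert j0 T) := by
      refine (hT.mono h).insert (by simp [hj1])
        (fun j hj => lt_of_lt_of_le hlt (Finset.min'_le _ _ hj)) ?_
      intro j hj hl
      rw [hmin j hj hl, hYi1, hj1]
      exact fun h => hcase h.symm
    have := card_le_alt hA
    rw [Finset.card_insert_of_notMem] at this
    · omega
    · intro hm; exact absurd (Finset.min'_le _ _ hm) (not_le.2 hlt)

/-- equivariant mean -/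
noncomputable def mean (S : Finset (ZMod p)) : ZMod p := (∑ x ∈ S, x) / (S.card : ZMod p)

lemma mean_shift (g : ZMod p) (S S' : Finset (ZMod p)) (h0 : S.Nonempty) (h1 : S.card < p)
    (h : S' = S.image (g + ·)) : mean S' = g + mean S := by
  have hinj : Function.Injective (fun x : ZMod p => g + x) := add_right_injective g
  have hcard : S'.card = S.card := by rw [h, Finset.card_image_of_injective _ hinj]
  have hne : (S.card : ZMod p) ≠ 0 := by
    intro hz
    rw [ZMod.natCast_eq_zero_iff] at hz
    exact absurd (Nat.le_of_dvd (Finset.card_pos.2 h0) hz) (not_le.2 h1)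
  unfold mean
  rw [hcard, h, Finset.sum_image (fun x _ y _ hxy => hinj hxy), Finset.sum_add_distrib,
    Finset.sum_const, nsmul_eq_mul]
  field_simp

section label

variable {n : ℕ} (P : Finset (Fin n) → Prop) (c : Finset (Fin n) → ℕ)

open Classical in
noncomputable def cs (X : PF p n) (d : ℕ) : Finset (ZMod p) :=
  univ.filter fun g => ∃ A, A ⊆ fib X g ∧ P A ∧ c A = d

lemma mem_cs (X : PF p n) (d : ℕ) (g : ZMod p) :
    g ∈ cs P c X d ↔ ∃ A, A ⊆ fib X g ∧ P A ∧ c A = d := by simp [cs]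

lemma cs_mono {X Y : PF p n} (h : Le X Y) (d : ℕ) : cs P c X d ⊆ cs P c Y d := by
  intro g hg
  rw [mem_cs] at *
  obtain ⟨A, h1, h2⟩ := hg
  refine ⟨A, fun i hi => ?_, h2⟩
  have := h1 hi
  rw [mem_fib] at *
  exact h _ _ this

lemma cs_act (g : ZMod p) (X : PF p n) (d : ℕ) :
    cs P c (act g X) d = (cs P c X d).image (g + ·) := by
  have hf : ∀ x, fib (act g X) (g + x) = fib X x := by
    intro x
    ext i
    rw [mem_fib, mem_fib]
    simp [act]
  ext y
  rw [Finset.mem_image]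
  constructor
  · intro hy
    refine ⟨-g + y, ?_, by simp⟩
    rw [mem_cs] at *
    rw [← hf]
    simpa using hy
  · rintro ⟨x, hx, rfl⟩
    rw [mem_cs] at *
    rwa [hf]

open Classical in
/-- largest color (below `t`) that occurs -/
noncomputable def top (t : ℕ) (X : PF p n) : ℕ :=
  ((range t).filter fun d => (cs P c X d).Nonempty).sup id

theorem tucker (a b t : ℕ) (hn : a + (t - b) * (p - 1) < n)
    (hcol : ∀ A, P A → c A < t)
    (halt : ∀ X : PF p n, a < alt X → ∃ A g, A ⊆ fib X g ∧ P A ∧ b ≤ c A) :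
    ∃ S : ZMod p → Finset (Fin n), ∃ d, (∀ g, P (S g) ∧ c (S g) = d) ∧
      ∀ g h, g ≠ h → Disjoint (S g) (S h) := by
  classical
  by_contra hcon
  have hp : p.Prime := Fact.out
  have hp2 := hp.two_le
  obtain ⟨m, rfl⟩ : ∃ m, n = m + 1 := ⟨n - 1, by omega⟩
  -- color sets are proper
  have hprop : ∀ (X : PF p (m+1)) d, (cs P c X d).card < p := by
    intro X d
    by_contra hge
    have huniv : cs P c X d = univ := by
      apply Finset.eq_univ_of_card
      rw [ZMod.card]
      exact le_antisymm (by simpa [ZMod.card] using Finset.card_le_univ (cs P c X d)) (not_lt.1 hge)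
    have : ∀ g, ∃ A, A ⊆ fib X g ∧ P A ∧ c A = d := by
      intro g
      rw [← mem_cs, huniv]; exact mem_univ _
    choose S hS1 hS2 hS3 using this
    refine hcon ⟨S, d, fun g => ⟨hS2 g, hS3 g⟩, ?_⟩
    intro g h hgh
    rw [Finset.disjoint_left]
    intro i hi hi'
    have e1 := hS1 g hi
    have e2 := hS1 h hi'
    rw [mem_fib] at e1 e2
    rw [e1] at e2
    exact hgh (by simpa using e2)
  have htop_act : ∀ g (X : PF p (m+1)), top P c t (act g X) = top P c t X := by
    intro g X
    simp only [top, cs_act, Finset.image_nonempty]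
  have htop : ∀ X : PF p (m+1), a < alt X →
      b ≤ top P c t X ∧ top P c t X < t ∧ (cs P c X (top P c t X)).Nonempty := by
    intro X hX
    obtain ⟨A, g, h1, h2, h3⟩ := halt X hX
    have hmem : c A ∈ (range t).filter fun d => (cs P c X d).Nonempty := by
      rw [Finset.mem_filter, Finset.mem_range]
      exact ⟨hcol A h2, g, (mem_cs P c X _ g).2 ⟨A, h1, h2, rfl⟩⟩
    have hle : c A ≤ top P c t X := Finset.le_sup (f := id) hmem
    obtain ⟨d, hd, hd2⟩ := Finset.exists_mem_eq_sup _ ⟨_, hmem⟩ id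
    have hd3 : top P c t X = d := hd2
    rw [hd3] at hle ⊢
    rw [Finset.mem_filter, Finset.mem_range] at hd
    exact ⟨h3.trans hle, hd.1, hd.2⟩
  set lev : PF p (m+1) → ℕ := fun X =>
    if alt X ≤ a then alt X - 1
    else a + ((top P c t X - b) * (p - 1) + ((cs P c X (top P c t X)).card - 1)) with hlev
  set sgn : PF p (m+1) → ZMod p := fun X =>
    if alt X ≤ a then first X else mean (cs P c X (top P c t X)) with hsgn
  have hlevlt : ∀ X, X ≠ emp p (m+1) → lev X < m := by
    intro X hX
    simp only [hlev]
    have h1 := alt_pos hX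
    split_ifs with h
    · omega
    · obtain ⟨h2, h3, h4⟩ := htop X (not_le.1 h)
      have h5 := hprop X (top P c t X)
      have h6 := Finset.card_pos.2 h4
      have h7 : (top P c t X - b + 1) * (p - 1) ≤ (t - b) * (p - 1) :=
        Nat.mul_le_mul_right _ (by omega)
      rw [add_mul, one_mul] at h7
      omega
  have hm : 0 < m := by
    refine lt_of_le_of_lt (Nat.zero_le _) (hlevlt (fun _ => some 0) ?_)
    intro h
    have := congrFun h 0
    simp [emp] at this
  refine dold (p := p) (m := m) (fun X => (⟨min (lev X) (m-1), by omega⟩, sgn X)) ?_ ?_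
  · intro X Y hX hXY hl
    have hY : Y ≠ emp p (m+1) := by
      rintro rfl
      obtain ⟨i, h1, -⟩ := first_spec hX
      have := hXY i _ h1
      simp [emp] at this
    have hl1 : lev X = lev Y := by
      have h1 := hlevlt X hX
      have h2 := hlevlt Y hY
      have := congrArg Fin.val hl
      simp only at this
      omega
    have hmono := alt_mono hXY
    have hXp := alt_pos hX
    simp only [hlev] at hl1
    show sgn X = sgn Y
    simp only [hsgn]
    by_cases h1 : alt Y ≤ a
    · have h2 : alt X ≤ a := hmono.trans h1
      rw [if_pos h1, if_pos h2] at hl1 ⊢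
      exact alt_first hX hXY (by omega)
    · rw [if_neg h1] at hl1 ⊢
      by_cases h2 : alt X ≤ a
      · rw [if_pos h2] at hl1
        omega
      · rw [if_neg h2] at hl1 ⊢
        obtain ⟨x1, x2, x3⟩ := htop X (not_le.1 h2)
        obtain ⟨y1, y2, y3⟩ := htop Y (not_le.1 h1)
        have x4 := hprop X (top P c t X)
        have y4 := hprop Y (top P c t Y)
        have x5 := Finset.card_pos.2 x3
        have y5 := Finset.card_pos.2 y3
        set u := (cs P c X (top P c t X)).card - 1 with hu
        set v := (cs P c Y (top P c t Y)).card - 1 with hv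
        have hu' : u < p - 1 := by omega
        have hv' : v < p - 1 := by omega
        have hl2 : (top P c t X - b) * (p - 1) + u = (top P c t Y - b) * (p - 1) + v := by omega
        have hq : top P c t X - b = top P c t Y - b := by
          have e1 : ((top P c t X - b) * (p - 1) + u) / (p - 1) = top P c t X - b := by
            rw [mul_comm, Nat.mul_add_div (by omega), Nat.div_eq_of_lt hu', add_zero]
          have e2 : ((top P c t Y - b) * (p - 1) + v) / (p - 1) = top P c t Y - b := by
            rw [mul_comm, Nat.mul_add_div (by omega), Nat.div_eq_of_lt hv', add_zero]
          rw [← e1, ← e2, hl2]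
        have huv : u = v := by rw [hq] at hl2; omega
        have htt : top P c t X = top P c t Y := by omega
        have : cs P c X (top P c t X) = cs P c Y (top P c t Y) := by
          apply Finset.eq_of_subset_of_card_le
          · rw [htt]; exact cs_mono P c hXY _
          · omega
        rw [this]
  · intro g X hX
    have hcard : (cs P c (act g X) (top P c t (act g X))).card
        = (cs P c X (top P c t X)).card := by
      rw [htop_act, cs_act, Finset.card_image_of_injective _ (add_right_injective g)]
    have h1 : lev (act g X) = lev X := by
      simp only [hlev, alt_act, hcard]
      rw [htop_act]
    have h2 : sgn (act g X) = g + sgn X := by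
      simp only [hsgn, alt_act]
      split_ifs with h
      · exact first_act g hX
      · obtain ⟨x1, x2, x3⟩ := htop X (not_le.1 h)
        rw [htop_act]
        exact mean_shift g _ _ x3 (hprop _ _) (cs_act P c g X _)
    simp only [h1, h2]

end label

end KG


namespace KG

/-- the combinatorial lower-bound property -/
def Good (Q : ∀ n : ℕ, Finset (Fin n) → Prop) (r : ℕ) : Prop :=
  ∀ k t n : ℕ, 1 ≤ k → 1 ≤ t → r * (k - 1) + t * (r - 1) + 1 ≤ n →
    ∀ c : Finset (Fin n) → ℕ, (∀ A, Q n A → A.card = k → c A < t) →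
    ∃ S : Fin r → Finset (Fin n), ∃ d, (∀ g, Q n (S g) ∧ (S g).card = k ∧ c (S g) = d) ∧
      ∀ g h, g ≠ h → Disjoint (S g) (S h)

def AS (n : ℕ) (A : Finset (Fin n)) : Prop := ∀ i ∈ A, ∀ j ∈ A, i < j → i.val + 2 ≤ j.val

def Her (Q : ∀ n : ℕ, Finset (Fin n) → Prop) : Prop :=
  ∀ (n₁ n : ℕ) (e : Fin n₁ ↪o Fin n) (A : Finset (Fin n₁)), Q n₁ A → Q n (A.map e.toEmbedding)

lemma emb_diff {n₁ n : ℕ} (e : Fin n₁ ↪o Fin n) : ∀ (d : ℕ) (i j : Fin n₁),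
    i.val + d = j.val → (e i).val + d ≤ (e j).val := by
  intro d
  induction d with
  | zero => intro i j h; have : i = j := Fin.ext (by omega); subst this; simp
  | succ d ih =>
    intro i j h
    have hlt : i.val + d < n₁ := by have := j.2; omega
    have h1 := ih i ⟨i.val + d, hlt⟩ rfl
    have h2 : e ⟨i.val + d, hlt⟩ < e j := e.strictMono (by
      rw [Fin.lt_def]; simp only; omega)
    rw [Fin.lt_def] at h2
    omega

lemma emb_ge {n₁ n : ℕ} (e : Fin n₁ ↪o Fin n) (i : Fin n₁) : i.val ≤ (e i).val := by
  have h0 : 0 < n₁ := by have := i.2; omega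
  have := emb_diff e i.val ⟨0, h0⟩ i (by simp)
  omega

lemma emb_le {n₁ n : ℕ} (e : Fin n₁ ↪o Fin n) (i : Fin n₁) :
    (e i).val + (n₁ - 1 - i.val) ≤ n - 1 := by
  have h0 : n₁ - 1 < n₁ := by have := i.2; omega
  have := emb_diff e (n₁ - 1 - i.val) i ⟨n₁ - 1, h0⟩ (by have := i.2; simp only; omega)
  have := (e ⟨n₁ - 1, h0⟩).2
  omega

lemma her_true : Her (fun _ _ => True) := fun _ _ _ _ _ => trivial

lemma her_AS : Her AS := by
  intro n₁ n e A hA i hi j hj hij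
  rw [Finset.mem_map] at hi hj
  obtain ⟨i, hi, rfl⟩ := hi
  obtain ⟨j, hj, rfl⟩ := hj
  have hij' : i < j := e.lt_iff_lt.1 hij
  have h1 := hA i hi j hj hij'
  have h2 := emb_diff e (j.val - i.val) i j (by omega)
  simp only [RelEmbedding.coe_toEmbedding]
  omega

lemma stable_iff (n : ℕ) (A : Finset (Fin n)) : Stable n 2 A ↔
    ∀ i ∈ A, ∀ j ∈ A, i < j → i.val + 2 ≤ j.val ∧ j.val - i.val ≤ n - 2 := by
  constructor
  · intro h i hi j hj hij
    have := h i hi j hj hij.ne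
    rw [Fin.lt_def] at hij
    rw [max_eq_right hij.le, min_eq_left hij.le] at this
    omega
  · intro h i hi j hj hij
    rcases lt_or_gt_of_ne hij with hlt | hlt
    · have := h i hi j hj hlt
      rw [Fin.lt_def] at hlt
      rw [max_eq_right hlt.le, min_eq_left hlt.le]
      omega
    · have := h j hj i hi hlt
      rw [Fin.lt_def] at hlt
      rw [max_eq_left hlt.le, min_eq_right hlt.le]
      omega

lemma her_stable : Her (fun n A => Stable n 2 A) := by
  intro n₁ n e A hA
  rw [stable_iff] at hA ⊢
  intro i hi j hj hij
  rw [Finset.mem_map] at hi hj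
  obtain ⟨i, hi, rfl⟩ := hi
  obtain ⟨j, hj, rfl⟩ := hj
  have hij' : i < j := e.lt_iff_lt.1 hij
  have h1 := hA i hi j hj hij'
  have h2 := emb_diff e (j.val - i.val) i j (by omega)
  have h3 := emb_ge e i
  have h4 := emb_le e j
  have h5 := i.2
  have h6 := j.2
  simp only [RelEmbedding.coe_toEmbedding]
  omega

lemma good_comp {Q : ∀ n : ℕ, Finset (Fin n) → Prop} (hQ : Her Q) {r₁ r₂ : ℕ} (h1 : 1 ≤ r₁)
    (h2 : 1 ≤ r₂) (hG : Good Q r₁) (hT : Good (fun _ _ => True) r₂) : Good Q (r₁ * r₂) := by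
  intro k t n hk ht hn c hc
  obtain ⟨a, rfl⟩ : ∃ a, r₁ = a + 1 := ⟨r₁ - 1, by omega⟩
  obtain ⟨b, rfl⟩ : ∃ b, r₂ = b + 1 := ⟨r₂ - 1, by omega⟩
  obtain ⟨k, rfl⟩ : ∃ k', k = k' + 1 := ⟨k - 1, by omega⟩
  set n₁ := (a + 1) * (k + 1 - 1) + t * (a + 1 - 1) + 1 with hn₁
  have key : ∀ B : Finset (Fin n), ∃ d, ∃ S : Fin (a+1) → Finset (Fin n), B.card = n₁ →
      (d < t ∧ (∀ g, S g ⊆ B ∧ Q n (S g) ∧ (S g).card = k + 1 ∧ c (S g) = d) ∧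
        ∀ g h, g ≠ h → Disjoint (S g) (S h)) := by
    intro B
    by_cases hB : B.card = n₁
    · set e := B.orderEmbOfFin hB with he
      obtain ⟨S, d, hS, hd⟩ := hG (k+1) t n₁ hk ht le_rfl (fun A => c (A.map e.toEmbedding))
        (fun A hA hAk => hc _ (hQ _ _ e A hA) (by simpa using hAk))
      refine ⟨d, fun g => (S g).map e.toEmbedding, fun _ => ⟨?_, ?_, ?_⟩⟩
      · rw [← (hS 0).2.2]
        exact hc _ (hQ _ _ e _ (hS 0).1) (by simpa using (hS 0).2.1)
      · intro g
        refine ⟨?_, hQ _ _ e _ (hS g).1, by simpa using (hS g).2.1, (hS g).2.2⟩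
        intro x hx
        rw [Finset.mem_map] at hx
        obtain ⟨y, -, rfl⟩ := hx
        exact B.orderEmbOfFin_mem hB y
      · intro g h hgh
        rw [Finset.disjoint_map]
        exact hd g h hgh
    · exact ⟨0, fun _ => ∅, fun h => absurd h hB⟩
  choose C S hS using key
  obtain ⟨B, d, hB, hBd⟩ := hT n₁ t n (by omega) ht (by
      refine le_trans ?_ hn
      simp only [hn₁, Nat.add_sub_cancel]
      have : (a + 1) * (b + 1) - 1 = (b + 1) * a + b := by
        have : (a + 1) * (b + 1) = (b + 1) * a + b + 1 := by ring
        omega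
      rw [this]
      apply le_of_eq
      ring) C (fun A _ hA => (hS A hA).1)
  refine ⟨fun x => S (B (finProdFinEquiv.symm x).2) (finProdFinEquiv.symm x).1, d, ?_, ?_⟩
  · intro x
    obtain ⟨-, hc1, hc2⟩ := hB (finProdFinEquiv.symm x).2
    have := (hS _ hc1).2.1 (finProdFinEquiv.symm x).1
    exact ⟨this.2.1, this.2.2.1, this.2.2.2.trans hc2⟩
  · intro x y hxy
    have hxy' : finProdFinEquiv.symm x ≠ finProdFinEquiv.symm y :=
      fun h => hxy (finProdFinEquiv.symm.injective h)
    simp only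
    generalize finProdFinEquiv.symm x = u at *
    generalize finProdFinEquiv.symm y = v at *
    by_cases h : u.2 = v.2
    · rw [← h]
      apply (hS _ (hB u.2).2.1).2.2
      intro h'
      exact hxy' (Prod.ext h' h)
    · exact Finset.disjoint_of_subset_left ((hS _ (hB u.2).2.1).2.1 _).1
        (Finset.disjoint_of_subset_right ((hS _ (hB v.2).2.1).2.1 _).1 (hBd _ _ h))

lemma good_prime {p : ℕ} (hp : p.Prime) : Good AS p := by
  intro k t n hk ht hn c hc
  have : Fact p.Prime := ⟨hp⟩
  classical
  obtain ⟨S, d, hS, hd⟩ := tucker (p := p) (fun A : Finset (Fin n) => AS n A ∧ A.card = k) c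
    (p * (k - 1)) 0 t (by simpa using hn) (fun A hA => hc A hA.1 hA.2) (by
      intro X hX
      obtain ⟨T, hT, hTc⟩ := exists_alt X
      have hlt : (univ : Finset (ZMod p)).card * (k - 1) < T.card := by
        rw [Finset.card_univ, ZMod.card, hTc]; exact hX
      obtain ⟨g, -, hg⟩ := Finset.exists_lt_card_fiber_of_mul_lt_card_of_maps_to
        (f := fun i => (X i).getD 0) (fun i _ => mem_univ _) hlt
      obtain ⟨A, hA1, hA2⟩ := Finset.exists_subset_card_eq (show k ≤ _ by omega : k ≤
        (T.filter fun i => (X i).getD 0 = g).card)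
      have hX' : ∀ i ∈ A, i ∈ T ∧ X i = some g := by
        intro i hi
        have h1 := hA1 hi
        rw [Finset.mem_filter] at h1
        refine ⟨h1.1, ?_⟩
        obtain ⟨b, hb⟩ := Option.ne_none_iff_exists'.1 (hT.1 i h1.1)
        rw [hb] at h1 ⊢
        simpa using h1.2
      refine ⟨A, g, fun i hi => (mem_fib _ _ _).2 (hX' i hi).2, ⟨?_, hA2⟩, Nat.zero_le _⟩
      intro i hi j hj hij
      by_contra hcon
      refine hT.2 i (hX' i hi).1 j (hX' j hj).1 hij ?_ ((hX' i hi).2.trans (hX' j hj).2.symm)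
      intro l _ hl
      rw [Fin.lt_def] at hij
      have h1 := Fin.lt_def.1 hl.1
      have h2 := Fin.lt_def.1 hl.2
      omega)
  let e : Fin p ≃ ZMod p := (Fintype.equivFinOfCardEq (ZMod.card p)).symm
  exact ⟨fun x => S (e x), d, fun x => ⟨(hS _).1.1, (hS _).1.2, (hS _).2⟩,
    fun x y hxy => hd _ _ (fun h => hxy (e.injective h))⟩

lemma good_mono_true {r : ℕ} (h : Good AS r) : Good (fun _ _ => True) r := by
  intro k t n hk ht hn c hc
  obtain ⟨S, d, hS, hd⟩ := h k t n hk ht hn c (fun A _ hA => hc A trivial hA)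
  exact ⟨S, d, fun g => ⟨trivial, (hS g).2⟩, hd⟩

lemma good_true (r : ℕ) (hr : 1 ≤ r) : Good (fun _ _ => True) r := by
  induction r using Nat.strong_induction_on with
  | _ r ih =>
    by_cases h1 : r = 1
    · subst h1
      intro k t n hk ht hn c hc
      obtain ⟨A, -, hA⟩ := Finset.exists_subset_card_eq (show k ≤ (univ : Finset (Fin n)).card by
        rw [Finset.card_univ, Fintype.card_fin]; omega)
      refine ⟨fun _ => A, c A, fun _ => ⟨trivial, hA, rfl⟩, fun g h hgh => ?_⟩
      exact absurd (Subsingleton.elim g h) hgh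
    · have hp := Nat.minFac_prime h1
      obtain ⟨s, hs⟩ := Nat.minFac_dvd r
      have hs1 : 1 ≤ s := by
        rcases Nat.eq_zero_or_pos s with h0 | h0
        · rw [h0] at hs; omega
        · exact h0
      have hlt : s < r := by
        have := hp.two_le
        nlinarith
      rw [hs]
      exact good_comp her_true hp.one_le hs1 (good_mono_true (good_prime hp)) (ih s hlt hs1)

lemma good_AS (r : ℕ) (hr : 2 ≤ r) : Good AS r := by
  have hp := Nat.minFac_prime (show r ≠ 1 by omega)
  obtain ⟨s, hs⟩ := Nat.minFac_dvd r
  have hs1 : 1 ≤ s := by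
    rcases Nat.eq_zero_or_pos s with h0 | h0
    · rw [h0] at hs; omega
    · exact h0
  rw [hs]
  exact good_comp her_AS hp.one_le hs1 (good_prime hp) (good_true s hs1)

lemma zmod_two_ne : ∀ x y : ZMod 2, x ≠ y → y = x + 1 := by decide

lemma zmod_two_or : ∀ x y : ZMod 2, x + 0 = y ∨ x + 1 = y := by decide

lemma zmod_two_zero : (2 : ZMod 2) = 0 := by decide

lemma good_two : Good (fun n A => Stable n 2 A) 2 := by
  intro k t n hk ht hn c hc
  have : Fact (Nat.Prime 2) := ⟨Nat.prime_two⟩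
  classical
  by_contra hcon
  have key : ∀ X : PF 2 n, 2 * k - 1 < alt X → ∀ g : ZMod 2,
      ∃ A, A ⊆ fib X g ∧ Stable n 2 A ∧ A.card = k := by
    intro X hX g
    obtain ⟨T, hT, hTc⟩ := exists_alt X
    have hle : 2 * k ≤ T.card := by omega
    set e : Fin T.card ↪o Fin n := T.orderEmbOfFin rfl with he
    have hmem : ∀ i, e i ∈ T := fun i => T.orderEmbOfFin_mem rfl i
    have hcons : ∀ (i : ℕ) (hi : i + 1 < T.card),
        X (e ⟨i, by omega⟩) ≠ X (e ⟨i+1, hi⟩) := by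
      intro i hi
      apply hT.2 _ (hmem _) _ (hmem _) (e.strictMono (by rw [Fin.lt_def]; simp))
      intro l hl hll
      obtain ⟨y, hy⟩ : ∃ y, e y = l := by
        have : l ∈ Set.range e := by
          rw [he, Finset.range_orderEmbOfFin]; exact hl
        exact this
      subst hy
      have h1 := Fin.lt_def.1 (e.lt_iff_lt.1 hll.1)
      have h2 := Fin.lt_def.1 (e.lt_iff_lt.1 hll.2)
      simp only at h1 h2
      omega
    have hsig : ∃ g0 : ZMod 2, ∀ (i : ℕ) (hi : i < T.card), X (e ⟨i, hi⟩) = some (g0 + (i : ZMod 2)) := by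
      have h0 : 0 < T.card := by omega
      obtain ⟨g0, hg0⟩ := Option.ne_none_iff_exists'.1 (hT.1 _ (hmem ⟨0, h0⟩))
      refine ⟨g0, fun i => ?_⟩
      induction i with
      | zero => intro hi; simpa using hg0
      | succ i ih =>
        intro hi
        have h1 := ih (by omega)
        have h2 := hcons i hi
        obtain ⟨b, hb⟩ := Option.ne_none_iff_exists'.1 (hT.1 _ (hmem ⟨i+1, hi⟩))
        rw [h1, hb] at h2
        rw [hb]
        have h3 : g0 + (i : ZMod 2) ≠ b := fun h => h2 (by rw [h])
        rw [zmod_two_ne _ _ h3]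
        push_cast
        ring_nf
    obtain ⟨g0, hg0⟩ := hsig
    obtain ⟨ε, hε, hεg⟩ : ∃ ε : ℕ, ε < 2 ∧ g0 + (ε : ZMod 2) = g := by
      rcases zmod_two_or g0 g with h | h
      · exact ⟨0, by omega, by simpa using h⟩
      · exact ⟨1, by omega, by simpa using h⟩
    -- embedding of `Fin (2 * k)`
    let e' : Fin (2 * k) ↪o Fin n := (Fin.castLEOrderEmb hle).trans e
    let E : Finset (Fin (2 * k)) := univ.map
      ⟨fun x : Fin k => (⟨2 * x.val + ε, by have := x.2; omega⟩ : Fin (2 * k)), fun x y h => by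
        have := congrArg Fin.val h
        simp only at this
        exact Fin.ext (by omega)⟩
    have hE : Stable (2 * k) 2 E := by
      rw [stable_iff]
      intro i hi j hj hij
      simp only [E, Finset.mem_map, Finset.mem_univ, true_and] at hi hj
      obtain ⟨x, rfl⟩ := hi
      obtain ⟨y, rfl⟩ := hj
      have hij' : 2 * x.val + ε < 2 * y.val + ε := hij
      have := x.2
      have := y.2
      change 2 * x.val + ε + 2 ≤ 2 * y.val + ε ∧ (2 * y.val + ε) - (2 * x.val + ε) ≤ 2 * k - 2
      omega
    refine ⟨E.map e'.toEmbedding, ?_, her_stable _ _ e' E hE, by simp [E]⟩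
    intro i hi
    rw [Finset.mem_map] at hi
    obtain ⟨j, hj, rfl⟩ := hi
    simp only [E, Finset.mem_map, Finset.mem_univ, true_and] at hj
    obtain ⟨x, rfl⟩ := hj
    rw [mem_fib]
    have h1 := hg0 (2 * x.val + ε) (by have := x.2; omega)
    have h2 : (2 : ZMod 2) = 0 := zmod_two_zero
    rw [← hεg]
    push_cast at h1
    rw [h2, zero_mul, zero_add] at h1
    exact h1
  have main : ∃ S : ZMod 2 → Finset (Fin n), ∃ d,
      (∀ g, (Stable n 2 (S g) ∧ (S g).card = k) ∧ c (S g) = d) ∧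
      ∀ g h, g ≠ h → Disjoint (S g) (S h) := by
    by_contra hno
    refine hno (tucker (p := 2) (fun A : Finset (Fin n) => Stable n 2 A ∧ A.card = k) c
      (2 * k - 1) 1 t (by omega) (fun A hA => hc A hA.1 hA.2) ?_)
    intro X hX
    by_contra hlow
    have hz : ∀ g, ∃ A, A ⊆ fib X g ∧ (Stable n 2 A ∧ A.card = k) ∧ c A = 0 := by
      intro g
      obtain ⟨A, h1, h2⟩ := key X hX g
      refine ⟨A, h1, h2, ?_⟩
      by_contra h3
      exact hlow ⟨A, g, h1, h2, by omega⟩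
    choose S hS1 hS2 hS3 using hz
    refine hno ⟨S, 0, fun g => ⟨hS2 g, hS3 g⟩, ?_⟩
    intro g h hgh
    rw [Finset.disjoint_left]
    intro i hi hi'
    have e1 := hS1 g hi
    have e2 := hS1 h hi'
    rw [mem_fib] at e1 e2
    rw [e1] at e2
    exact hgh (by simpa using e2)
  obtain ⟨S, d, hS, hd⟩ := main
  let e : Fin 2 ≃ ZMod 2 := (Fintype.equivFinOfCardEq (ZMod.card 2)).symm
  exact hcon ⟨fun x => S (e x), d, fun x => ⟨(hS _).1.1, (hS _).1.2, (hS _).2⟩,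
    fun x y hxy => hd _ _ (fun h => hxy (e.injective h))⟩

lemma good_even (r : ℕ) (hr : 2 ≤ r) (he : Even r) : Good (fun n A => Stable n 2 A) r := by
  obtain ⟨s, hs⟩ := he
  have : r = 2 * s := by omega
  rw [this]
  exact good_comp her_stable (by omega) (by omega) good_two (good_true s (by omega))

/-- In the non-congruent case, pass to `n - 1` and almost stable sets. -/
lemma lower {n k r t : ℕ} (hk : 1 ≤ k) (hr : 2 ≤ r) (hnrk : r * k ≤ n)
    (h : ¬ n ≡ k [MOD r - 1] ∨ Even r) (ht : 1 ≤ t) (c : Finset (Fin n) → ℕ)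
    (hc : IsKneserColoring n r t (stableSets n 2 k) c) : n ≤ r * (k - 1) + t * (r - 1) := by
  classical
  by_contra hlt
  have hst : ∀ A, A ∈ stableSets n 2 k ↔ A.card = k ∧ Stable n 2 A := by
    intro A; simp [stableSets]
  -- it suffices to find a monochromatic family
  have fin : ∀ (S : Fin r → Finset (Fin n)) (d : ℕ),
      (∀ g, Stable n 2 (S g) ∧ (S g).card = k ∧ c (S g) = d) →
      (∀ g h, g ≠ h → Disjoint (S g) (S h)) → False := by
    intro S d h1 h2
    have hinj : Function.Injective S := by
      intro g g' hgg
      by_contra hne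
      have h3 := h2 g g' hne
      rw [← hgg, disjoint_self, Finset.bot_eq_empty] at h3
      have := (h1 g).2.1
      rw [h3, Finset.card_empty] at this
      omega
    refine hc.2 (univ.image S) ?_ ?_ ?_ ⟨d, ?_⟩
    · intro A hA
      obtain ⟨g, -, rfl⟩ := Finset.mem_image.1 hA
      exact (hst _).2 ⟨(h1 g).2.1, (h1 g).1⟩
    · rw [Finset.card_image_of_injective _ hinj, Finset.card_univ, Fintype.card_fin]
    · intro A hA B hB hAB
      rw [Finset.mem_coe] at hA hB
      obtain ⟨g, -, rfl⟩ := Finset.mem_image.1 hA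
      obtain ⟨g', -, rfl⟩ := Finset.mem_image.1 hB
      exact h2 g g' (fun h => hAB (by rw [h]))
    · intro A hA
      obtain ⟨g, -, rfl⟩ := Finset.mem_image.1 hA
      exact (h1 g).2.2
  have hcol : ∀ A, Stable n 2 A → A.card = k → 1 ≤ c A ∧ c A ≤ t := by
    intro A hA hAk
    exact Finset.mem_Icc.1 (hc.1 A ((hst A).2 ⟨hAk, hA⟩))
  have hsub : ∀ A B : Finset (Fin n), Stable n 2 A → A.card = k → Stable n 2 B → B.card = k →
      c A - 1 = c B - 1 → c A = c B := by
    intro A B h1 h2 h3 h4 h5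
    have := hcol A h1 h2
    have := hcol B h3 h4
    omega
  have hr0 : 0 < r := by omega
  by_cases he : Even r
  · obtain ⟨S, d, hS, hd⟩ := good_even r hr he k t n hk ht (by omega) (fun A => c A - 1)
      (fun A hA hAk => by have := hcol A hA hAk; omega)
    refine fin S (d + 1) (fun g => ⟨(hS g).1, (hS g).2.1, ?_⟩) hd
    have h1 := hcol _ (hS g).1 (hS g).2.1
    have h2 := (hS g).2.2
    omega
  · have hmod : ¬ n ≡ k [MOD r - 1] := by tauto
    have hne : n ≠ r * (k - 1) + t * (r - 1) + 1 := by
      intro hn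
      apply hmod
      have : n = k + (r - 1) * ((k - 1) + t) := by
        obtain ⟨k, rfl⟩ : ∃ k', k = k' + 1 := ⟨k - 1, by omega⟩
        obtain ⟨s, rfl⟩ : ∃ s, r = s + 1 := ⟨r - 1, by omega⟩
        simp only [Nat.add_sub_cancel] at *
        rw [hn]; ring
      rw [this]
      simp [Nat.ModEq]
    obtain ⟨m, rfl⟩ : ∃ m, n = m + 1 := ⟨n - 1, by omega⟩
    have hstab : ∀ A : Finset (Fin m), AS m A →
        Stable (m+1) 2 (A.map Fin.castSuccEmb) := by
      intro A hA
      rw [stable_iff]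
      intro i hi j hj hij
      rw [Finset.mem_map] at hi hj
      obtain ⟨i, hi, rfl⟩ := hi
      obtain ⟨j, hj, rfl⟩ := hj
      rw [Fin.lt_def] at hij
      simp only [Fin.castSuccEmb_apply, Fin.val_castSucc] at hij ⊢
      have h1 := hA i hi j hj (Fin.lt_def.2 hij)
      have := j.2
      omega
    obtain ⟨S, d, hS, hd⟩ := good_AS r hr k t m hk ht (by omega)
      (fun A => c (A.map Fin.castSuccEmb) - 1)
      (fun A hA hAk => by
        have := hcol _ (hstab A hA) (by simpa using hAk)
        omega)
    refine fin (fun g => (S g).map Fin.castSuccEmb) (d + 1)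
      (fun g => ⟨hstab _ (hS g).1, by simpa using (hS g).2.1, ?_⟩) ?_
    · have h1 := hcol _ (hstab _ (hS g).1) (by simpa using (hS g).2.1)
      have h2 := (hS g).2.2
      omega
    · intro g h' hgh
      rw [Finset.disjoint_map]
      exact hd g h' hgh

/-- The standard coloring. -/
lemma upper {n k r t : ℕ} (hk : 1 ≤ k) (hr : 2 ≤ r) (ht : 1 ≤ t)
    (hn : n ≤ r * (k - 1) + t * (r - 1)) :
    ∃ c, IsKneserColoring n r t (stableSets n 2 k) c := by
  classical
  have hst : ∀ A, A ∈ stableSets n 2 k → A.card = k := by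
    intro A hA
    have : A.card = k ∧ Stable n 2 A := by simpa [stableSets] using hA
    exact this.1
  let mn : Finset (Fin n) → ℕ := fun A => if h : A.Nonempty then (A.min' h).val else 0
  have hmn : ∀ A, A.Nonempty → ∃ i ∈ A, i.val = mn A ∧ ∀ j ∈ A, mn A ≤ j.val := by
    intro A hA
    refine ⟨A.min' hA, Finset.min'_mem _ _, by simp [mn, hA], ?_⟩
    intro j hj
    simp only [mn, hA, dif_pos]
    exact Fin.le_def.1 (Finset.min'_le _ _ hj)
  refine ⟨fun A => min t (1 + mn A / (r - 1)), ?_, ?_⟩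
  · intro A _
    rw [Finset.mem_Icc]
    exact ⟨le_min ht (Nat.le_add_right _ _), min_le_left _ _⟩
  · rintro E hE hEr hdis ⟨i, hi⟩
    have hne : ∀ A ∈ E, A.Nonempty := by
      intro A hA
      rw [← Finset.card_pos, hst A (hE hA)]; omega
    have hinj : Set.InjOn mn E := by
      intro A hA B hB hAB
      by_contra hne'
      obtain ⟨x, hx, hx1, -⟩ := hmn A (hne A hA)
      obtain ⟨y, hy, hy1, -⟩ := hmn B (hne B hB)
      have hxy : x = y := Fin.ext (by rw [hx1, hy1, hAB])
      subst hxy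
      exact Finset.disjoint_left.1 (hdis hA hB hne') hx hy
    by_cases hit : i < t
    · -- all minima lie in an interval with `r - 1` elements
      have hsub : E.image mn ⊆ Finset.Ico ((i - 1) * (r - 1)) ((i - 1) * (r - 1) + (r - 1)) := by
        intro x hx
        obtain ⟨A, hA, rfl⟩ := Finset.mem_image.1 hx
        have h1 := hi A hA
        simp only at h1
        have h2 : mn A / (r - 1) = i - 1 := by
          generalize mn A / (r - 1) = q at h1 ⊢
          omega
        rw [Finset.mem_Ico]
        have h3 := Nat.div_add_mod (mn A) (r - 1)
        have h4 := Nat.mod_lt (mn A) (show 0 < r - 1 by omega)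
        rw [h2, mul_comm] at h3
        omega
      have := Finset.card_le_card hsub
      rw [Finset.card_image_of_injOn hinj, hEr, Nat.card_Ico] at this
      omega
    · -- all sets lie in a small final segment
      have hsub : E.biUnion id ⊆ (univ : Finset (Fin n)).filter fun x => (t - 1) * (r - 1) ≤ x.val := by
        intro x hx
        obtain ⟨A, hA, hxA⟩ := Finset.mem_biUnion.1 hx
        rw [Finset.mem_filter]
        refine ⟨mem_univ _, ?_⟩
        have h1 := hi A hA
        simp only at h1
        have h2 : t - 1 ≤ mn A / (r - 1) := by
          generalize mn A / (r - 1) = q at h1 ⊢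
          omega
        rw [Nat.le_div_iff_mul_le (by omega)] at h2
        obtain ⟨-, -, -, h3⟩ := hmn A (hne A hA)
        exact h2.trans (h3 x hxA)
      have h1 : (E.biUnion id).card = r * k := by
        rw [Finset.card_biUnion]
        · simp only [id]
          rw [Finset.sum_congr rfl (fun A hA => hst A (hE hA)), Finset.sum_const, hEr, smul_eq_mul]
        · intro A hA B hB hAB
          exact hdis hA hB hAB
      have h2 : ((univ : Finset (Fin n)).filter fun x => (t - 1) * (r - 1) ≤ x.val).card
          ≤ n - (t - 1) * (r - 1) := by
        rw [← Nat.card_Ico ((t - 1) * (r - 1)) n, ← Finset.card_map Fin.valEmbedding]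
        apply Finset.card_le_card
        intro x hx
        rw [Finset.mem_map] at hx
        obtain ⟨y, hy, rfl⟩ := hx
        rw [Finset.mem_filter] at hy
        rw [Finset.mem_Ico]
        exact ⟨hy.2, y.2⟩
      have h3 := Finset.card_le_card hsub
      rw [h1] at h3
      obtain ⟨k, rfl⟩ : ∃ k', k = k' + 1 := ⟨k - 1, by omega⟩
      obtain ⟨s, rfl⟩ : ∃ s, r = s + 1 := ⟨r - 1, by omega⟩
      obtain ⟨t, rfl⟩ : ∃ t', t = t' + 1 := ⟨t - 1, by omega⟩
      simp only [Nat.add_sub_cancel] at *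
      have h4 := h3.trans h2
      have e1 : (t + 1) * s = t * s + s := by ring
      have e2 : (s + 1) * (k + 1) = (s + 1) * k + s + 1 := by ring
      omega

end KG

theorem stmt16 (n k r : ℕ) (hk : 1 ≤ k) (hr : 2 ≤ r) (hnrk : r * k ≤ n)
    (h : ¬ n ≡ k [MOD r - 1] ∨ Even r) :
    (kneserChrom n r (stableSets n 2 k) : ℤ) =
      ⌈((n : ℚ) - (r : ℚ) * ((k : ℚ) - 1)) / ((r : ℚ) - 1)⌉ := by
  set t := kneserChrom n r (stableSets n 2 k) with ht
  have hne : ({t | ∃ c, IsKneserColoring n r t (stableSets n 2 k) c} : Set ℕ).Nonempty :=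
    ⟨n + 1, KG.upper hk hr (by omega) (by
      have : (n + 1) * 1 ≤ (n + 1) * (r - 1) := Nat.mul_le_mul_left _ (by omega)
      omega)⟩
  obtain ⟨c, hc⟩ : ∃ c, IsKneserColoring n r t (stableSets n 2 k) c := Nat.sInf_mem hne
  have hrk : r * k = r * (k - 1) + r := by
    obtain ⟨k, rfl⟩ : ∃ k', k = k' + 1 := ⟨k - 1, by omega⟩
    simp; ring
  have ht1 : 1 ≤ t := by
    by_contra h0
    have h0' : t = 0 := by omega
    have hc' : IsKneserColoring n r 1 (stableSets n 2 k) c := by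
      refine ⟨fun A hA => ?_, hc.2⟩
      have := hc.1 A hA
      rw [Finset.mem_Icc] at *
      omega
    have := KG.lower hk hr hnrk h le_rfl c hc'
    omega
  have hlow := KG.lower hk hr hnrk h ht1 c hc
  have hup : r * (k - 1) + (t - 1) * (r - 1) < n := by
    by_contra hcon
    by_cases h2 : 2 ≤ t
    · have h3 := KG.upper (t := t - 1) hk hr (by omega) (not_lt.1 hcon)
      have h4 : t ≤ t - 1 := Nat.sInf_le h3
      omega
    · have : t - 1 = 0 := by omega
      rw [this] at hcon
      omega
  symm
  rw [Int.ceil_eq_iff]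
  have hr1 : (0 : ℚ) < (r : ℚ) - 1 := by
    have : (2 : ℚ) ≤ r := by exact_mod_cast hr
    linarith
  rw [lt_div_iff₀ hr1, div_le_iff₀ hr1]
  obtain ⟨k, rfl⟩ : ∃ k', k = k' + 1 := ⟨k - 1, by omega⟩
  obtain ⟨s, rfl⟩ : ∃ s, r = s + 1 := ⟨r - 1, by omega⟩
  generalize t = u at *
  obtain ⟨u, rfl⟩ : ∃ u', u = u' + 1 := ⟨u - 1, by omega⟩
  simp only [Nat.add_sub_cancel] at hlow hup
  have e1 : (n : ℚ) ≤ (s + 1) * k + (u + 1) * s := by exact_mod_cast hlow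
  have e2 : ((s : ℚ) + 1) * k + u * s < n := by exact_mod_cast hup
  push_cast
  constructor <;> nlinarith
end

section
/- (Meunier) Let k, n, r be positive integers with r ≥ 2 and n ≥ rk. Then χ(KG^r(n,k)^∼_{2-stab}) = ⌈(n − r(k−1)) / (r − 1)⌉. -/
open Finset

/-- A subset `A` of `[n]` (identified with `Fin n`) is almost `s`-stable: any two
distinct elements `i, j ∈ A` satisfy `|i - j| ≥ s`. -/
def AlmostStable (n s : ℕ) (A : Finset (Fin n)) : Prop :=
  ∀ i ∈ A, ∀ j ∈ A, i ≠ j → s ≤ max i.val j.val - min i.val j.val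

open Classical in
/-- The vertex set of the almost `s`-stable Kneser hypergraph `KG^r(n,k)^∼_{s-stab}`:
all almost `s`-stable `k`-element subsets of `[n]`. -/
noncomputable def almostStableSets (n s k : ℕ) : Finset (Finset (Fin n)) :=
  Finset.univ.filter fun A => A.card = k ∧ AlmostStable n s A

set_option linter.unusedSectionVars false

namespace MeunierAux

/-- The alternating operators `g - 1` and `∑ g^j`. -/
noncomputable def dop {M : Type*} [AddCommGroup M] (p k : ℕ) (E : Module.End ℤ M) :
    Module.End ℤ M :=
  if Odd k then E - 1 else ∑ j ∈ range p, E ^ j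

lemma pow_comm_map {M M' : Type*} [AddCommGroup M] [AddCommGroup M'] (E : Module.End ℤ M)
    (E' : Module.End ℤ M') (L : M →ₗ[ℤ] M') (h : ∀ c, L (E c) = E' (L c)) (j : ℕ) (c : M) :
    L ((E ^ j) c) = (E' ^ j) (L c) := by
  induction j generalizing c with
  | zero => simp
  | succ j ih => rw [pow_succ, pow_succ, Module.End.mul_apply, Module.End.mul_apply, ih, h]

lemma dop_comm {M M' : Type*} [AddCommGroup M] [AddCommGroup M'] (p k : ℕ) (E : Module.End ℤ M)
    (E' : Module.End ℤ M') (L : M →ₗ[ℤ] M') (h : ∀ c, L (E c) = E' (L c)) (c : M) :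
    L (dop p k E c) = dop p k E' (L c) := by
  unfold dop
  split_ifs
  · simp [h]
  · simp only [LinearMap.sum_apply, map_sum, pow_comm_map E E' L h]

lemma dop_dop {M : Type*} [AddCommGroup M] (p k : ℕ) (E : Module.End ℤ M) (hE : E ^ p = 1)
    (c : M) : dop p (k + 1) E (dop p k E c) = 0 := by
  have h1 : (E - 1) * ∑ j ∈ range p, E ^ j = 0 := by rw [mul_geom_sum, hE, sub_self]
  have h2 : (∑ j ∈ range p, E ^ j) * (E - 1) = 0 := by rw [geom_sum_mul, hE, sub_self]
  rw [← Module.End.mul_apply]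
  unfold dop
  by_cases hk : Odd k
  · have : ¬ Odd (k + 1) := by
      rw [Nat.not_odd_iff_even]; exact hk.add_one
    rw [if_pos hk, if_neg this, h2]; rfl
  · have : Odd (k + 1) := by
      rw [Nat.not_odd_iff_even] at hk; exact hk.add_one
    rw [if_neg hk, if_pos this, h1]; rfl

section exact
variable {ι : Type*} (p : ℕ) [Fact p.Prime] (f : ι → ι) (S : ι → ZMod p) (D : Set ι)

/-- Push-forward operator. -/
noncomputable abbrev psh (f : ι → ι) : Module.End ℤ (ι →₀ ℤ) := Finsupp.lmapDomain ℤ ℤ f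

lemma psh_pow_single (j : ℕ) (x : ι) (a : ℤ) :
    ((psh f) ^ j) (Finsupp.single x a) = Finsupp.single (f^[j] x) a := by
  induction j generalizing x with
  | zero => simp
  | succ j ih =>
    rw [pow_succ, Module.End.mul_apply, Finsupp.lmapDomain_apply, Finsupp.mapDomain_single, ih]
    rfl

noncomputable def opB : Module.End ℤ (ι →₀ ℤ) :=
  Finsupp.linearCombination ℤ fun x => - ∑ j ∈ range (- S x).val, Finsupp.single (f^[j] x) (1 : ℤ)

open Classical in
noncomputable def opP : Module.End ℤ (ι →₀ ℤ) :=
  Finsupp.linearCombination ℤ fun x => if S x = 0 then Finsupp.single x (1 : ℤ) else 0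

lemma psh_mem (hD : ∀ x ∈ D, f x ∈ D) {c : ι →₀ ℤ} (hc : c ∈ Finsupp.supported ℤ ℤ D) :
    psh f c ∈ Finsupp.supported ℤ ℤ D := by
  rw [Finsupp.supported_eq_span_single] at hc ⊢
  induction hc using Submodule.span_induction with
  | mem x h =>
    obtain ⟨y, hy, rfl⟩ := h
    simp only [Finsupp.lmapDomain_apply, Finsupp.mapDomain_single]
    exact Submodule.subset_span ⟨_, hD y hy, rfl⟩
  | zero => simp
  | add x y _ _ hx hy => rw [map_add]; exact add_mem hx hy
  | smul a x _ hx => rw [map_smul]; exact Submodule.smul_mem _ _ hx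

lemma iter_mem (hD : ∀ x ∈ D, f x ∈ D) (j : ℕ) {x : ι} (hx : x ∈ D) : f^[j] x ∈ D := by
  induction j with
  | zero => simpa
  | succ j ih => rw [Function.iterate_succ_apply']; exact hD _ ih

lemma dop_mem (hD : ∀ x ∈ D, f x ∈ D) (k : ℕ) {c : ι →₀ ℤ}
    (hc : c ∈ Finsupp.supported ℤ ℤ D) :
    dop p k (psh f) c ∈ Finsupp.supported ℤ ℤ D := by
  unfold dop
  split_ifs
  · rw [LinearMap.sub_apply]
    exact sub_mem (psh_mem f D hD hc) hc
  · rw [LinearMap.sum_apply]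
    refine sum_mem fun j hj => ?_
    clear hj
    induction j with
    | zero => simpa
    | succ j ih => rw [pow_succ', Module.End.mul_apply]; exact psh_mem f D hD ih

lemma lc_mem (v : ι → ι →₀ ℤ) (hv : ∀ x ∈ D, v x ∈ Finsupp.supported ℤ ℤ D) {c : ι →₀ ℤ}
    (hc : c ∈ Finsupp.supported ℤ ℤ D) :
    Finsupp.linearCombination ℤ v c ∈ Finsupp.supported ℤ ℤ D := by
  rw [Finsupp.linearCombination_apply]
  refine sum_mem fun x hx => Submodule.smul_mem _ _ (hv x ?_)
  exact (Finsupp.mem_supported _ _).1 hc hx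

lemma opB_mem (hD : ∀ x ∈ D, f x ∈ D) {c : ι →₀ ℤ}
    (hc : c ∈ Finsupp.supported ℤ ℤ D) :
    opB p f S c ∈ Finsupp.supported ℤ ℤ D := by
  refine lc_mem D _ (fun x hx => ?_) hc
  refine neg_mem (sum_mem fun j _ => ?_)
  exact Finsupp.single_mem_supported _ _ (iter_mem f D hD j hx)

lemma opP_mem {c : ι →₀ ℤ} (hc : c ∈ Finsupp.supported ℤ ℤ D) :
    opP p S c ∈ Finsupp.supported ℤ ℤ D := by
  refine lc_mem D _ (fun x hx => ?_) hc
  split_ifs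
  · exact Finsupp.single_mem_supported _ _ hx
  · exact zero_mem _

lemma S_iter (hD' : ∀ x, x ∉ D → f x ∉ D) (hS : ∀ x, x ∉ D → S (f x) = S x + 1)
    (j : ℕ) (x : ι) (hx : x ∉ D) : S (f^[j] x) = S x + j := by
  induction j generalizing x with
  | zero => simp
  | succ j ih =>
    rw [Function.iterate_succ_apply, ih _ (hD' x hx), hS x hx]
    push_cast; ring

lemma exact_even (hD : ∀ x ∈ D, f x ∈ D) (hD' : ∀ x, x ∉ D → f x ∉ D)
    (hS : ∀ x, x ∉ D → S (f x) = S x + 1) (c : ι →₀ ℤ) :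
    c - dop p 1 (psh f) (opB p f S c) - opP p S (dop p 0 (psh f) c) ∈
      Finsupp.supported ℤ ℤ D := by
  induction c using Finsupp.induction_linear with
  | zero => simp
  | add a b ha hb =>
    have := add_mem ha hb
    convert this using 1
    simp only [map_add]; abel
  | single x a =>
    by_cases hx : x ∈ D
    · have h0 := Finsupp.single_mem_supported ℤ a hx
      exact sub_mem (sub_mem h0 (dop_mem p f D hD 1 (opB_mem p f S D hD h0)))
        (opP_mem p S D (dop_mem p f D hD 0 h0))
    · convert zero_mem (Finsupp.supported ℤ ℤ D) using 1
      have e1 : (Finsupp.single x a : ι →₀ ℤ) = a • Finsupp.single x 1 := by simp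
      rw [e1]
      simp only [map_smul]
      rw [← smul_sub, ← smul_sub]
      convert smul_zero a
      set m := (- S x).val with hm
      have hBx : opB p f S (Finsupp.single x 1) =
          - ∑ j ∈ range m, ((psh f) ^ j) (Finsupp.single x (1 : ℤ)) := by
        simp [opB, psh_pow_single, hm]
      have hT : dop p 1 (psh f) (opB p f S (Finsupp.single x 1)) =
          Finsupp.single x 1 - Finsupp.single (f^[m] x) 1 := by
        rw [hBx, map_neg, ← LinearMap.sum_apply]
        simp only [dop, odd_one, if_true]
        rw [← Module.End.mul_apply, mul_geom_sum, LinearMap.sub_apply, psh_pow_single]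
        simp
      have hP : opP p S (dop p 0 (psh f) (Finsupp.single x 1)) =
          Finsupp.single (f^[m] x) 1 := by
        simp only [dop, Nat.not_odd_zero, if_false, LinearMap.sum_apply, map_sum, psh_pow_single]
        rw [Finset.sum_eq_single m]
        · simp only [opP, Finsupp.linearCombination_single, one_smul]
          rw [if_pos]
          rw [S_iter p f S D hD' hS _ _ hx]
          simp [hm]
        · intro j hj hjm
          simp only [opP, Finsupp.linearCombination_single, one_smul]
          rw [if_neg]
          rw [S_iter p f S D hD' hS _ _ hx]
          intro h
          apply hjm
          have : (j : ZMod p) = - S x := by linear_combination h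
          rw [hm, ← this, ZMod.val_natCast, Nat.mod_eq_of_lt (Finset.mem_range.1 hj)]
        · intro h
          exact absurd (Finset.mem_range.2 (ZMod.val_lt _)) h
      rw [hT, hP]; abel

lemma exact_odd (hD : ∀ x ∈ D, f x ∈ D)
    (hS : ∀ x, x ∉ D → S (f x) = S x + 1) (c : ι →₀ ℤ) :
    c - dop p 0 (psh f) (opP p S c) - opB p f S (dop p 1 (psh f) c) ∈
      Finsupp.supported ℤ ℤ D := by
  induction c using Finsupp.induction_linear with
  | zero => simp
  | add a b ha hb =>
    have := add_mem ha hb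
    convert this using 1
    simp only [map_add]; abel
  | single x a =>
    by_cases hx : x ∈ D
    · have h0 := Finsupp.single_mem_supported ℤ a hx
      exact sub_mem (sub_mem h0 (dop_mem p f D hD 0 (opP_mem p S D h0)))
        (opB_mem p f S D hD (dop_mem p f D hD 1 h0))
    · convert zero_mem (Finsupp.supported ℤ ℤ D) using 1
      have e1 : (Finsupp.single x a : ι →₀ ℤ) = a • Finsupp.single x 1 := by simp
      rw [e1]
      simp only [map_smul]
      rw [← smul_sub, ← smul_sub]
      convert smul_zero a
      have hp : 1 < p := (Fact.out : p.Prime).one_lt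
      have hT : opB p f S (dop p 1 (psh f) (Finsupp.single x 1)) =
          - (∑ j ∈ range (- S x - 1).val, Finsupp.single (f^[j+1] x) (1 : ℤ)) +
           ∑ j ∈ range (- S x).val, Finsupp.single (f^[j] x) (1 : ℤ) := by
        simp only [dop, odd_one, if_true, LinearMap.sub_apply, Finsupp.lmapDomain_apply,
          Finsupp.mapDomain_single, Module.End.one_apply, map_sub, opB,
          Finsupp.linearCombination_single, one_smul, hS x hx]
        rw [sub_neg_eq_add]
        congr 4
        ring_nf
      rw [hT]
      have hvv : (- S x).val = ((- S x - 1).val + 1) % p := by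
        have h1 : - S x = (- S x - 1) + 1 := by ring
        conv_lhs => rw [h1]
        have : Fact (1 < p) := ⟨hp⟩
        rw [ZMod.val_add, ZMod.val_one]
      have hlt := ZMod.val_lt (- S x - 1)
      by_cases h0 : S x = 0
      · have hv : (- S x - 1).val + 1 = p := by
          have h2 : (- S x).val = 0 := by simp [h0]
          by_contra hne
          rw [Nat.mod_eq_of_lt (by omega)] at hvv
          omega
        have : opP p S (Finsupp.single x 1) = Finsupp.single x 1 := by
          simp [opP, h0]
        rw [this]
        simp only [dop, Nat.not_odd_zero, if_false, LinearMap.sum_apply, psh_pow_single]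
        have h3 : ∑ j ∈ range p, Finsupp.single (f^[j] x) (1 : ℤ) =
            ∑ j ∈ range ((- S x - 1).val + 1), Finsupp.single (f^[j] x) (1 : ℤ) := by
          congr 2; exact hv.symm
        rw [h3, Finset.sum_range_succ', h0]
        simp
      · have : opP p S (Finsupp.single x 1) = 0 := by
          simp [opP, h0]
        rw [this]
        have hv : (- S x).val = (- S x - 1).val + 1 := by
          have h2 : (- S x).val ≠ 0 := by
            rw [Ne, ZMod.val_eq_zero]; simpa using h0
          by_cases hne : (- S x - 1).val + 1 = p
          · rw [hne, Nat.mod_self] at hvv; exact absurd hvv h2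
          · rw [Nat.mod_eq_of_lt (by omega)] at hvv
            exact hvv
        rw [hv, Finset.sum_range_succ']
        simp

end exact
end MeunierAux

namespace MeunierAux

section chains
variable {Q : Type*}

/-- Prepend a letter. -/
noncomputable def consM (a : Q) : (List Q →₀ ℤ) →ₗ[ℤ] (List Q →₀ ℤ) :=
  Finsupp.lmapDomain ℤ ℤ (List.cons a)

@[simp] lemma consM_single (a : Q) (l : List Q) (z : ℤ) :
    consM a (Finsupp.single l z) = Finsupp.single (a :: l) z := by
  simp [consM]

noncomputable def bdL : List Q → (List Q →₀ ℤ)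
  | [] => 0
  | a :: l => Finsupp.single l 1 - consM a (bdL l)

noncomputable def bd : (List Q →₀ ℤ) →ₗ[ℤ] (List Q →₀ ℤ) := Finsupp.linearCombination ℤ bdL

@[simp] lemma bd_single (l : List Q) : bd (Finsupp.single l 1) = bdL l := by simp [bd]

/-- Two linear maps agree if they agree on basis elements. -/
lemma ext_basis {ι M : Type*} [AddCommGroup M] (L L' : (ι →₀ ℤ) →ₗ[ℤ] M)
    (h : ∀ x, L (Finsupp.single x 1) = L' (Finsupp.single x 1)) (c : ι →₀ ℤ) : L c = L' c := by
  have : L = L' := by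
    ext x; simpa using h x
  rw [this]

lemma bd_consM (a : Q) (c : List Q →₀ ℤ) : bd (consM a c) = c - consM a (bd c) := by
  refine ext_basis (bd ∘ₗ consM a) (LinearMap.id - consM a ∘ₗ bd) (fun x => ?_) c
  simp [bdL]

lemma bd_bdL (l : List Q) : bd (bdL l) = 0 := by
  induction l with
  | nil => simp [bdL]
  | cons a l ih => simp [bdL, bd_consM, ih]

lemma bd_bd (c : List Q →₀ ℤ) : bd (bd c) = 0 := by
  refine ext_basis (bd ∘ₗ bd) 0 (fun x => ?_) c
  simp [bd_bdL]

noncomputable abbrev act (f : Q → Q) : Module.End ℤ (List Q →₀ ℤ) := psh (List.map f)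

lemma act_consM (f : Q → Q) (a : Q) (c : List Q →₀ ℤ) :
    act f (consM a c) = consM (f a) (act f c) := by
  refine ext_basis (act f ∘ₗ consM a) (consM (f a) ∘ₗ act f) (fun x => ?_) c
  simp

lemma bdL_act (f : Q → Q) (l : List Q) : bdL (l.map f) = act f (bdL l) := by
  induction l with
  | nil => simp [bdL]
  | cons a l ih => 
    rw [List.map_cons, bdL, bdL, ih, map_sub, act_consM]
    simp

lemma bd_act (f : Q → Q) (c : List Q →₀ ℤ) : bd (act f c) = act f (bd c) := by
  refine ext_basis (bd ∘ₗ act f) (act f ∘ₗ bd) (fun x => ?_) c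
  simpa using bdL_act f x

lemma map_iter (f : Q → Q) (j : ℕ) (l : List Q) : (List.map f)^[j] l = l.map (f^[j]) := by
  induction j generalizing l with
  | zero => simp
  | succ j ih => rw [Function.iterate_succ_apply, ih]; simp

lemma act_pow (f : Q → Q) (p : ℕ) (hf : ∀ a, f^[p] a = a) : (act f) ^ p = 1 := by
  refine LinearMap.ext fun c => ext_basis _ _ (fun x => ?_) c
  rw [psh_pow_single, map_iter]
  have : f^[p] = id := funext hf
  simp [this]

/-- Degenerate lists. -/
def NC : Set (List Q) := {l | ¬ l.IsChain (· ≠ ·)}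

def Dg : Set (List Q) := {l | l = [] ∨ ¬ l.IsChain (· ≠ ·)}

lemma consM_mem (a : Q) (D D' : Set (List Q)) (h : ∀ l ∈ D, a :: l ∈ D') {c : List Q →₀ ℤ}
    (hc : c ∈ Finsupp.supported ℤ ℤ D) : consM a c ∈ Finsupp.supported ℤ ℤ D' := by
  rw [Finsupp.supported_eq_span_single] at hc ⊢
  induction hc using Submodule.span_induction with
  | mem x h' =>
    obtain ⟨y, hy, rfl⟩ := h'
    simp only [consM_single]
    exact Submodule.subset_span ⟨_, h y hy, rfl⟩
  | zero => simp
  | add x y _ _ hx hy => rw [map_add]; exact add_mem hx hy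
  | smul a x _ hx => rw [map_smul]; exact Submodule.smul_mem _ _ hx

lemma bdL_NC (l : List Q) (hl : l ∈ NC) : bdL l ∈ Finsupp.supported ℤ ℤ (NC : Set (List Q)) := by
  induction l with
  | nil => simp [NC] at hl
  | cons a l ih =>
    cases l with
    | nil => simp [NC] at hl
    | cons b l =>
      by_cases hab : a = b
      · subst hab
        have e : bdL (a :: a :: l) = consM a (consM a (bdL l)) := by
          simp [bdL]
        rw [e]
        have h1 : bdL l ∈ Finsupp.supported ℤ ℤ (Set.univ : Set (List Q)) := by simp
        refine consM_mem a {m | ∃ m', m = a :: m'} _ ?_ (consM_mem a Set.univ _ ?_ h1)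
        · rintro _ ⟨m, rfl⟩
          simp [NC]
        · intro m _
          exact ⟨m, rfl⟩
      · have hl' : b :: l ∈ NC := by
          simp only [NC, Set.mem_ofPred_eq, List.isChain_cons_cons] at hl ⊢
          tauto
        rw [bdL]
        refine sub_mem (Finsupp.single_mem_supported _ _ hl') (consM_mem a NC _ ?_ (ih hl'))
        intro m hm h
        exact hm h.of_cons

lemma bd_Dg {c : List Q →₀ ℤ} (hc : c ∈ Finsupp.supported ℤ ℤ (Dg : Set (List Q))) :
    bd c ∈ Finsupp.supported ℤ ℤ (Dg : Set (List Q)) := by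
  refine lc_mem Dg _ (fun x hx => ?_) hc
  rcases hx with rfl | hx
  · simp [bdL]
  · exact Finsupp.supported_mono (fun l hl => Or.inr hl) (bdL_NC x hx)

/-- Augmentation on lists of length one. -/
noncomputable def eps : (List Q →₀ ℤ) →ₗ[ℤ] ℤ :=
  Finsupp.linearCombination ℤ fun l => if l.length = 1 then (1 : ℤ) else 0

lemma eps_consM_cons (a b : Q) (c : List Q →₀ ℤ) : eps (consM a (consM b c)) = 0 := by
  refine ext_basis (eps ∘ₗ consM a ∘ₗ consM b) 0 (fun x => ?_) c
  simp [eps]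

lemma eps_bd (c : List Q →₀ ℤ) : eps (bd c) = 0 := by
  refine ext_basis (eps ∘ₗ bd) 0 (fun x => ?_) c
  rcases x with _ | ⟨a, _ | ⟨b, _ | ⟨d, l⟩⟩⟩
  · simp [bdL]
  · simp [bdL, eps]
  · simp [bdL, eps]
  · have h := eps_consM_cons a b (consM d (bdL l))
    simp only [LinearMap.comp_apply, bd_single, bdL, map_sub, consM_single, h]
    simp [eps]

lemma eps_act (f : Q → Q) (c : List Q →₀ ℤ) : eps (act f c) = eps c := by
  refine ext_basis (eps ∘ₗ act f) eps (fun x => ?_) c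
  simp [eps]

lemma eps_Dg {c : List Q →₀ ℤ} (hc : c ∈ Finsupp.supported ℤ ℤ (Dg : Set (List Q))) :
    eps c = 0 := by
  rw [eps, Finsupp.linearCombination_apply, Finsupp.sum]
  refine Finset.sum_eq_zero fun l hl => ?_
  have : l ∈ Dg := (Finsupp.mem_supported _ _).1 hc hl
  rw [if_neg, smul_zero]
  intro h1
  obtain ⟨a, rfl⟩ := List.length_eq_one_iff.1 h1
  simp [Dg] at this

end chains

section source
variable {Z : Type*}

noncomputable def sbdL : List (Option Z) → (List (Option Z) →₀ ℤ)
  | [] => 0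
  | none :: l => consM none (sbdL l)
  | some g :: l => Finsupp.single (none :: l) 1 - consM (some g) (sbdL l)

noncomputable def sbd : (List (Option Z) →₀ ℤ) →ₗ[ℤ] (List (Option Z) →₀ ℤ) :=
  Finsupp.linearCombination ℤ sbdL

@[simp] lemma sbd_single (l : List (Option Z)) : sbd (Finsupp.single l 1) = sbdL l := by
  simp [sbd]

lemma sbd_none (c : List (Option Z) →₀ ℤ) : sbd (consM none c) = consM none (sbd c) := by
  refine ext_basis (sbd ∘ₗ consM none) (consM none ∘ₗ sbd) (fun x => ?_) c
  simp [sbdL]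

lemma sbd_some (g : Z) (c : List (Option Z) →₀ ℤ) :
    sbd (consM (some g) c) = consM none c - consM (some g) (sbd c) := by
  refine ext_basis (sbd ∘ₗ consM (some g)) (consM none - consM (some g) ∘ₗ sbd) (fun x => ?_) c
  simp [sbdL]

lemma sbd_sbdL (l : List (Option Z)) : sbd (sbdL l) = 0 := by
  induction l with
  | nil => simp [sbdL]
  | cons a l ih => cases a <;> simp [sbdL, sbd_none, sbd_some, ih]

lemma sbdL_act (f : Z → Z) (l : List (Option Z)) :
    sbdL (l.map (Option.map f)) = act (Option.map f) (sbdL l) := by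
  induction l with
  | nil => simp [sbdL]
  | cons a l ih =>
    cases a with
    | none =>
      rw [List.map_cons, Option.map_none, sbdL, sbdL, ih, act_consM]; rfl
    | some g =>
      rw [List.map_cons, Option.map_some, sbdL, sbdL, ih, map_sub, act_consM]
      simp

lemma sbd_act (f : Z → Z) (c : List (Option Z) →₀ ℤ) :
    sbd (act (Option.map f) c) = act (Option.map f) (sbd c) := by
  refine ext_basis (sbd ∘ₗ act (Option.map f)) (act (Option.map f) ∘ₗ sbd) (fun x => ?_) c
  simpa using sbdL_act f x

/-- `Le y x`: `y` is obtained from `x` by erasing some signs. -/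
abbrev Le (y x : List (Option Z)) : Prop := List.Forall₂ (fun a b => a = none ∨ a = b) y x

lemma Le.refl' (x : List (Option Z)) : Le x x := by
  induction x with
  | nil => exact .nil
  | cons a l ih => exact .cons (Or.inr rfl) ih

lemma sbdL_supp (x : List (Option Z)) : sbdL x ∈ Finsupp.supported ℤ ℤ {y | Le y x} := by
  induction x with
  | nil => simp [sbdL]
  | cons a l ih =>
    cases a with
    | none => exact consM_mem _ _ _ (fun m hm => .cons (Or.inl rfl) hm) ih
    | some g =>
      refine sub_mem (Finsupp.single_mem_supported _ _ (.cons (Or.inl rfl) (Le.refl' l))) ?_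
      exact consM_mem _ _ _ (fun m hm => .cons (Or.inr rfl) hm) ih

/-- The zero sign vector. -/
def IsZ (x : List (Option Z)) : Prop := ∀ a ∈ x, a = none

lemma sbdL_isZ (x : List (Option Z)) (hx : IsZ x) : sbdL x = 0 := by
  induction x with
  | nil => rfl
  | cons a l ih =>
    have : a = none := hx a (by simp)
    subst this
    rw [sbdL, ih (fun b hb => hx b (by simp [hb])), map_zero]

end source

section main
variable (p : ℕ) [Fact p.Prime]

noncomputable abbrev sact : Module.End ℤ (List (Option (ZMod p)) →₀ ℤ) :=
  act (Option.map (· + 1))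

noncomputable def hh : ℕ → (List (Option (ZMod p)) →₀ ℤ)
  | 0 => Finsupp.single [] 1
  | 1 => Finsupp.single [some 0] 1
  | k + 2 => consM (some 0) (dop p (k + 1) (sact p) (hh (k + 1)))

lemma sact_pow : (sact p) ^ p = 1 := by
  apply act_pow
  intro a
  have h : ∀ (j : ℕ) (a : Option (ZMod p)),
      (Option.map (· + 1))^[j] a = Option.map (· + (j : ZMod p)) a := by
    intro j
    induction j with
    | zero => intro a; cases a <;> simp
    | succ j ih =>
      intro a
      rw [Function.iterate_succ_apply, ih]
      cases a <;> simp
      ring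
  rw [h]
  cases a <;> simp

lemma sact_none (c : List (Option (ZMod p)) →₀ ℤ) (k : ℕ) :
    dop p k (sact p) (consM none c) = consM none (dop p k (sact p) c) := by
  symm
  apply dop_comm
  intro c
  rw [act_consM]; rfl

lemma sbd_hh (k : ℕ) (hk : 1 ≤ k) :
    sbd (hh p (k + 1)) = consM none (dop p k (sact p) (hh p k)) := by
  obtain ⟨k, rfl⟩ : ∃ j, k = j + 1 := ⟨k - 1, by omega⟩
  induction k with
  | zero =>
    have e : hh p (0 + 1 + 1) = consM (some 0) (dop p (0 + 1) (sact p) (hh p (0 + 1))) := rfl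
    rw [e, sbd_some, dop_comm p _ (sact p) (sact p) sbd (sbd_act _)]
    have : dop p (0 + 1) (sact p) (sbd (hh p 1)) = 0 := by
      simp [hh, sbdL, dop]
    rw [this]; simp
  | succ k ih =>
    rw [hh, sbd_some, dop_comm p _ (sact p) (sact p) sbd (sbd_act _), ih (by omega), sact_none,
      dop_dop p _ _ (sact_pow p)]
    simp

lemma hh_supp (k : ℕ) : hh p k ∈ Finsupp.supported ℤ ℤ {x | x.length = k} := by
  match k with
  | 0 => exact Finsupp.single_mem_supported _ _ rfl
  | 1 => exact Finsupp.single_mem_supported _ _ rfl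
  | k + 2 =>
    refine consM_mem _ {x | x.length = k + 1} _ (fun l hl => by simpa using hl) ?_
    apply dop_mem p
    · intro x hx
      simpa using hx
    · exact hh_supp (k + 1)

variable {Q : Type*} (lam : List (Option (ZMod p)) → Q)

noncomputable def FF : ℕ → (List (Option (ZMod p)) →₀ ℤ) →ₗ[ℤ] (List Q →₀ ℤ)
  | 0 => Finsupp.linearCombination ℤ fun _ => Finsupp.single [] 1
  | k + 1 => Finsupp.linearCombination ℤ fun x => consM (lam x) (FF k (sbdL x))

lemma bd_FF (k : ℕ) (c) : bd (FF p lam (k + 1) c) = FF p lam k (sbd c) := by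
  induction k generalizing c with
  | zero =>
    refine ext_basis (bd ∘ₗ FF p lam 1) (FF p lam 0 ∘ₗ sbd) (fun x => ?_) c
    have h0 : ∀ c, bd (FF p lam 0 c) = 0 := by
      intro c
      refine ext_basis (bd ∘ₗ FF p lam 0) 0 (fun x => ?_) c
      simp [FF, bdL]
    have : FF p lam 1 (Finsupp.single x 1) = consM (lam x) (FF p lam 0 (sbdL x)) := by
      simp [FF]
    simp [this, bd_consM, h0]
  | succ k ih =>
    refine ext_basis (bd ∘ₗ FF p lam (k + 2)) (FF p lam (k + 1) ∘ₗ sbd) (fun x => ?_) c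
    have : FF p lam (k + 2) (Finsupp.single x 1) = consM (lam x) (FF p lam (k + 1) (sbdL x)) := by
      rw [FF]; simp
    simp [this, bd_consM, ih, sbd_sbdL]

variable {lam} {γ : Q → Q}

lemma FF_act (hlam : ∀ x, ¬ IsZ x → lam (x.map (Option.map (· + 1))) = γ (lam x)) (k : ℕ) (c) :
    FF p lam k (sact p c) = act γ (FF p lam k c) := by
  induction k generalizing c with
  | zero =>
    refine ext_basis (FF p lam 0 ∘ₗ sact p) (act γ ∘ₗ FF p lam 0) (fun x => ?_) c
    simp [FF]
  | succ k ih =>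
    refine ext_basis (FF p lam (k + 1) ∘ₗ sact p) (act γ ∘ₗ FF p lam (k + 1)) (fun x => ?_) c
    have h : ∀ x, FF p lam (k + 1) (Finsupp.single x 1) = consM (lam x) (FF p lam k (sbdL x)) := by
      intro x; rw [FF]; simp
    simp only [LinearMap.comp_apply, h]
    rw [act_consM, ← ih, ← sbdL_act, Finsupp.lmapDomain_apply, Finsupp.mapDomain_single, h]
    by_cases hx : IsZ x
    · rw [sbdL_act, sbdL_isZ x hx]; simp
    · rw [hlam x hx]

lemma FF_none (hlam : ∀ x, lam (none :: x) = lam x) (k : ℕ) (c) :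
    FF p lam k (consM none c) = FF p lam k c := by
  induction k generalizing c with
  | zero =>
    refine ext_basis (FF p lam 0 ∘ₗ consM none) (FF p lam 0) (fun x => ?_) c
    simp [FF]
  | succ k ih =>
    refine ext_basis (FF p lam (k + 1) ∘ₗ consM none) (FF p lam (k + 1)) (fun x => ?_) c
    have h : ∀ x, FF p lam (k + 1) (Finsupp.single x 1) = consM (lam x) (FF p lam k (sbdL x)) := by
      intro x; rw [FF]; simp
    simp only [LinearMap.comp_apply, consM_single, h]
    rw [hlam, sbdL, ih]

lemma FF_mem (k : ℕ) (D : Set (List (Option (ZMod p)))) (D' : Set (List Q))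
    (h : ∀ x ∈ D, FF p lam k (Finsupp.single x 1) ∈ Finsupp.supported ℤ ℤ D') {c}
    (hc : c ∈ Finsupp.supported ℤ ℤ D) : FF p lam k c ∈ Finsupp.supported ℤ ℤ D' := by
  rw [Finsupp.supported_eq_span_single] at hc
  induction hc using Submodule.span_induction with
  | mem x h' =>
    obtain ⟨y, hy, rfl⟩ := h'
    exact h y hy
  | zero => simp
  | add x y _ _ hx hy => rw [map_add]; exact add_mem hx hy
  | smul a x _ hx => rw [map_smul]; exact Submodule.smul_mem _ _ hx

lemma FF_supp (n : ℕ) (rk : List (Option (ZMod p)) → ℕ)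
    (hrk1 : ∀ x, x.length = n → ¬ IsZ x → 1 ≤ rk x)
    (hrk : ∀ x y, x.length = n → Le y x → ¬ IsZ y → lam y = lam x ∨ rk y < rk x)
    (k : ℕ) (x : List (Option (ZMod p))) (hx : x.length = n) :
    FF p lam (k + 1) (Finsupp.single x 1) ∈ Finsupp.supported ℤ ℤ
      {L : List Q | ¬ IsZ x ∧ (L.IsChain (· ≠ ·) → k + 1 ≤ rk x ∧ ∃ L', L = lam x :: L')} := by
  have h : ∀ k x, FF p lam (k + 1) (Finsupp.single x 1) = consM (lam x) (FF p lam k (sbdL x)) := by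
    intro k x; rw [FF]; simp
  induction k generalizing x with
  | zero =>
    rw [h]
    by_cases hz : IsZ x
    · rw [sbdL_isZ x hz]; simp
    · have h1 : FF p lam 0 (sbdL x) ∈ Finsupp.supported ℤ ℤ (Set.univ : Set (List Q)) := by simp
      refine consM_mem _ _ _ (fun l _ => ?_) h1
      exact ⟨hz, fun _ => ⟨hrk1 x hx hz, l, rfl⟩⟩
  | succ k ih =>
    rw [h]
    by_cases hz : IsZ x
    · rw [sbdL_isZ x hz]; simp
    · refine consM_mem _ {L : List Q | L.IsChain (· ≠ ·) → ∃ y, Le y x ∧ ¬ IsZ y ∧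
        k + 1 ≤ rk y ∧ ∃ L', L = lam y :: L'} _ ?_ ?_
      · intro l hl
        refine ⟨hz, fun hc => ?_⟩
        obtain ⟨y, hyx, hy, hk, L', rfl⟩ := hl hc.of_cons
        have hne : lam x ≠ lam y := (List.isChain_cons_cons.1 hc).1
        rcases hrk x y hx hyx hy with h1 | h1
        · exact absurd h1.symm hne
        · exact ⟨by omega, _, rfl⟩
      · refine FF_mem p (k + 1) _ _ (fun y hy => ?_) (sbdL_supp x)
        refine Finsupp.supported_mono ?_ (ih y (hy.length_eq.trans hx))
        rintro L ⟨hL1, hL2⟩ hc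
        exact ⟨y, hy, hL1, hL2 hc⟩

/-- The combinatorial Borsuk–Ulam type lemma. -/
theorem top_lemma (n : ℕ) (hn : 1 ≤ n)
    (S : Q → ZMod p) (hS : ∀ q, S (γ q) = S q + 1) (hγ : Function.Injective γ)
    (hlam : ∀ x, ¬ IsZ x → lam (x.map (Option.map (· + 1))) = γ (lam x))
    (hnone : ∀ x, lam (none :: x) = lam x)
    (rk : List (Option (ZMod p)) → ℕ)
    (hrk1 : ∀ x, x.length = n → ¬ IsZ x → 1 ≤ rk x)
    (hrk : ∀ x y, x.length = n → Le y x → ¬ IsZ y → lam y = lam x ∨ rk y < rk x)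
    (hrkn : ∀ x, x.length = n → rk x < n) : False := by
  have hp : p.Prime := Fact.out
  have hD : ∀ x ∈ (Dg : Set (List Q)), x.map γ ∈ (Dg : Set (List Q)) := by
    rintro x (rfl | hx)
    · left; rfl
    · right
      rw [List.isChain_map]
      simpa only [ne_eq, hγ.eq_iff] using hx
  have hD' : ∀ x, x ∉ (Dg : Set (List Q)) → x.map γ ∉ (Dg : Set (List Q)) := by
    rintro x hx (h | h)
    · exact hx (Or.inl (by simpa using h))
    · apply hx
      right
      rw [List.isChain_map] at h
      simpa only [ne_eq, hγ.eq_iff] using h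
  let S' : List Q → ZMod p := fun l => match l with
    | [] => 0
    | q :: _ => S q
  have hS' : ∀ x, x ∉ (Dg : Set (List Q)) → S' (x.map γ) = S' x + 1 := by
    intro x hx
    cases x with
    | nil => exact absurd (Or.inl rfl) hx
    | cons q l => exact hS q
  have hex : ∀ k c, dop p k (act γ) c ∈ Finsupp.supported ℤ ℤ (Dg : Set (List Q)) →
      ∃ w, c - dop p (k + 1) (act γ) w ∈ Finsupp.supported ℤ ℤ (Dg : Set (List Q)) := by
    intro k c hc
    by_cases hk : Odd k
    · have e1 : dop p k (act γ) = dop p 1 (act γ) := by simp [dop, hk]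
      have e2 : dop p (k + 1) (act γ) = dop p 0 (act γ) := by
        have : ¬ Odd (k + 1) := by rw [Nat.not_odd_iff_even]; exact hk.add_one
        simp [dop, this]
      rw [e1] at hc
      rw [e2]
      refine ⟨opP p S' c, ?_⟩
      have := add_mem (exact_odd p (List.map γ) S' Dg hD hS' c) (opB_mem p (List.map γ) S' Dg hD hc)
      simpa using this
    · have e1 : dop p k (act γ) = dop p 0 (act γ) := by simp [dop, hk]
      have e2 : dop p (k + 1) (act γ) = dop p 1 (act γ) := by
        have : Odd (k + 1) := by rw [Nat.not_odd_iff_even] at hk; exact hk.add_one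
        simp [dop, this]
      rw [e1] at hc
      rw [e2]
      refine ⟨opB p (List.map γ) S' c, ?_⟩
      have := add_mem (exact_even p (List.map γ) S' Dg hD hD' hS' c) (opP_mem p S' Dg hc)
      simpa using this
  have hdesc : ∀ j, j + 1 ≤ n → ∃ u v, FF p lam (n - j) (hh p (n - j)) - bd u -
      dop p (n - j + 1) (act γ) v ∈ Finsupp.supported ℤ ℤ (Dg : Set (List Q)) := by
    intro j
    induction j with
    | zero =>
      intro _
      refine ⟨0, 0, ?_⟩
      simp only [map_zero, sub_zero, Nat.sub_zero]
      refine FF_mem p n _ _ (fun x hx => ?_) (hh_supp p n)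
      obtain ⟨m, rfl⟩ : ∃ j, n = j + 1 := ⟨n - 1, by omega⟩
      refine Finsupp.supported_mono ?_ (FF_supp p (m + 1) rk hrk1 hrk m x hx)
      rintro L ⟨-, hL⟩
      right
      intro hc
      have h1 := (hL hc).1
      have h2 := hrkn x hx
      omega
    | succ j ih =>
      intro hj
      obtain ⟨u, v, huv⟩ := ih (by omega)
      obtain ⟨k, hk⟩ : ∃ k, k = n - (j + 1) := ⟨_, rfl⟩
      have hk' : n - j = k + 1 := by omega
      rw [← hk]
      rw [hk'] at huv
      have h1 := bd_Dg huv
      rw [map_sub, map_sub, bd_bd, sub_zero, bd_FF, sbd_hh p k (by omega), FF_none p hnone,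
        dop_comm p k (sact p) (act γ) (FF p lam k) (FF_act p hlam k),
        dop_comm p _ (act γ) (act γ) bd (bd_act γ)] at h1
      have e : dop p (k + 1 + 1) (act γ) = dop p k (act γ) := by
        have : Odd (k + 1 + 1) ↔ Odd k := by
          rw [Nat.odd_add_one, Nat.odd_add_one, not_not]
        simp [dop, this]
      rw [e, ← map_sub] at h1
      obtain ⟨w, hw⟩ := hex k _ h1
      exact ⟨v, w, hw⟩
  obtain ⟨u, v, huv⟩ := hdesc (n - 1) (by omega)
  rw [show n - (n - 1) = 1 by omega] at huv
  have h1 := eps_Dg huv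
  rw [map_sub, map_sub, eps_bd] at h1
  have h2 : eps (FF p lam 1 (hh p 1)) = 1 := by
    simp [FF, hh, sbdL, eps]
  have h3 : eps (dop p (1 + 1) (act γ) v) = p * eps v := by
    have : ¬ Odd (1 + 1) := by decide
    simp only [dop, this, if_false, LinearMap.sum_apply, map_sum]
    have h4 : ∀ j, eps (((act γ) ^ j) v) = eps v := by
      intro j
      have := pow_comm_map (act γ) (1 : Module.End ℤ ℤ) eps (fun c => by simpa using eps_act γ c) j v
      simpa using this
    simp only [h4]
    simp
  rw [h2, h3] at h1
  have h5 : (p : ℤ) ∣ 1 := ⟨eps v, by linarith⟩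
  have h6 : p ∣ 1 := by exact_mod_cast h5
  exact hp.one_lt.ne' (Nat.dvd_one.1 h6)

end main
end MeunierAux

namespace MeunierAux

lemma exists_sign {X : Type*} (p : ℕ) [Fact p.Prime] (γ : X → X) (hγ : ∀ x, γ^[p] x = x)
    (hfree : ∀ x, γ x ≠ x) : ∃ S : X → ZMod p, ∀ x, S (γ x) = S x + 1 := by
  have hp : p.Prime := Fact.out
  have hmp : ∀ x, Function.minimalPeriod γ x = p := by
    intro x
    have h1 : Function.minimalPeriod γ x ∣ p := Function.IsPeriodicPt.minimalPeriod_dvd (hγ x)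
    rcases (Nat.dvd_prime hp).1 h1 with h | h
    · exact absurd (Function.minimalPeriod_eq_one_iff_isFixedPt.1 h) (hfree x)
    · exact h
  have hpm : ∀ x m, γ^[p * m] x = x := by
    intro x m
    rw [Function.iterate_mul]
    exact Function.iterate_fixed (hγ x) m
  let st : Setoid X := ⟨fun x y => ∃ j, γ^[j] x = y, ⟨fun x => ⟨0, rfl⟩, by
    rintro x y ⟨j, rfl⟩
    refine ⟨p * j - j, ?_⟩
    rw [← Function.iterate_add_apply, Nat.sub_add_cancel (Nat.le_mul_of_pos_left _ hp.pos)]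
    exact hpm x j, by
    rintro x y z ⟨j, rfl⟩ ⟨k, rfl⟩
    exact ⟨k + j, Function.iterate_add_apply _ _ _ _⟩⟩⟩
  have hrep : ∀ x, ∃ j, γ^[j] (Quotient.out (Quotient.mk st x)) = x := fun x =>
    Quotient.exact (Quotient.out_eq (Quotient.mk st x))
  choose J hJ using hrep
  refine ⟨fun x => (J x : ZMod p), fun x => ?_⟩
  have hq : Quotient.mk st (γ x) = Quotient.mk st x :=
    (Quotient.sound (show st.r x (γ x) from ⟨1, rfl⟩)).symm
  have h1 := hJ (γ x)
  rw [hq] at h1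
  have h2 := hJ x
  set r := Quotient.out (Quotient.mk st x)
  have h3 : γ^[J (γ x)] r = γ^[J x + 1] r := by
    rw [h1, Function.iterate_succ_apply', h2]
  have h4 : J (γ x) % p = (J x + 1) % p := by
    have e := hmp r
    rw [← Function.iterate_mod_minimalPeriod_eq (n := J (γ x)),
      ← Function.iterate_mod_minimalPeriod_eq (n := J x + 1), e] at h3
    exact (Function.iterate_eq_iterate_iff_of_lt_minimalPeriod
      (by rw [e]; exact Nat.mod_lt _ hp.pos) (by rw [e]; exact Nat.mod_lt _ hp.pos)).1 h3
  have := (ZMod.natCast_eq_natCast_iff' (J (γ x)) (J x + 1) p).2 h4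
  simpa using this

section words
variable {Z : Type*} [DecidableEq Z]

/-- Leading sign. -/
def hs : List (Option Z) → Option Z
  | [] => none
  | none :: l => hs l
  | some g :: _ => some g

/-- Length of the longest alternating subsequence. -/
def alt : List (Option Z) → ℕ
  | [] => 0
  | none :: l => alt l
  | some g :: l => if hs l = some g then alt l else alt l + 1

/-- Positions with a given sign. -/
def supp (g : Z) : List (Option Z) → Finset ℕ
  | [] => ∅
  | none :: l => supp g l
  | some h :: l => if h = g then insert l.length (supp g l) else supp g l

/-- Positions with a given sign in a longest alternating subsequence. -/
def sel (g : Z) : List (Option Z) → Finset ℕ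
  | [] => ∅
  | none :: l => sel g l
  | some h :: l => if h = g ∧ hs l ≠ some g then insert l.length (sel g l) else sel g l

lemma hs_isZ (x : List (Option Z)) : hs x = none ↔ IsZ x := by
  induction x with
  | nil => simp [hs, IsZ]
  | cons a l ih => cases a <;> simp_all [hs, IsZ]

lemma alt_pos (x : List (Option Z)) (h : ¬ IsZ x) : 1 ≤ alt x := by
  induction x with
  | nil => simp [IsZ] at h
  | cons a l ih =>
    cases a with
    | none => 
      rw [alt]; apply ih
      intro h'; apply h
      simpa [IsZ] using h'
    | some g =>
      rw [alt]
      split_ifs with h1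
      · apply ih; rw [← hs_isZ, h1]; simp
      · omega

lemma alt_mono (y x : List (Option Z)) (h : Le y x) :
    alt y < alt x ∨ (alt y = alt x ∧ hs y = hs x) := by
  induction h with
  | nil => right; exact ⟨rfl, rfl⟩
  | @cons a b y x hab h ih =>
    rcases hab with rfl | rfl
    · cases b with
      | none => simpa [alt, hs] using ih
      | some g =>
        simp only [alt, hs]
        split_ifs with h1
        · rw [← h1]; exact ih
        · left; omega
    · cases a with
      | none => simpa [alt, hs] using ih
      | some g =>
        simp only [alt, hs]
        rcases ih with h1 | ⟨h1, h2⟩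
        · split_ifs <;> simp <;> omega
        · rw [h1, h2]; simp

lemma supp_lt (g : Z) (x : List (Option Z)) : ∀ i ∈ supp g x, i < x.length := by
  induction x with
  | nil => simp [supp]
  | cons a l ih =>
    intro i hi
    rw [List.length_cons]
    cases a with
    | none => have := ih i hi; omega
    | some h =>
      rw [supp] at hi
      split_ifs at hi
      · rcases mem_insert.1 hi with rfl | hi
        · omega
        · have := ih i hi; omega
      · have := ih i hi; omega

lemma sel_sub (g : Z) (x : List (Option Z)) : sel g x ⊆ supp g x := by
  induction x with
  | nil => simp [sel]
  | cons a l ih =>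
    cases a with
    | none => exact ih
    | some h =>
      rw [supp, sel]
      split_ifs with h1 h2 h2
      · exact insert_subset_insert _ ih
      · exact absurd h1.1 h2
      · exact ih.trans (subset_insert _ _)
      · exact ih

lemma supp_disj (g g' : Z) (hg : g ≠ g') (x : List (Option Z)) :
    Disjoint (supp g x) (supp g' x) := by
  induction x with
  | nil => simp [supp]
  | cons a l ih =>
    cases a with
    | none => exact ih
    | some h =>
      rw [supp, supp]
      have h1 : ∀ g, l.length ∉ supp g l := fun g hh => (supp_lt g l _ hh).false
      split_ifs with h2 h3 h3
      · exact absurd (h2.symm.trans h3) hg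
      · rw [disjoint_insert_left]; exact ⟨h1 _, ih⟩
      · rw [disjoint_insert_right]; exact ⟨h1 _, ih⟩
      · exact ih

lemma supp_mono (g : Z) (y x : List (Option Z)) (h : Le y x) : supp g y ⊆ supp g x := by
  induction h with
  | nil => simp
  | @cons a b y x hab h ih =>
    rcases hab with rfl | rfl
    · cases b with
      | none => exact ih
      | some k =>
        simp only [supp]
        split_ifs
        · exact ih.trans (subset_insert _ _)
        · exact ih
    · cases a with
      | none => exact ih
      | some k =>
        simp only [supp, h.length_eq]
        split_ifs
        · exact insert_subset_insert _ ih
        · exact ih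

lemma sel_gap (g : Z) (x : List (Option Z)) (hx : hs x ≠ some g) :
    ∀ i ∈ supp g x, i + 1 < x.length := by
  induction x with
  | nil => simp [supp]
  | cons a l ih =>
    intro i hi
    rw [List.length_cons]
    cases a with
    | none => have := supp_lt g l i hi; omega
    | some h =>
      rw [supp] at hi
      have hne : h ≠ g := by simpa [hs] using hx
      rw [if_neg hne] at hi
      have := supp_lt g l i hi; omega

lemma sel_stable (g : Z) (x : List (Option Z)) :
    ∀ i ∈ sel g x, ∀ j ∈ sel g x, i < j → i + 2 ≤ j := by
  induction x with
  | nil => simp [sel]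
  | cons a l ih =>
    cases a with
    | none => exact ih
    | some h =>
      rw [sel]
      split_ifs with h1
      · intro i hi j hj hij
        rcases mem_insert.1 hi with rfl | hi
        · rcases mem_insert.1 hj with rfl | hj
          · omega
          · have := supp_lt g l j (sel_sub g l hj); omega
        · rcases mem_insert.1 hj with rfl | hj
          · have := sel_gap g l h1.2 i (sel_sub g l hi); omega
          · exact ih i hi j hj hij
      · exact ih

lemma sel_card [Fintype Z] (x : List (Option Z)) : ∑ g, (sel g x).card = alt x := by
  induction x with
  | nil => simp [sel, alt]
  | cons a l ih =>
    cases a with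
    | none => exact ih
    | some h =>
      rw [alt]
      by_cases h1 : hs l = some h
      · rw [if_pos h1, ← ih]
        refine sum_congr rfl fun g _ => ?_
        rw [sel, if_neg]
        rintro ⟨rfl, h2⟩
        exact h2 h1
      · rw [if_neg h1, ← ih]
        have : ∀ g, (sel g (some h :: l)).card = (sel g l).card + if h = g then 1 else 0 := by
          intro g
          rw [sel]
          by_cases h2 : h = g
          · subst h2
            rw [if_pos ⟨rfl, h1⟩, if_pos rfl, card_insert_of_notMem]
            intro hh
            exact (supp_lt h l _ (sel_sub h l hh)).false
          · rw [if_neg (fun hh => h2 hh.1), if_neg h2, add_zero]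
        simp only [this, sum_add_distrib]
        simp

lemma hs_map (f : Z → Z) (x : List (Option Z)) : hs (x.map (Option.map f)) = (hs x).map f := by
  induction x with
  | nil => rfl
  | cons a l ih => cases a <;> simp [hs, ih]

lemma alt_map (f : Z → Z) (hf : Function.Injective f) (x : List (Option Z)) :
    alt (x.map (Option.map f)) = alt x := by
  induction x with
  | nil => rfl
  | cons a l ih =>
    cases a with
    | none => simpa [alt] using ih
    | some g =>
      have : (hs l).map f = some (f g) ↔ hs l = some g := by
        rw [← Option.map_some, (Option.map_injective hf).eq_iff]
      simp [alt, ih, hs_map, this]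

lemma supp_map (f : Z → Z) (hf : Function.Injective f) (g : Z) (x : List (Option Z)) :
    supp (f g) (x.map (Option.map f)) = supp g x := by
  induction x with
  | nil => rfl
  | cons a l ih =>
    cases a with
    | none => simpa [supp] using ih
    | some h => simp [supp, ih, hf.eq_iff]

end words

/-- No proper colouring of the prime hypergraph with too few colours. -/
theorem prime_case (p : ℕ) [Fact p.Prime] (n k t : ℕ) (hk : 1 ≤ k)
    (hn : t * (p - 1) + p * (k - 1) < n) (c : Finset (Fin n) → ℕ) :
    ¬ IsKneserColoring n p t (almostStableSets n 2 k) c := by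
  classical
  rintro ⟨hc1, hc2⟩
  have hp : p.Prime := Fact.out
  set F := almostStableSets n 2 k with hF
  let B : List (Option (ZMod p)) → Finset (ZMod p × ℕ) := fun x =>
    (univ ×ˢ Icc 1 t).filter fun q => ∃ S ∈ F, (∀ i ∈ S, (i : ℕ) ∈ supp q.1 x) ∧ c S = q.2
  have memB : ∀ x g d, (g, d) ∈ B x ↔ ∃ S ∈ F, (∀ i ∈ S, (i : ℕ) ∈ supp g x) ∧ c S = d := by
    intro x g d
    simp only [B, mem_filter, mem_product, mem_univ, true_and]
    constructor
    · exact fun h => h.2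
    · rintro ⟨S, hS, h1, rfl⟩
      exact ⟨hc1 S hS, S, hS, h1, rfl⟩
  have hBfull : ∀ x d, ∃ g, (g, d) ∉ B x := by
    intro x d
    by_contra! hall
    have h1 : ∀ g, ∃ S ∈ F, (∀ i ∈ S, (i : ℕ) ∈ supp g x) ∧ c S = d :=
      fun g => (memB x g d).1 (hall g)
    choose S hS1 hS2 hS3 using h1
    have hdis : ∀ g g', g ≠ g' → Disjoint (S g) (S g') := by
      intro g g' hg
      rw [Finset.disjoint_left]
      intro i hi hi'
      exact Finset.disjoint_left.1 (supp_disj g g' hg x) (hS2 g i hi) (hS2 g' i hi')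
    have hinj : Function.Injective S := by
      intro g g' h
      by_contra hne
      have := hdis g g' hne
      rw [← h, disjoint_self] at this
      have h2 := hS1 g
      rw [hF, almostStableSets, mem_filter] at h2
      have h3 := h2.2.1
      rw [show S g = ∅ from this, card_empty] at h3
      omega
    refine hc2 (univ.image S) ?_ ?_ ?_ ⟨d, ?_⟩
    · intro A hA
      obtain ⟨g, -, rfl⟩ := mem_image.1 hA
      exact hS1 g
    · rw [card_image_of_injective _ hinj, card_univ, ZMod.card]
    · intro A hA A' hA' hne
      obtain ⟨g, -, rfl⟩ := mem_image.1 (mem_coe.1 hA)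
      obtain ⟨g', -, rfl⟩ := mem_image.1 (mem_coe.1 hA')
      exact hdis g g' (fun h => hne (by rw [h]))
    · intro A hA
      obtain ⟨g, -, rfl⟩ := mem_image.1 hA
      exact hS3 g
  have hBcard : ∀ x, (B x).card ≤ t * (p - 1) := by
    intro x
    have h1 : (B x).card = ∑ d ∈ Icc 1 t, ((B x).filter fun q => q.2 = d).card := by
      refine card_eq_sum_card_fiberwise ?_
      intro q hq
      have := (mem_filter.1 (mem_coe.1 hq)).1
      exact mem_coe.2 (mem_product.1 this).2
    rw [h1]
    have h2 : ∀ d ∈ Icc 1 t, ((B x).filter fun q => q.2 = d).card ≤ p - 1 := by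
      intro d _
      obtain ⟨g, hg⟩ := hBfull x d
      have h3 : ((B x).filter fun q => q.2 = d) ⊆ (univ.erase g) ×ˢ {d} := by
        rintro ⟨g', d'⟩ hq
        rw [mem_filter] at hq
        obtain ⟨hq, rfl⟩ := hq
        simp only [mem_product, mem_erase, mem_univ, and_true, mem_singleton]
        rintro rfl
        exact hg hq
      refine (card_le_card h3).trans ?_
      rw [card_product, card_erase_of_mem (mem_univ _), card_univ, ZMod.card]
      simp
    refine (sum_le_sum h2).trans ?_
    simp
  have hBmono : ∀ y x, Le y x → B y ⊆ B x := by
    rintro y x h ⟨g, d⟩ hq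
    rw [memB] at hq ⊢
    obtain ⟨S, hS, h1, h2⟩ := hq
    exact ⟨S, hS, fun i hi => supp_mono g y x h (h1 i hi), h2⟩
  have hBalt : ∀ x, x.length = n → ¬ (B x).Nonempty → alt x ≤ p * (k - 1) := by
    intro x hx hB
    by_contra! hlt
    rw [← sel_card] at hlt
    have : ∃ g ∈ (univ : Finset (ZMod p)), k - 1 < (sel g x).card := by
      apply exists_lt_of_sum_lt
      simpa [ZMod.card] using hlt
    obtain ⟨g, -, hg⟩ := this
    obtain ⟨S0, hS0, hS0c⟩ := exists_subset_card_eq (show k ≤ (sel g x).card by omega)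
    have hlt' : ∀ i ∈ S0, i < n := fun i hi => hx ▸ supp_lt g x i (sel_sub g x (hS0 hi))
    apply hB
    refine ⟨(g, c (S0.attachFin hlt')), (memB _ _ _).2 ⟨S0.attachFin hlt', ?_, ?_, rfl⟩⟩
    · rw [hF, almostStableSets, mem_filter]
      refine ⟨mem_univ _, by rw [card_attachFin, hS0c], ?_⟩
      intro i hi j hj hij
      rw [mem_attachFin] at hi hj
      have hne : (i : ℕ) ≠ j := fun h => hij (Fin.ext h)
      rcases lt_or_gt_of_ne hne with h | h
      · have := sel_stable g x _ (hS0 hi) _ (hS0 hj) h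
        rw [max_eq_right h.le, min_eq_left h.le]; omega
      · have := sel_stable g x _ (hS0 hj) _ (hS0 hi) h
        rw [max_eq_left h.le, min_eq_right h.le]; omega
    · intro i hi
      rw [mem_attachFin] at hi
      exact sel_sub g x (hS0 hi)
  let sh : ZMod p × ℕ ↪ ZMod p × ℕ := ⟨fun q => (q.1 + 1, q.2), by
    rintro ⟨a, b⟩ ⟨a', b'⟩ h
    simpa using h⟩
  let Q2 := {B : Finset (ZMod p × ℕ) // B.Nonempty ∧ ∀ d, ∃ g, (g, d) ∉ B}
  have mem_sh : ∀ (C : Finset (ZMod p × ℕ)) g d, (g, d) ∈ C.map sh ↔ (g - 1, d) ∈ C := by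
    intro C g d
    rw [mem_map]
    constructor
    · rintro ⟨⟨g', d'⟩, h, h'⟩
      have h1 : g' + 1 = g ∧ d' = d := Prod.mk.inj h'
      obtain ⟨rfl, rfl⟩ := h1
      simpa using h
    · intro h
      exact ⟨_, h, by change (g - 1 + 1, d) = (g, d); rw [sub_add_cancel]⟩
  let γ2 : Q2 → Q2 := fun C => ⟨C.1.map sh, C.2.1.map, fun d => by
    obtain ⟨g, hg⟩ := C.2.2 d
    refine ⟨g + 1, ?_⟩
    rw [mem_sh]; simpa using hg⟩
  let γ : (ZMod p × ℕ) ⊕ Q2 → (ZMod p × ℕ) ⊕ Q2 := Sum.map sh γ2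
  have it1 : ∀ j q, γ^[j] (Sum.inl q) = Sum.inl (q.1 + (j : ZMod p), q.2) := by
    intro j
    induction j with
    | zero => intro q; simp
    | succ j ih =>
      intro q
      rw [Function.iterate_succ_apply]
      have : γ (Sum.inl q) = Sum.inl (q.1 + 1, q.2) := rfl
      rw [this, ih]
      simp only [Sum.inl.injEq, Prod.mk.injEq, and_true]
      push_cast; ring
  have it2 : ∀ j (C : Q2), ∃ C' : Q2, γ^[j] (Sum.inr C) = Sum.inr C' ∧
      ∀ g d, (g, d) ∈ C'.1 ↔ (g - (j : ZMod p), d) ∈ C.1 := by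
    intro j
    induction j with
    | zero => intro C; exact ⟨C, rfl, by simp⟩
    | succ j ih =>
      intro C
      obtain ⟨C', h1, h2⟩ := ih (γ2 C)
      refine ⟨C', h1, fun g d => ?_⟩
      rw [h2]
      simp only [γ2, mem_sh]
      push_cast
      rw [sub_sub]
  have hγp : ∀ q, γ^[p] q = q := by
    rintro (q | C)
    · rw [it1]; simp
    · obtain ⟨C', h1, h2⟩ := it2 p C
      rw [h1]
      congr 1
      apply Subtype.ext
      ext ⟨g, d⟩
      rw [h2]; simp
  have hfree : ∀ q, γ q ≠ q := by
    rintro (q | C) h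
    · have h1 : q.1 + 1 = q.1 := congrArg Prod.fst (Sum.inl.inj h)
      simp at h1
    · have h1 : C.1.map sh = C.1 := congrArg Subtype.val (Sum.inr.inj h)
      obtain ⟨⟨g, d⟩, hg⟩ := C.2.1
      have h2 : ∀ j : ℕ, (g + (j : ZMod p), d) ∈ C.1 := by
        intro j
        induction j with
        | zero => simpa using hg
        | succ j ih =>
          rw [← h1, mem_sh]
          convert ih using 2
          push_cast; ring
      obtain ⟨g', hg'⟩ := C.2.2 d
      apply hg'
      have := h2 (g' - g).val
      rw [ZMod.natCast_zmod_val] at this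
      simpa using this
  have hγinj : Function.Injective γ := by
    intro a b hab
    have h1 := congrArg (γ^[p - 1]) hab
    rw [← Function.iterate_succ_apply, ← Function.iterate_succ_apply,
      Nat.succ_eq_add_one, Nat.sub_add_cancel hp.one_lt.le, hγp, hγp] at h1
    exact h1
  obtain ⟨S, hS⟩ := exists_sign p γ hγp hfree
  let lam : List (Option (ZMod p)) → (ZMod p × ℕ) ⊕ Q2 := fun x =>
    if h : (B x).Nonempty then Sum.inr ⟨B x, h, hBfull x⟩ else Sum.inl ((hs x).getD 0, alt x)
  have hBmap : ∀ x : List (Option (ZMod p)), B (x.map (Option.map (· + 1))) = (B x).map sh := by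
    intro x
    ext ⟨g, d⟩
    rw [mem_sh, memB, memB]
    have := supp_map (fun z : ZMod p => z + 1) (add_left_injective 1) (g - 1) x
    simp only [sub_add_cancel] at this
    rw [this]
  have hBnone : ∀ x : List (Option (ZMod p)), B (none :: x) = B x := fun x => rfl
  refine top_lemma (Q := (ZMod p × ℕ) ⊕ Q2) p (lam := lam) (γ := γ) n (by omega) S hS hγinj ?_ ?_
    (fun x => if (B x).Nonempty then p * (k - 1) + (B x).card else alt x) ?_ ?_ ?_
  · intro x hx
    by_cases h : (B x).Nonempty
    · have h' : (B (x.map (Option.map (· + 1)))).Nonempty := by rw [hBmap]; exact h.map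
      simp only [lam, dif_pos h, dif_pos h']
      change _ = Sum.inr _
      congr 1
      apply Subtype.ext
      exact hBmap x
    · have h' : ¬ (B (x.map (Option.map (· + 1)))).Nonempty := by
        rw [hBmap, map_nonempty]; exact h
      simp only [lam, dif_neg h, dif_neg h']
      rw [hs_map, alt_map _ (add_left_injective 1)]
      rw [← hs_isZ] at hx
      obtain ⟨g, hg⟩ := Option.ne_none_iff_exists'.1 hx
      rw [hg]; rfl
  · intro x
    rfl
  · intro x _ hz
    split_ifs with h
    · have := h.card_pos; omega
    · exact alt_pos x hz
  · intro x y hx hyx hy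
    by_cases h : (B y).Nonempty
    · have h' := h.mono (hBmono y x hyx)
      rw [if_pos h, if_pos h']
      rcases (hBmono y x hyx).eq_or_ssubset with e | e
      · left
        simp only [lam, dif_pos h, dif_pos h']
        congr 1
        exact Subtype.ext e
      · right
        have := card_lt_card e
        omega
    · rw [if_neg h]
      by_cases h' : (B x).Nonempty
      · rw [if_pos h']
        right
        have h1 := hBalt y (hyx.length_eq.trans hx) h
        have := h'.card_pos
        omega
      · rw [if_neg h']
        rcases alt_mono y x hyx with h1 | ⟨h1, h2⟩
        · right; exact h1
        · left
          simp only [lam, dif_neg h, dif_neg h', h1, h2]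
  · intro x hx
    split_ifs with h
    · have := hBcard x; omega
    · have := hBalt x hx h; omega

end MeunierAux

namespace MeunierAux

lemma mem_ass {n k : ℕ} {A : Finset (Fin n)} :
    A ∈ almostStableSets n 2 k ↔ A.card = k ∧ AlmostStable n 2 A := by
  simp [almostStableSets]

/-- Lower bound property. -/
def LB (r : ℕ) : Prop := ∀ n k t : ℕ, 1 ≤ k → t * (r - 1) + r * (k - 1) < n →
  ∀ c : Finset (Fin n) → ℕ, ¬ IsKneserColoring n r t (almostStableSets n 2 k) c

lemma LB_mul (a b : ℕ) (ha : 2 ≤ a) (hb : 2 ≤ b) (hA : LB a) (hB : LB b) : LB (a * b) := by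
  classical
  intro n k t hk hn c ⟨hc1, hc2⟩
  obtain ⟨a', rfl⟩ : ∃ a', a = a' + 1 := ⟨a - 1, by omega⟩
  obtain ⟨b', rfl⟩ : ∃ b', b = b' + 1 := ⟨b - 1, by omega⟩
  obtain ⟨k', rfl⟩ : ∃ k', k = k' + 1 := ⟨k - 1, by omega⟩
  have hab : (a' + 1) * (b' + 1) - 1 = a' * b' + a' + b' := by
    have : (a' + 1) * (b' + 1) = a' * b' + a' + b' + 1 := by ring
    omega
  rw [hab] at hn
  simp only [Nat.add_sub_cancel] at hn
  set m := t * a' + (a' + 1) * k' + 1 with hm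
  have key : ∀ A : Finset (Fin n), A ∈ almostStableSets n 2 m →
      ∃ d ∈ Icc 1 t, ∃ E : Finset (Finset (Fin n)), E ⊆ almostStableSets n 2 (k' + 1) ∧
        E.card = a' + 1 ∧ ((E : Set (Finset (Fin n))).Pairwise fun A B => Disjoint A B) ∧
        (∀ X ∈ E, X ⊆ A) ∧ ∀ X ∈ E, c X = d := by
    intro A hA'
    rw [mem_ass] at hA'
    obtain ⟨hAc, hAs⟩ := hA'
    let e := (A.orderEmbOfFin hAc).toEmbedding
    have he : ∀ i, e i ∈ A := fun i => A.orderEmbOfFin_mem hAc i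
    have hmem : ∀ S ∈ almostStableSets m 2 (k' + 1), S.map e ∈ almostStableSets n 2 (k' + 1) := by
      intro S hS
      rw [mem_ass] at hS ⊢
      refine ⟨by rw [card_map, hS.1], ?_⟩
      intro i hi j hj hij
      obtain ⟨i', -, rfl⟩ := mem_map.1 hi
      obtain ⟨j', -, rfl⟩ := mem_map.1 hj
      exact hAs _ (he i') _ (he j') hij
    have hno := hA m (k' + 1) t (by omega) (by simp only [Nat.add_sub_cancel]; omega)
      (fun S => c (S.map e))
    have h2 : ∃ E : Finset (Finset (Fin m)), E ⊆ almostStableSets m 2 (k' + 1) ∧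
        E.card = a' + 1 ∧ ((E : Set (Finset (Fin m))).Pairwise fun A B => Disjoint A B) ∧
        ∃ i, ∀ X ∈ E, c (X.map e) = i := by
      by_contra! hcon
      apply hno
      refine ⟨fun S hS => hc1 _ (hmem S hS), ?_⟩
      rintro E h1 h2 h3 ⟨i, h4⟩
      obtain ⟨X, hX, hX'⟩ := hcon E h1 h2 h3 i
      exact hX' (h4 X hX)
    obtain ⟨E, hE1, hE2, hE3, d, hE4⟩ := h2
    refine ⟨d, ?_, E.map (mapEmbedding e).toEmbedding, ?_, by rw [card_map, hE2], ?_, ?_, ?_⟩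
    · have : E.Nonempty := by rw [← card_pos]; omega
      obtain ⟨X, hX⟩ := this
      rw [← hE4 X hX]
      exact hc1 _ (hmem X (hE1 hX))
    · intro X hX
      obtain ⟨Y, hY, rfl⟩ := mem_map.1 hX
      exact hmem Y (hE1 hY)
    · intro X hX X' hX' hne
      obtain ⟨Y, hY, rfl⟩ := mem_map.1 (mem_coe.1 hX)
      obtain ⟨Y', hY', rfl⟩ := mem_map.1 (mem_coe.1 hX')
      have := hE3 (mem_coe.2 hY) (mem_coe.2 hY') (fun h => hne (by rw [h]))
      exact (disjoint_map e).2 this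
    · intro X hX
      obtain ⟨Y, hY, rfl⟩ := mem_map.1 hX
      intro i hi
      obtain ⟨i', -, rfl⟩ := mem_map.1 hi
      exact he i'
    · intro X hX
      obtain ⟨Y, hY, rfl⟩ := mem_map.1 hX
      exact hE4 Y hY
  choose! d hd E hE1 hE2 hE3 hE4 hE5 using key
  have hm1 : m - 1 = t * a' + (a' + 1) * k' := by omega
  refine hB n m t (by omega) ?_ d ⟨hd, ?_⟩
  · rw [hm1]
    simp only [Nat.add_sub_cancel]
    calc t * b' + (b' + 1) * (t * a' + (a' + 1) * k')
        = t * (a' * b' + a' + b') + (a' + 1) * (b' + 1) * k' := by ring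
      _ < n := hn
  rintro G hG1 hG2 hG3 ⟨i, hi⟩
  have hdisj : ∀ A ∈ G, ∀ A' ∈ G, A ≠ A' → ∀ X ∈ E A, ∀ X' ∈ E A', Disjoint X X' := by
    intro A hA A' hA' hne X hX X' hX'
    exact (hG3 (mem_coe.2 hA) (mem_coe.2 hA') hne).mono (hE4 A (hG1 hA) X hX)
      (hE4 A' (hG1 hA') X' hX')
  refine hc2 (G.biUnion E) ?_ ?_ ?_ ⟨i, ?_⟩
  · intro X hX
    obtain ⟨A, hA, hX⟩ := mem_biUnion.1 hX
    exact hE1 A (hG1 hA) hX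
  · rw [card_biUnion]
    · rw [sum_congr rfl (fun A hA => hE2 A (hG1 hA)), sum_const, hG2, smul_eq_mul, mul_comm]
    · intro A hA A' hA' hne
      change Disjoint (E A) (E A')
      rw [Finset.disjoint_left]
      intro X hX hX'
      have h1 := hdisj A hA A' hA' hne X hX X hX'
      have h2 := (mem_ass.1 (hE1 A (hG1 hA) hX)).1
      rw [disjoint_self] at h1
      rw [show X = ∅ from h1, card_empty] at h2
      omega
  · intro X hX X' hX' hne
    obtain ⟨A, hA, hX⟩ := mem_biUnion.1 (mem_coe.1 hX)
    obtain ⟨A', hA', hX'⟩ := mem_biUnion.1 (mem_coe.1 hX')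
    by_cases h : A = A'
    · subst h
      exact hE3 A (hG1 hA) (mem_coe.2 hX) (mem_coe.2 hX') hne
    · exact hdisj A hA A' hA' h X hX X' hX'
  · intro X hX
    obtain ⟨A, hA, hX⟩ := mem_biUnion.1 hX
    rw [hE5 A (hG1 hA) X hX, hi A hA]

theorem LB_all (r : ℕ) (hr : 2 ≤ r) : LB r := by
  induction r using induction_on_primes with
  | zero => omega
  | one => omega
  | prime_mul p a hp ih =>
    have : Fact p.Prime := ⟨hp⟩
    have hP : LB p := fun n k t hk hn c => prime_case p n k t hk hn c
    rcases Nat.lt_or_ge a 2 with h | h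
    · have : a = 1 := by
        rcases Nat.eq_zero_or_pos a with h0 | h0
        · subst h0; omega
        · omega
      subst this
      rwa [mul_one]
    · exact LB_mul p a hp.two_le h hP (ih h)

/-- The standard upper bound colouring. -/
theorem UB (n k r t : ℕ) (hk : 1 ≤ k) (hr : 2 ≤ r) (h : n < t * (r - 1) + r * k) :
    ∃ c, IsKneserColoring n r (t + 1) (almostStableSets n 2 k) c := by
  classical
  let mn : Finset (Fin n) → ℕ := fun A => sInf {i : ℕ | ∃ x : Fin n, x ∈ A ∧ (x : ℕ) = i}
  have hmn : ∀ A ∈ almostStableSets n 2 k, ∃ x ∈ A, (x : ℕ) = mn A := by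
    intro A hA
    have hne : A.Nonempty := by
      rw [← card_pos, (mem_ass.1 hA).1]; omega
    obtain ⟨x, hx⟩ := hne
    exact Nat.sInf_mem (s := {i : ℕ | ∃ x : Fin n, x ∈ A ∧ (x : ℕ) = i}) ⟨x, x, hx, rfl⟩
  have hmn_le : ∀ (A : Finset (Fin n)) (x : Fin n), x ∈ A → mn A ≤ (x : ℕ) := fun A x hx => Nat.sInf_le ⟨x, hx, rfl⟩
  refine ⟨fun A => min t (mn A / (r - 1)) + 1, fun A _ => ?_, ?_⟩
  · simp only [mem_Icc]
    generalize mn A / (r - 1) = q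
    omega
  rintro E hE1 hE2 hE3 ⟨i, hi⟩
  have hinj : Set.InjOn mn (E : Set (Finset (Fin n))) := by
    intro A hA A' hA' hAA
    by_contra hne
    obtain ⟨x, hx, hx'⟩ := hmn A (hE1 hA)
    obtain ⟨y, hy, hy'⟩ := hmn A' (hE1 hA')
    have hxy : x = y := Fin.ext (by rw [hx', hy', hAA])
    subst hxy
    exact Finset.disjoint_left.1 (hE3 hA hA' hne) hx hy
  by_cases hit : i ≤ t
  · -- small colour
    have hsub : E.image mn ⊆ Ico ((i - 1) * (r - 1)) ((i - 1) * (r - 1) + (r - 1)) := by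
      intro j hj
      obtain ⟨A, hA, rfl⟩ := mem_image.1 hj
      have h1 : min t (mn A / (r - 1)) + 1 = i := hi A hA
      have h2 : mn A / (r - 1) = i - 1 := by
        generalize mn A / (r - 1) = q at h1 ⊢
        omega
      rw [mem_Ico, ← h2]
      have h3 := Nat.div_add_mod (mn A) (r - 1)
      have h4 := Nat.mod_lt (mn A) (show 0 < r - 1 by omega)
      rw [mul_comm] at h3
      omega
    have := card_le_card hsub
    rw [card_image_of_injOn hinj, hE2, Nat.card_Ico] at this
    omega
  · -- last colour
    have hge : ∀ A ∈ E, t * (r - 1) ≤ mn A := by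
      intro A hA
      have h1 : min t (mn A / (r - 1)) + 1 = i := hi A hA
      have h2 : t ≤ mn A / (r - 1) := by
        generalize mn A / (r - 1) = q at h1 ⊢
        omega
      exact (Nat.le_div_iff_mul_le (by omega)).1 h2
    have hcard : (E.biUnion id).card = r * k := by
      rw [card_biUnion]
      · rw [sum_congr rfl (fun A hA => show (id A).card = k from (mem_ass.1 (hE1 hA)).1), sum_const,
          hE2, smul_eq_mul]
      · intro A hA A' hA' hne
        exact hE3 hA hA' hne
    have hsub : (E.biUnion id).map Fin.valEmbedding ⊆ Ico (t * (r - 1)) n := by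
      intro j hj
      obtain ⟨x, hx, rfl⟩ := mem_map.1 hj
      obtain ⟨A, hA, hx⟩ := mem_biUnion.1 hx
      rw [mem_Ico]
      exact ⟨(hge A hA).trans (hmn_le A x hx), x.2⟩
    have := card_le_card hsub
    rw [card_map, hcard, Nat.card_Ico] at this
    have : 0 < r * k := by positivity
    omega

end MeunierAux

/-- Meunier's theorem on the chromatic number of almost 2-stable Kneser hypergraphs. -/
theorem stmt17 (n k r : ℕ) (hk : 1 ≤ k) (hr : 2 ≤ r) (hnrk : r * k ≤ n) :
    (kneserChrom n r (almostStableSets n 2 k) : ℤ) =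
      ⌈((n : ℚ) - (r : ℚ) * ((k : ℚ) - 1)) / ((r : ℚ) - 1)⌉ := by
  obtain ⟨r', rfl⟩ : ∃ r', r = r' + 1 := ⟨r - 1, by omega⟩
  obtain ⟨k', rfl⟩ : ∃ k', k = k' + 1 := ⟨k - 1, by omega⟩
  set T := kneserChrom n (r' + 1) (almostStableSets n 2 (k' + 1)) with hT
  have hr' : 0 < r' := by omega
  have hne : {t | ∃ c, IsKneserColoring n (r' + 1) t (almostStableSets n 2 (k' + 1)) c}.Nonempty := by
    obtain ⟨c, hc⟩ := MeunierAux.UB n (k' + 1) (r' + 1) n hk hr (by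
      simp only [Nat.add_sub_cancel]
      have h1 : n ≤ n * r' := Nat.le_mul_of_pos_right _ hr'
      have h2 : 0 < (r' + 1) * (k' + 1) := by positivity
      omega)
    exact ⟨_, c, hc⟩
  have hlow : n ≤ T * r' + (r' + 1) * k' := by
    obtain ⟨c, hc⟩ := Nat.sInf_mem hne
    by_contra! hlt
    exact MeunierAux.LB_all (r' + 1) hr n (k' + 1) T hk hlt c hc
  have hup : ∀ t, n < t * r' + (r' + 1) * (k' + 1) → T ≤ t + 1 :=
    fun t ht => Nat.sInf_le (MeunierAux.UB n (k' + 1) (r' + 1) t hk hr ht)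
  have hup' : (T - 1) * r' + (r' + 1) * k' < n := by
    by_contra! hge
    have hT2 : 2 ≤ T := by
      by_contra! h
      have : T - 1 = 0 := by omega
      rw [this] at hge
      rw [mul_add] at hnrk
      omega
    obtain ⟨s, hs⟩ : ∃ s, T = s + 2 := ⟨T - 2, by omega⟩
    have := hup s (by
      rw [hs] at hge
      have e1 : (s + 2 - 1) * r' = s * r' + r' := by
        rw [show s + 2 - 1 = s + 1 by omega]; ring
      have e2 : (r' + 1) * (k' + 1) = (r' + 1) * k' + r' + 1 := by ring
      omega)
    omega
  have hT1 : 1 ≤ T := by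
    by_contra! h
    have h0 : T = 0 := by omega
    rw [h0] at hlow
    rw [mul_add] at hnrk
    omega
  obtain ⟨s, hs⟩ : ∃ s, T = s + 1 := ⟨T - 1, by omega⟩
  rw [hs] at hlow hup' ⊢
  rw [Nat.add_sub_cancel] at hup'
  symm
  rw [Int.ceil_eq_iff]
  have hq : (0 : ℚ) < r' := by exact_mod_cast hr'
  have e : ((r' + 1 : ℕ) : ℚ) - 1 = r' := by push_cast; ring
  rw [e]
  have l1 : (n : ℚ) ≤ (s + 1) * r' + (r' + 1) * k' := by exact_mod_cast hlow
  have l2 : (s : ℚ) * r' + (r' + 1) * k' < n := by exact_mod_cast hup'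
  push_cast
  constructor
  · rw [lt_div_iff₀ hq]; linarith
  · rw [div_le_iff₀ hq]; linarith
end

section
/- Let F be a hypergraph on vertex set [n] and set r = n − alt_2(F). Then any proper coloring of the Kneser graph KG^2(F) with colors {1,...,k} (k arbitrary) contains a completely multicolored complete bipartite subgraph K_{⌈r/2⌉, ⌊r/2⌋}; moreover the r distinct colors appearing on it can be enumerated as c_1 < c_2 < ... < c_r so that colors with odd index all occur on one side of the bipartition and colors with even index all occur on the other side. -/
open Finset

/-- `l` is (the index list of) an alternating subsequence of
`(X (σ 1), ..., X (σ n))`: indices are increasing, all chosen entries are nonzero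
(`≠ none`), and any two consecutive chosen entries differ. -/
def IsAltList {α : Type*} (n : ℕ) (σ : Equiv.Perm (Fin n))
    (X : Fin n → Option α) (l : List (Fin n)) : Prop :=
  l.Chain' (· < ·) ∧ (∀ i ∈ l, X (σ i) ≠ none) ∧
    l.Chain' (fun i j => X (σ i) ≠ X (σ j))

/-- `alt_σ(X)`: maximum length of an alternating subsequence of nonzero entries of
`(X (σ 1), ..., X (σ n))`. -/
noncomputable def altVec {α : Type*} (n : ℕ) (σ : Equiv.Perm (Fin n))
    (X : Fin n → Option α) : ℕ :=
  sSup {k | ∃ l : List (Fin n), IsAltList n σ X l ∧ l.length = k}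

/-- `alt_{r,σ}(F)`: the largest `ℓ` such that some nonzero `X ∈ (Z_r ∪ {0})^n` has
`alt_σ(X) = ℓ` and no `X^j` contains a member of `F`. -/
noncomputable def altHyp (n r : ℕ) (σ : Equiv.Perm (Fin n))
    (F : Finset (Finset (Fin n))) : ℕ :=
  sSup {k | ∃ X : Fin n → Option (Fin r), (∃ a, X a ≠ none) ∧
    altVec n σ X = k ∧ ∀ j : Fin r, ∀ A ∈ F, ¬ ∀ a ∈ A, X a = some j}

/-- `alt_r(F) = min_σ alt_{r,σ}(F)`. -/
noncomputable def altNum (n r : ℕ) (F : Finset (Finset (Fin n))) : ℕ :=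
  sInf {k | ∃ σ : Equiv.Perm (Fin n), altHyp n r σ F = k}

namespace Kn

abbrev Vec (n : ℕ) := Fin n → Option (Fin 2)

def neg {n : ℕ} (X : Vec n) : Vec n := fun i => (X i).map (· + 1)

def le {n : ℕ} (X Y : Vec n) : Prop := ∀ i e, X i = some e → Y i = some e

def supp {n : ℕ} (X : Vec n) : Finset (Fin n) := univ.filter fun i => X i ≠ none

def del {n : ℕ} (X : Vec n) (p : Fin n) : Vec n := Function.update X p none

lemma mem_supp {n : ℕ} (X : Vec n) (p : Fin n) : p ∈ supp X ↔ X p ≠ none := by simp [supp]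

lemma supp_del {n : ℕ} (X : Vec n) (p : Fin n) : supp (del X p) = (supp X).erase p := by
  ext i
  by_cases h : i = p
  · subst h; simp [mem_supp, del]
  · simp [mem_supp, del, h]

lemma supp_neg {n : ℕ} (X : Vec n) : supp (neg X) = supp X := by
  ext i
  simp [supp, neg]

lemma neg_del {n : ℕ} (X : Vec n) (p : Fin n) : del (neg X) p = neg (del X p) := by
  ext1 i
  by_cases h : i = p
  · subst h; simp [neg, del]
  · simp [neg, del, h]

lemma neg_neg {n : ℕ} (X : Vec n) : neg (neg X) = X := by
  ext1 i
  rcases h : X i with _ | e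
  · simp [neg, h]
  · simp only [neg, h, Option.map_some]
    fin_cases e <;> rfl

lemma del_comm {n : ℕ} (X : Vec n) (p q : Fin n) : del (del X p) q = del (del X q) p := by
  ext1 i
  simp only [del, Function.update_apply]
  split_ifs <;> rfl

lemma del_le {n : ℕ} (X : Vec n) (p : Fin n) : le (del X p) X := by
  intro i e h
  by_cases hi : i = p
  · subst hi; simp [del] at h
  · simpa [del, hi] using h

lemma ne_of_card {n d : ℕ} {X : Vec n} (h : (supp X).card = d + 1) : ∃ a, X a ≠ none := by
  have : (supp X).Nonempty := by rw [← Finset.card_pos]; omega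
  obtain ⟨a, ha⟩ := this
  exact ⟨a, (mem_supp X a).1 ha⟩

def V {n : ℕ} (t : Vec n → ZMod 2) : ℕ → Vec n → ZMod 2
  | 0, _ => 1
  | d + 1, X => ∑ p ∈ supp X, (t X + t (del X p)) * V t d (del X p)

lemma z2 (x : ZMod 2) : x + x = 0 := CharTwo.add_self_eq_zero x

lemma card_del {n d : ℕ} {X : Vec n} (h : (supp X).card = d + 1) {p : Fin n} (hp : p ∈ supp X) :
    (supp (del X p)).card = d := by
  rw [supp_del, Finset.card_erase_of_mem hp, h]; rfl

lemma sum_sym {n : ℕ} (S : Finset (Fin n)) (g : Fin n → Fin n → ZMod 2)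
    (hg : ∀ p q, g p q = g q p) : ∑ p ∈ S, ∑ q ∈ S.erase p, g p q = 0 := by
  rw [Finset.sum_sigma']
  refine Finset.sum_involution (fun x _ => ⟨x.2, x.1⟩) ?_ ?_ ?_ ?_
  · rintro ⟨p, q⟩ _
    simp only
    rw [hg p q]; exact z2 _
  · rintro ⟨p, q⟩ h _ heq
    simp only [Finset.mem_sigma, Finset.mem_erase] at h
    simp only [Sigma.mk.injEq] at heq
    exact h.2.1 heq.1
  · rintro ⟨p, q⟩ h
    simp only [Finset.mem_sigma, Finset.mem_erase] at h ⊢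
    exact ⟨h.2.2, fun e => h.2.1 e.symm, h.1⟩
  · rintro ⟨p, q⟩ _
    rfl

lemma A_zero {n : ℕ} (t : Vec n → ZMod 2) (d : ℕ) : ∀ X : Vec n, (supp X).card = d + 2 →
    ∑ p ∈ supp X, V t d (del X p) = 0 := by
  induction d with
  | zero =>
    intro X h
    simp [V, h]
    rfl
  | succ d ih =>
    intro X h
    have h1 : ∀ p ∈ supp X, V t (d + 1) (del X p) =
        ∑ q ∈ (supp X).erase p, t (del (del X p) q) * V t d (del (del X p) q) := by
      intro p hp
      have := ih (del X p) (card_del h hp)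
      rw [V]
      simp only [add_mul, Finset.sum_add_distrib, ← Finset.mul_sum, this]
      rw [supp_del]; simp
    rw [Finset.sum_congr rfl h1]
    apply sum_sym _ (fun p q => t (del (del X p) q) * V t d (del (del X p) q))
    intro p q
    simp only [del_comm X p q]

lemma V_succ {n : ℕ} (t : Vec n → ZMod 2) (d : ℕ) (X : Vec n) (h : (supp X).card = d + 2) :
    V t (d + 1) X = ∑ p ∈ supp X, t (del X p) * V t d (del X p) := by
  rw [V]
  simp only [add_mul, Finset.sum_add_distrib, ← Finset.mul_sum, A_zero t d X h]
  simp

lemma V_neg {n : ℕ} (t : Vec n → ZMod 2) (ht : ∀ X, (∃ a, X a ≠ none) → t (neg X) = t X + 1)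
    (d : ℕ) : ∀ X : Vec n, (supp X).card = d + 1 → V t d (neg X) = V t d X := by
  induction d with
  | zero => intro X _; rfl
  | succ d ih =>
    intro X h
    rw [V, V, supp_neg]
    refine Finset.sum_congr rfl fun p hp => ?_
    have hc := card_del h hp
    rw [neg_del, ih _ hc, ht X (ne_of_card h), ht _ (ne_of_card hc)]
    congr 1
    have := z2 1
    linear_combination this

lemma V_le {n : ℕ} (t : Vec n → ZMod 2) (m : Vec n → ℕ)
    (hm1 : ∀ X, (∃ a, X a ≠ none) → 1 ≤ m X)
    (hmono : ∀ X Y, (∃ a, X a ≠ none) → le X Y → m X ≤ m Y ∧ (m X = m Y → t X = t Y))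
    (d : ℕ) : ∀ X : Vec n, (supp X).card = d + 1 → V t d X ≠ 0 → d + 1 ≤ m X := by
  induction d with
  | zero => intro X h _; exact hm1 X (ne_of_card h)
  | succ d ih =>
    intro X h hV
    rw [V] at hV
    obtain ⟨p, hp, hne⟩ := Finset.exists_ne_zero_of_sum_ne_zero hV
    have hc := card_del h hp
    have h1 := ih _ hc (right_ne_zero_of_mul hne)
    obtain ⟨h2, h3⟩ := hmono _ X (ne_of_card hc) (del_le X p)
    by_contra hlt
    have : m (del X p) = m X := by omega
    apply left_ne_zero_of_mul hne
    rw [h3 this]; exact z2 _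

/-- full vectors on the first `d+1` coordinates -/
def Full (n d : ℕ) : Finset (Vec n) := univ.filter fun X => ∀ i, X i ≠ none ↔ i.val < d + 1

/-- hemisphere -/
def Hem (n d : ℕ) (hd : d < n) (e : Fin 2) : Finset (Vec n) :=
  (Full n d).filter fun X => X ⟨d, hd⟩ = some e

lemma supp_full {n d : ℕ} {X : Vec n} (h : X ∈ Full n d) :
    supp X = univ.filter fun i : Fin n => i.val < d + 1 := by
  ext i
  simp only [Full, Finset.mem_filter, Finset.mem_univ, true_and] at h
  simp only [supp, Finset.mem_filter, Finset.mem_univ, true_and, h i]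

lemma card_full {n d : ℕ} (hd : d < n) {X : Vec n} (h : X ∈ Full n d) :
    (supp X).card = d + 1 := by
  rw [supp_full h, Fin.card_filter_val_lt]; omega

lemma hem_zero {n : ℕ} (hd : 0 < n) (t : Vec n → ZMod 2) :
    ∑ X ∈ Hem n 0 hd 0, V t 0 X = 1 := by
  have : Hem n 0 hd 0 = {fun i => if i.val = 0 then some 0 else none} := by
    ext X
    simp only [Hem, Full, Finset.mem_filter, Finset.mem_univ, true_and, Finset.mem_singleton]
    constructor
    · rintro ⟨h1, h2⟩
      ext1 i
      split_ifs with hi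
      · rw [← h2]; congr 1; exact Fin.ext hi
      · have := (h1 i).not.2 (by omega)
        simpa using this
    · rintro rfl
      refine ⟨fun i => ?_, by simp⟩
      simp
  rw [this]
  simp [V]

def flip {n : ℕ} (X : Vec n) (p : Fin n) : Vec n := Function.update X p ((X p).map (· + 1))

lemma flip_flip {n : ℕ} (X : Vec n) (p : Fin n) : flip (flip X p) p = X := by
  ext1 i
  have h := congrFun (neg_neg X) i
  simp only [neg] at h
  by_cases hi : i = p
  · subst hi; simpa [flip] using h
  · simp [flip, hi]

lemma del_flip {n : ℕ} (X : Vec n) (p : Fin n) : del (flip X p) p = del X p := by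
  simp [del, flip]

lemma hem_succ {n d : ℕ} (hd : d + 1 < n) (t : Vec n → ZMod 2)
    (ht : ∀ X, (∃ a, X a ≠ none) → t (neg X) = t X + 1) :
    ∑ X ∈ Hem n (d + 1) hd 0, V t (d + 1) X =
      ∑ X ∈ Hem n d (by omega) 0, V t d X := by
  have hd' : d < n := by omega
  set g : Vec n → ZMod 2 := fun Y => t Y * V t d Y with hg
  have h1 : ∑ X ∈ Hem n (d + 1) hd 0, V t (d + 1) X =
      ∑ X ∈ Hem n (d + 1) hd 0, ∑ p ∈ univ.filter (fun i : Fin n => i.val < d + 1 + 1),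
        g (del X p) := by
    refine Finset.sum_congr rfl fun X hX => ?_
    have hX' := (Finset.mem_filter.1 hX).1
    rw [V_succ t d X (card_full hd hX'), supp_full hX']
  have h2 : ∑ X ∈ Hem n (d + 1) hd 0, V t (d + 1) X =
      ∑ X ∈ Hem n (d + 1) hd 0, g (del X ⟨d + 1, hd⟩) := by
    rw [h1, Finset.sum_comm]
    refine Finset.sum_eq_single_of_mem _ (by simp) ?_
    intro p hp hne
    refine Finset.sum_involution (fun X _ => flip X p) ?_ ?_ ?_ ?_
    · intro X _
      simp only [del_flip]; exact z2 _
    · intro X hX _ heq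
      have hX' := (Finset.mem_filter.1 hX).1
      have hp' : X p ≠ none := by
        rw [← mem_supp, supp_full hX']; exact hp
      have := congrFun heq p
      simp only [flip, Function.update_self] at this
      obtain ⟨e, he⟩ := Option.ne_none_iff_exists'.1 hp'
      rw [he] at this
      revert this; fin_cases e <;> simp
    · intro X hX
      simp only [Hem, Full, Finset.mem_filter, Finset.mem_univ, true_and] at hX ⊢
      refine ⟨fun i => ?_, ?_⟩
      · rw [← hX.1 i]
        by_cases hi : i = p
        · subst hi; simp [flip]
        · simp [flip, hi]
      · rw [← hX.2]
        simp [flip, Function.update_of_ne (Ne.symm hne)]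
    · intro X _
      exact flip_flip X p
  have h3 : ∑ X ∈ Hem n (d + 1) hd 0, g (del X ⟨d + 1, hd⟩) = ∑ Y ∈ Full n d, g Y := by
    refine Finset.sum_bij' (fun X _ => del X ⟨d + 1, hd⟩)
      (fun Y _ => Function.update Y ⟨d + 1, hd⟩ (some 0)) ?_ ?_ ?_ ?_ ?_
    · intro X hX
      simp only [Hem, Full, Finset.mem_filter, Finset.mem_univ, true_and] at hX ⊢
      intro i
      by_cases hi : i = ⟨d + 1, hd⟩
      · subst hi; simp [del]
      · have h := hX.1 i
        have : i.val ≠ d + 1 := fun h => hi (Fin.ext h)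
        simp only [del, Function.update_of_ne hi, h]
        omega
    · intro Y hY
      simp only [Hem, Full, Finset.mem_filter, Finset.mem_univ, true_and] at hY ⊢
      refine ⟨fun i => ?_, by simp⟩
      by_cases hi : i = ⟨d + 1, hd⟩
      · subst hi; simp
      · have h := hY i
        have : i.val ≠ d + 1 := fun h => hi (Fin.ext h)
        simp only [Function.update_of_ne hi, h]
        omega
    · intro X hX
      have := (Finset.mem_filter.1 hX).2
      simp [del, ← this]
    · intro Y hY
      simp only [Full, Finset.mem_filter, Finset.mem_univ, true_and] at hY
      have := (hY ⟨d + 1, hd⟩).not.2 (by simp)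
      simp only [ne_eq, not_not] at this
      simp [del, ← this]
    · intro X _; rfl
  have h4 : ∑ Y ∈ Full n d, g Y = ∑ Y ∈ Hem n d hd' 0, g Y + ∑ Y ∈ Hem n d hd' 1, g Y := by
    rw [← Finset.sum_filter_add_sum_filter_not (Full n d) (fun X => X ⟨d, hd'⟩ = some 0)]
    congr 1
    refine Finset.sum_congr ?_ fun _ _ => rfl
    ext X
    simp only [Hem, Finset.mem_filter, and_congr_right_iff]
    intro hX
    simp only [Full, Finset.mem_filter, Finset.mem_univ, true_and] at hX
    have := (hX ⟨d, hd'⟩).2 (by simp)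
    obtain ⟨e, he⟩ := Option.ne_none_iff_exists'.1 this
    rw [he]
    fin_cases e <;> simp
  have hn : ∀ (e : Fin 2) (X : Vec n), X ∈ Hem n d hd' e → neg X ∈ Hem n d hd' (e + 1) := by
    intro e X hX
    simp only [Hem, Full, Finset.mem_filter, Finset.mem_univ, true_and] at hX ⊢
    refine ⟨fun i => ?_, by simp [neg, hX.2]⟩
    rw [← hX.1 i]; simp [neg]
  have h5 : ∑ Y ∈ Hem n d hd' 1, g Y = ∑ Y ∈ Hem n d hd' 0, g (neg Y) := by
    refine Finset.sum_bij' (fun X _ => neg X) (fun X _ => neg X) (fun X hX => hn 1 X hX)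
      (fun X hX => hn 0 X hX) (fun X _ => neg_neg X) (fun X _ => neg_neg X) ?_
    intro X _
    rw [neg_neg]
  rw [h2, h3, h4, h5, ← Finset.sum_add_distrib]
  refine Finset.sum_congr rfl fun Y hY => ?_
  have hc := card_full hd' (Finset.mem_filter.1 hY).1
  simp only [hg]
  rw [V_neg t ht d Y hc, ht Y (ne_of_card hc)]
  linear_combination z2 (t Y * V t d Y)

lemma hem_one {n : ℕ} (t : Vec n → ZMod 2)
    (ht : ∀ X, (∃ a, X a ≠ none) → t (neg X) = t X + 1) (d : ℕ) (hd : d < n) :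
    ∑ X ∈ Hem n d hd 0, V t d X = 1 := by
  induction d with
  | zero => exact hem_zero hd t
  | succ d ih => rw [hem_succ hd t ht]; exact ih _

/-- Octahedral Tucker lemma, for labels with monotone absolute value. -/
theorem tucker {n : ℕ} (hn : 0 < n) (t : Vec n → ZMod 2) (m : Vec n → ℕ)
    (ht : ∀ X, (∃ a, X a ≠ none) → t (neg X) = t X + 1)
    (hm1 : ∀ X, (∃ a, X a ≠ none) → 1 ≤ m X)
    (hmono : ∀ X Y, (∃ a, X a ≠ none) → le X Y → m X ≤ m Y ∧ (m X = m Y → t X = t Y)) :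
    ∃ X, (∃ a, X a ≠ none) ∧ n ≤ m X := by
  have h := hem_one t ht (n - 1) (by omega)
  obtain ⟨X, hX, hne⟩ := Finset.exists_ne_zero_of_sum_ne_zero (h.symm ▸ one_ne_zero)
  have hc := card_full (by omega) (Finset.mem_filter.1 hX).1
  have := V_le t m hm1 hmono (n - 1) X hc hne
  exact ⟨X, ne_of_card hc, by omega⟩

/-- `e` is the sign of the first nonzero entry -/
def IsFS {n : ℕ} (σ : Equiv.Perm (Fin n)) (X : Vec n) (e : Fin 2) : Prop :=
  ∃ i, X (σ i) = some e ∧ ∀ j, X (σ j) ≠ none → i ≤ j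

lemma fs_exists {n : ℕ} (σ : Equiv.Perm (Fin n)) (X : Vec n) (h : ∃ a, X a ≠ none) :
    ∃ e, IsFS σ X e := by
  obtain ⟨a, ha⟩ := h
  have hne : (univ.filter fun i => X (σ i) ≠ none).Nonempty := ⟨σ.symm a, by simpa using ha⟩
  have hmem := Finset.min'_mem _ hne
  simp only [Finset.mem_filter, Finset.mem_univ, true_and] at hmem
  obtain ⟨e, he⟩ := Option.ne_none_iff_exists'.1 hmem
  exact ⟨e, _, he, fun j hj => Finset.min'_le _ _ (by simpa using hj)⟩

lemma fs_unique {n : ℕ} {σ : Equiv.Perm (Fin n)} {X : Vec n} {e e' : Fin 2}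
    (h : IsFS σ X e) (h' : IsFS σ X e') : e = e' := by
  obtain ⟨i, hi, hi2⟩ := h
  obtain ⟨j, hj, hj2⟩ := h'
  have : i = j := le_antisymm (hi2 j (by simp [hj])) (hj2 i (by simp [hi]))
  subst this
  rw [hi] at hj
  exact Option.some.inj hj

lemma fs_neg {n : ℕ} {σ : Equiv.Perm (Fin n)} {X : Vec n} {e : Fin 2}
    (h : IsFS σ X e) : IsFS σ (neg X) (e + 1) := by
  obtain ⟨i, hi, hi2⟩ := h
  exact ⟨i, by simp [neg, hi], fun j hj => hi2 j (by simpa [neg] using hj)⟩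

lemma altList_len {n : ℕ} {σ : Equiv.Perm (Fin n)} {X : Vec n} {l : List (Fin n)}
    (h : IsAltList n σ X l) : l.length ≤ n := by
  have h1 : l.Pairwise (· < ·) := List.isChain_iff_pairwise.1 h.1
  have h2 : l.Nodup := h1.imp (fun h => ne_of_lt h)
  simpa using h2.length_le_card

lemma alt_bdd {n : ℕ} (σ : Equiv.Perm (Fin n)) (X : Vec n) :
    BddAbove {k | ∃ l : List (Fin n), IsAltList n σ X l ∧ l.length = k} := by
  refine ⟨n, ?_⟩
  rintro k ⟨l, hl, rfl⟩
  exact altList_len hl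

lemma alt_max {n : ℕ} (σ : Equiv.Perm (Fin n)) (X : Vec n) :
    ∃ l : List (Fin n), IsAltList n σ X l ∧ l.length = altVec n σ X := by
  have := Nat.sSup_mem (s := {k | ∃ l : List (Fin n), IsAltList n σ X l ∧ l.length = k})
    ⟨0, [], ⟨List.isChain_nil, by simp, List.isChain_nil⟩, rfl⟩ (alt_bdd σ X)
  exact this

lemma le_alt {n : ℕ} {σ : Equiv.Perm (Fin n)} {X : Vec n} {l : List (Fin n)}
    (h : IsAltList n σ X l) : l.length ≤ altVec n σ X :=
  le_csSup (alt_bdd σ X) ⟨l, h, rfl⟩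

lemma alt_le_n {n : ℕ} (σ : Equiv.Perm (Fin n)) (X : Vec n) : altVec n σ X ≤ n := by
  obtain ⟨l, hl, h⟩ := alt_max σ X
  rw [← h]; exact altList_len hl

lemma one_le_alt {n : ℕ} (σ : Equiv.Perm (Fin n)) (X : Vec n) (h : ∃ a, X a ≠ none) :
    1 ≤ altVec n σ X := by
  obtain ⟨a, ha⟩ := h
  exact le_alt (l := [σ.symm a])
    ⟨List.isChain_singleton _, by simpa using ha, List.isChain_singleton _⟩

lemma le_eq {n : ℕ} {X Y : Vec n} (h : le X Y) {i : Fin n} (hi : X i ≠ none) : Y i = X i := by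
  obtain ⟨e, he⟩ := Option.ne_none_iff_exists'.1 hi
  rw [he]; exact h i e he

lemma altList_of {n : ℕ} {σ : Equiv.Perm (Fin n)} {X Y : Vec n}
    {l : List (Fin n)} (hl : IsAltList n σ X l)
    (h0 : ∀ i, X i ≠ none → Y i ≠ none)
    (h : ∀ i j, X i ≠ none → X j ≠ none → X i ≠ X j → Y i ≠ Y j) : IsAltList n σ Y l := by
  obtain ⟨h1, h2, h3⟩ := hl
  refine ⟨h1, fun i hi => h0 _ (h2 i hi), ?_⟩
  rw [List.Chain', List.isChain_iff_getElem] at h3 ⊢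
  intro i hi
  exact h _ _ (h2 _ (List.getElem_mem _)) (h2 _ (List.getElem_mem _)) (h3 i hi)

lemma altList_mono {n : ℕ} {σ : Equiv.Perm (Fin n)} {X Y : Vec n} (h : le X Y)
    {l : List (Fin n)} (hl : IsAltList n σ X l) : IsAltList n σ Y l :=
  altList_of hl (fun i hi => by rw [le_eq h hi]; exact hi)
    (fun i j hi hj hij => by rw [le_eq h hi, le_eq h hj]; exact hij)

lemma alt_mono {n : ℕ} {σ : Equiv.Perm (Fin n)} {X Y : Vec n} (h : le X Y) :
    altVec n σ X ≤ altVec n σ Y := by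
  obtain ⟨l, hl, h'⟩ := alt_max σ X
  rw [← h']; exact le_alt (altList_mono h hl)

lemma alt_neg_le {n : ℕ} (σ : Equiv.Perm (Fin n)) (X : Vec n) :
    altVec n σ X ≤ altVec n σ (neg X) := by
  obtain ⟨l, hl, h'⟩ := alt_max σ X
  rw [← h']
  refine le_alt (altList_of hl (fun i hi => by simpa [neg] using hi) ?_)
  intro i j _ _ hij heq
  apply hij
  rw [← neg_neg X]
  simp only [neg] at heq ⊢
  rw [heq]

lemma alt_neg {n : ℕ} (σ : Equiv.Perm (Fin n)) (X : Vec n) :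
    altVec n σ (neg X) = altVec n σ X := by
  refine le_antisymm ?_ (alt_neg_le σ X)
  have := alt_neg_le σ (neg X)
  rwa [neg_neg] at this

lemma alt_prepend {n : ℕ} {σ : Equiv.Perm (Fin n)} {X : Vec n} {e : Fin 2} (h : IsFS σ X e)
    {i : Fin n} {l : List (Fin n)} (hl : IsAltList n σ X (i :: l)) (hi : X (σ i) ≠ some e) :
    (i :: l).length + 1 ≤ altVec n σ X := by
  obtain ⟨j, hj, hj2⟩ := h
  obtain ⟨h1, h2, h3⟩ := hl
  have hji : j ≤ i := hj2 i (h2 i (by simp))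
  have hne : j ≠ i := by rintro rfl; exact hi hj
  refine le_alt (l := j :: i :: l) ⟨?_, ?_, ?_⟩
  · exact List.isChain_cons_cons.2 ⟨lt_of_le_of_ne hji hne, h1⟩
  · intro a ha
    rcases List.mem_cons.1 ha with rfl | ha
    · simp [hj]
    · exact h2 a ha
  · refine List.isChain_cons_cons.2 ⟨?_, h3⟩
    rw [hj]; exact hi.symm

lemma alt_fs {n : ℕ} {σ : Equiv.Perm (Fin n)} {X Y : Vec n} (h : le X Y)
    (hX : ∃ a, X a ≠ none) {e e' : Fin 2} (he : IsFS σ X e) (he' : IsFS σ Y e')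
    (heq : altVec n σ X = altVec n σ Y) : e = e' := by
  by_contra hne
  obtain ⟨l, hl, hlen⟩ := alt_max σ X
  have h1 := one_le_alt σ X hX
  rcases l with _ | ⟨i, l⟩
  · simp at hlen; omega
  by_cases hi : X (σ i) = some e
  · have := alt_prepend he' (altList_mono h hl) (by rw [h _ _ hi]; simpa using hne)
    omega
  · have := alt_prepend he hl hi
    omega

open Classical in
/-- sign of first nonzero entry in `ZMod 2` -/
noncomputable def sg {n : ℕ} (σ : Equiv.Perm (Fin n)) (X : Vec n) : ZMod 2 :=
  if IsFS σ X 0 then 0 else 1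

lemma sg_eq {n : ℕ} {σ : Equiv.Perm (Fin n)} {X : Vec n} {e : Fin 2} (h : IsFS σ X e) :
    sg σ X = if e = 0 then 0 else 1 := by
  by_cases he : e = 0
  · subst he; simp [sg, h]
  · have : ¬ IsFS σ X 0 := fun h0 => he (fs_unique h h0)
    simp [sg, this, he]

lemma sg_neg {n : ℕ} (σ : Equiv.Perm (Fin n)) (X : Vec n) (hX : ∃ a, X a ≠ none) :
    sg σ (neg X) = sg σ X + 1 := by
  obtain ⟨e, he⟩ := fs_exists σ X hX
  rw [sg_eq he, sg_eq (fs_neg he)]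
  fin_cases e <;> rfl

lemma le_nz {n : ℕ} {X Y : Vec n} (h : le X Y) (hX : ∃ a, X a ≠ none) : ∃ a, Y a ≠ none := by
  obtain ⟨a, ha⟩ := hX
  exact ⟨a, by rw [le_eq h ha]; exact ha⟩

lemma sg_mono {n : ℕ} {σ : Equiv.Perm (Fin n)} {X Y : Vec n} (h : le X Y)
    (hX : ∃ a, X a ≠ none) (heq : altVec n σ X = altVec n σ Y) : sg σ X = sg σ Y := by
  obtain ⟨e, he⟩ := fs_exists σ X hX
  obtain ⟨e', he'⟩ := fs_exists σ Y (le_nz h hX)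
  rw [sg_eq he, sg_eq he', alt_fs h hX he he' heq]

lemma f2 {e : Fin 2} (h : e ≠ 0) : e = 1 := by omega

section colors

variable {n : ℕ} (F : Finset (Finset (Fin n))) (k : ℕ) (c : Finset (Fin n) → ℕ)

/-- color `j` appears inside `X^e` -/
def Has (X : Vec n) (j : ℕ) (e : Fin 2) : Prop := ∃ A ∈ F, c A = j ∧ ∀ a ∈ A, X a = some e

open Classical in
noncomputable def Z (X : Vec n) : Vec (k + 1) := fun j =>
  if Has F c X j 0 then some 0 else if Has F c X j 1 then some 1 else none

variable {F k c}

lemma has_disj {X : Vec n} {A B : Finset (Fin n)} {e e' : Fin 2} (hne : e ≠ e')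
    (hA : ∀ a ∈ A, X a = some e) (hB : ∀ a ∈ B, X a = some e') : Disjoint A B := by
  rw [Finset.disjoint_left]
  intro a ha hb
  have := (hA a ha).symm.trans (hB a hb)
  exact hne (Option.some.inj this)

lemma has_unique (hF : ∀ A ∈ F, A.Nonempty)
    (hc2 : ∀ A ∈ F, ∀ B ∈ F, A ≠ B → Disjoint A B → c A ≠ c B)
    {X : Vec n} {j : ℕ} {e e' : Fin 2} (h : Has F c X j e) (h' : Has F c X j e') : e = e' := by
  by_contra hne
  obtain ⟨A, hA, hAc, hAX⟩ := h
  obtain ⟨B, hB, hBc, hBX⟩ := h'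
  have hd := has_disj hne hAX hBX
  refine hc2 A hA B hB ?_ hd (hAc.trans hBc.symm)
  rintro rfl
  have := hF A hA
  simp at hd
  simp [hd] at this

lemma Z_iff (hF : ∀ A ∈ F, A.Nonempty)
    (hc2 : ∀ A ∈ F, ∀ B ∈ F, A ≠ B → Disjoint A B → c A ≠ c B)
    (X : Vec n) (j : Fin (k + 1)) (e : Fin 2) : Z F k c X j = some e ↔ Has F c X j e := by
  have hu := @has_unique n F c hF hc2 X j 0 1
  rw [Z]
  by_cases h0 : Has F c X j 0 <;> by_cases h1 : Has F c X j 1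
  · exact absurd (hu h0 h1) (by decide)
  all_goals
    rcases eq_or_ne e 0 with rfl | he
    · simp [h0, h1]
    · obtain rfl := f2 he
      simp [h0, h1]

lemma Z_mono (hF : ∀ A ∈ F, A.Nonempty)
    (hc2 : ∀ A ∈ F, ∀ B ∈ F, A ≠ B → Disjoint A B → c A ≠ c B)
    {X Y : Vec n} (h : le X Y) : le (Z F k c X) (Z F k c Y) := by
  intro j e hj
  rw [Z_iff hF hc2] at hj ⊢
  obtain ⟨A, hA, hc, hX⟩ := hj
  exact ⟨A, hA, hc, fun a ha => h _ _ (hX a ha)⟩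

lemma has_neg {X : Vec n} {j : ℕ} {e : Fin 2} (h : Has F c X j e) :
    Has F c (neg X) j (e + 1) := by
  obtain ⟨A, hA, hc, hX⟩ := h
  exact ⟨A, hA, hc, fun a ha => by simp [neg, hX a ha]⟩

lemma add_one_one (e : Fin 2) : e + 1 + 1 = e := by fin_cases e <;> rfl

lemma Z_neg (hF : ∀ A ∈ F, A.Nonempty)
    (hc2 : ∀ A ∈ F, ∀ B ∈ F, A ≠ B → Disjoint A B → c A ≠ c B)
    (X : Vec n) : Z F k c (neg X) = neg (Z F k c X) := by
  ext1 j
  apply Option.ext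
  intro e
  rw [Z_iff hF hc2]
  simp only [neg, Option.map_eq_some_iff]
  constructor
  · intro h
    refine ⟨e + 1, ?_, add_one_one e⟩
    rw [Z_iff hF hc2]
    have := has_neg h
    rwa [neg_neg] at this
  · rintro ⟨e', h, rfl⟩
    rw [Z_iff hF hc2] at h
    exact has_neg h

end colors

lemma altHyp_lt {n : ℕ} {F : Finset (Finset (Fin n))} {σ : Equiv.Perm (Fin n)} {X : Vec n}
    (hX : ∃ a, X a ≠ none) (h : altHyp n 2 σ F < altVec n σ X) :
    ∃ j : Fin 2, ∃ A ∈ F, ∀ a ∈ A, X a = some j := by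
  by_contra hcon
  push Not at hcon
  refine absurd h (not_lt.2 ?_)
  refine le_csSup ⟨n, ?_⟩ ⟨X, hX, rfl, ?_⟩
  · rintro _ ⟨Y, _, rfl, _⟩
    exact alt_le_n σ Y
  · intro j A hA hall
    obtain ⟨a, ha, hne⟩ := hcon j A hA
    exact hne (hall a ha)

lemma alt_parity {N : ℕ} {σ : Equiv.Perm (Fin N)} {X : Vec N} {l : List (Fin N)}
    (h : IsAltList N σ X l) (hl : 0 < l.length) : ∃ e : Fin 2, ∀ i (hi : i < l.length),
      X (σ l[i]) = some (if Even i then e else e + 1) := by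
  obtain ⟨h1, h2, h3⟩ := h
  obtain ⟨e, he⟩ := Option.ne_none_iff_exists'.1 (h2 _ (List.getElem_mem hl))
  refine ⟨e, fun i => ?_⟩
  rw [List.Chain', List.isChain_iff_getElem] at h3
  induction i with
  | zero => intro hi; simp [he]
  | succ i ih =>
    intro hi
    have h4 := ih (by omega)
    have h5 := h3 i hi
    obtain ⟨e', he'⟩ := Option.ne_none_iff_exists'.1 (h2 _ (List.getElem_mem hi))
    rw [h4, he'] at h5
    rw [he']
    have h6 : (if Even i then e else e + 1) ≠ e' := fun h => h5 (congrArg some h)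
    congr 1
    by_cases hev : Even i
    · simp only [hev, if_true, Nat.even_add_one, not_true, if_false] at h6 ⊢
      omega
    · simp only [hev, if_false, Nat.even_add_one, not_false_eq_true, if_true] at h6 ⊢
      omega

end Kn

open Kn

/-- Any proper coloring `c` of the Kneser graph `KG^2(F)` with colors `{1,...,k}`
contains a completely multicolored complete bipartite graph
`K_{⌈r/2⌉, ⌊r/2⌋}` with `r = n - alt_2(F)`, whose `r` distinct colors alternate between
the two sides with respect to their natural order. This is witnessed by an enumeration
`f` of its vertices along strictly increasing colors (so all colors are distinct, i.e.
the subgraph is colorful), where the vertices at even positions form one side (of size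
`⌈r/2⌉`), those at odd positions the other side (of size `⌊r/2⌋`), and every vertex of
one side is disjoint from (adjacent to) every vertex of the other side. -/
theorem stmt18 (n : ℕ) (F : Finset (Finset (Fin n))) (hF : ∀ A ∈ F, A.Nonempty)
    (k : ℕ) (c : Finset (Fin n) → ℕ)
    (hc1 : ∀ A ∈ F, c A ∈ Finset.Icc 1 k)
    (hc2 : ∀ A ∈ F, ∀ B ∈ F, A ≠ B → Disjoint A B → c A ≠ c B) :
    ∃ f : Fin (n - altNum n 2 F) → Finset (Fin n),
      (∀ i, f i ∈ F) ∧ StrictMono (fun i => c (f i)) ∧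
        ∀ i j : Fin (n - altNum n 2 F), Even i.val → ¬ Even j.val → Disjoint (f i) (f j) := by
  obtain ⟨σ, hσ⟩ : ∃ σ : Equiv.Perm (Fin n), altHyp n 2 σ F = altNum n 2 F :=
    Nat.sInf_mem (s := {k | ∃ σ : Equiv.Perm (Fin n), altHyp n 2 σ F = k}) ⟨_, 1, rfl⟩
  generalize altNum n 2 F = a at hσ ⊢
  by_cases hna : n ≤ a
  · have : n - a = 0 := by omega
    rw [this]
    exact ⟨fun i => i.elim0, fun i => i.elim0, fun i => i.elim0, fun i => i.elim0⟩
  set ζ : Vec n → Vec (k + 1) := Z F k c with hζ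
  have hnz : ∀ X : Vec n, (∃ b, X b ≠ none) → ¬ altVec n σ X ≤ a → ∃ j, ζ X j ≠ none := by
    intro X hX ha
    obtain ⟨e, A, hA, hAX⟩ := altHyp_lt (F := F) hX (by rw [hσ]; omega)
    have hck := Finset.mem_Icc.1 (hc1 A hA)
    refine ⟨⟨c A, by omega⟩, ?_⟩
    have h := (Z_iff (k := k) hF hc2 X ⟨c A, by omega⟩ e).2 ⟨A, hA, rfl, hAX⟩
    rw [hζ, h]
    simp
  obtain ⟨X, hX, hXm⟩ := tucker (n := n) (by omega)
    (fun X => if altVec n σ X ≤ a then sg σ X else sg 1 (ζ X))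
    (fun X => if altVec n σ X ≤ a then altVec n σ X else a + altVec (k + 1) 1 (ζ X))
    (by
      intro X hX
      simp only [alt_neg]
      split_ifs with h
      · exact sg_neg σ X hX
      · rw [hζ, Z_neg hF hc2]
        exact sg_neg 1 _ (hnz X hX h))
    (by
      intro X hX
      split_ifs with h
      · exact one_le_alt σ X hX
      · have := one_le_alt 1 _ (hnz X hX h)
        omega)
    (by
      intro X Y hX hXY
      have h1 := alt_mono (σ := σ) hXY
      by_cases hY : altVec n σ Y ≤ a
      · have hX' : altVec n σ X ≤ a := by omega
        simp only [hY, hX', if_true]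
        exact ⟨h1, sg_mono hXY hX⟩
      · have hY1 := one_le_alt 1 _ (hnz Y (le_nz hXY hX) hY)
        by_cases hX' : altVec n σ X ≤ a
        · simp only [hY, hX', if_true, if_false]
          exact ⟨by omega, fun h => by omega⟩
        · simp only [hY, hX', if_false]
          have hZ : le (ζ X) (ζ Y) := Z_mono hF hc2 hXY
          exact ⟨by have := alt_mono (σ := 1) hZ; omega,
            fun h => sg_mono hZ (hnz X hX hX') (by omega)⟩)
  split_ifs at hXm with hXa
  · omega
  obtain ⟨l, hl, hlen⟩ := alt_max 1 (ζ X)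
  obtain ⟨e, he⟩ := alt_parity hl (by omega)
  have hlt : ∀ i : Fin (n - a), i.val < l.length := fun i => by omega
  have key : ∀ i : Fin (n - a), Has F c X (l[i.val]'(hlt i)).val
      (if Even i.val then e else e + 1) := by
    intro i
    have := he i.val (hlt i)
    rw [Equiv.Perm.one_apply] at this
    exact (Z_iff hF hc2 X _ _).1 this
  choose f hf hfc hfX using key
  refine ⟨f, hf, ?_, ?_⟩
  · intro i j hij
    simp only [hfc]
    have h1 : l.Pairwise (· < ·) := List.isChain_iff_pairwise.1 hl.1
    exact List.pairwise_iff_getElem.1 h1 _ _ (hlt i) (hlt j) hij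
  · intro i j hi hj
    have h1 := hfX i
    have h2 := hfX j
    simp only [hi, hj, if_true, if_false] at h1 h2
    refine has_disj ?_ h1 h2
    omega
end
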